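/- arXiv:1507.00559 — 7 statements merged into one kernel-verified Lean document; each statement's English description precedes it below -/
import Mathlib

section
/- For all n ≥ 10, the minimum number of blocks in a solution of the block-pass sliding game on the rectangular grid with 10 columns is opt^P_B(G_{n,10}) = 5 (which is strictly greater than γ_t(P_8) = 4). -/
/-- Squares, given as (row, column) pairs of integers. -/
abbrev Sq : Type := ℤ × ℤ

/-- `p` is a square of the grid `G_{n,m}` (rows `1..n`, columns `1..m`). -/
def inGrid (n m : ℕ) (p : Sq) : Prop :=
  1 ≤ p.1 ∧ p.1 ≤ (n : ℤ) ∧ 1 ≤ p.2 ∧ p.2 ≤ (m : ℤ)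

/-- The four axis directions. -/
def dirs4 : Set Sq := {(1, 0), (-1, 0), (0, 1), (0, -1)}

/-- A square is free if it is on the grid and carries no block. -/
def Free (n m : ℕ) (B : Finset Sq) (p : Sq) : Prop := inGrid n m p ∧ p ∉ B

/-- Sliding from `p` in direction `d` travels exactly `k` steps: all squares along the
way are free, and the next square is off the grid or holds a block. -/
def IsSlide (n m : ℕ) (B : Finset Sq) (p d : Sq) (k : ℕ) : Prop :=
  (∀ t : ℕ, t ≤ k → Free n m B (p + (t : ℤ) • d)) ∧
    ¬ Free n m B (p + ((k : ℤ) + 1) • d)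

/-- One move of the robot: slide from `p` in some axis direction, stopping at `q`. -/
def Move (n m : ℕ) (B : Finset Sq) (p q : Sq) : Prop :=
  ∃ d ∈ dirs4, ∃ k : ℕ, IsSlide n m B p d k ∧ q = p + (k : ℤ) • d

/-- The robot, starting on `p`, can stop on `q` after a finite sequence of moves. -/
def Reaches (n m : ℕ) (B : Finset Sq) : Sq → Sq → Prop :=
  Relation.ReflTransGen (Move n m B)

/-- The robot, starting on `p₀`, passes over the square `s`: during some move of a
finite sequence of moves it occupies or slides through `s`. -/
def Passes (n m : ℕ) (B : Finset Sq) (p₀ s : Sq) : Prop :=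
  ∃ p, Reaches n m B p₀ p ∧ ∃ d ∈ dirs4, ∃ k t : ℕ,
    IsSlide n m B p d k ∧ t ≤ k ∧ s = p + (t : ℤ) • d

/-- A legal block configuration: blocks are on grid squares, and not on `(1,1)`. -/
def BlocksOK (n m : ℕ) (B : Finset Sq) : Prop :=
  ((1 : ℤ), (1 : ℤ)) ∉ B ∧ ∀ p ∈ B, inGrid n m p

/-- `B` solves the block-pass game on `G_{n,m}`: starting from `(1,1)`, the robot can
pass over every square not in `B`. -/
def SolvesPass (n m : ℕ) (B : Finset Sq) : Prop :=
  BlocksOK n m B ∧ ∀ s : Sq, inGrid n m s → s ∉ B → Passes n m B (1, 1) s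

/-- `opt^P_B(G_{n,m})`: the minimum number of blocks solving the block-pass game. -/
noncomputable def optPB (n m : ℕ) : ℕ :=
  sInf {k | ∃ B : Finset Sq, SolvesPass n m B ∧ B.card = k}

/-- `D` is a total dominating set of the graph `G`: every vertex (including
those of `D`) has a neighbour in `D`. -/
def IsTotalDomSet {V : Type*} (G : SimpleGraph V) (D : Finset V) : Prop :=
  ∀ v : V, ∃ u ∈ D, G.Adj v u

/-- The total domination number `γ_t(G)`. -/
noncomputable def gammaT {V : Type*} (G : SimpleGraph V) : ℕ :=
  sInf {k | ∃ D : Finset V, IsTotalDomSet G D ∧ D.card = k}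

/-! ### General facts about moves -/

lemma reach_inv {n m : ℕ} {B : Finset Sq} {s : Sq} (I : Sq → Prop) (h0 : I s)
    (hs : ∀ p q, Move n m B p q → I p → I q) {p : Sq} (h : Reaches n m B s p) : I p := by
  induction h with
  | refl => exact h0
  | tail _ h2 ih => exact hs _ _ h2 ih

/-- Arithmetic description of a move. -/
lemma move_cases {n m : ℕ} {B : Finset Sq} {p q : Sq} (h : Move n m B p q) :
    inGrid n m p ∧ inGrid n m q ∧
    ((q.1 = p.1 ∧ p.2 ≤ q.2 ∧ (∀ b ∈ B, ¬ (b.1 = p.1 ∧ p.2 ≤ b.2 ∧ b.2 ≤ q.2)) ∧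
        (q.2 = m ∨ ∃ b ∈ B, b.1 = p.1 ∧ b.2 = q.2 + 1)) ∨
     (q.1 = p.1 ∧ q.2 ≤ p.2 ∧ (∀ b ∈ B, ¬ (b.1 = p.1 ∧ q.2 ≤ b.2 ∧ b.2 ≤ p.2)) ∧
        (q.2 = 1 ∨ ∃ b ∈ B, b.1 = p.1 ∧ b.2 = q.2 - 1)) ∨
     (q.2 = p.2 ∧ p.1 ≤ q.1 ∧ (∀ b ∈ B, ¬ (b.2 = p.2 ∧ p.1 ≤ b.1 ∧ b.1 ≤ q.1)) ∧
        (q.1 = n ∨ ∃ b ∈ B, b.2 = p.2 ∧ b.1 = q.1 + 1)) ∨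
     (q.2 = p.2 ∧ q.1 ≤ p.1 ∧ (∀ b ∈ B, ¬ (b.2 = p.2 ∧ q.1 ≤ b.1 ∧ b.1 ≤ p.1)) ∧
        (q.1 = 1 ∨ ∃ b ∈ B, b.2 = p.2 ∧ b.1 = q.1 - 1))) := by
  obtain ⟨d, hd, k, ⟨hf, hn⟩, rfl⟩ := h
  obtain ⟨x, y⟩ := p
  have hp := (hf 0 (Nat.zero_le _)).1
  have hq := (hf k le_rfl).1
  simp only [Nat.cast_zero, zero_smul, add_zero] at hp
  refine ⟨hp, hq, ?_⟩
  simp only [dirs4, Set.mem_insert_iff, Set.mem_singleton_iff] at hd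
  rcases hd with rfl | rfl | rfl | rfl
  · right; right; left
    simp only [inGrid, Prod.smul_mk, Prod.mk_add_mk, smul_eq_mul, mul_one, mul_zero,
      add_zero] at hp hq hf hn ⊢
    refine ⟨trivial, by omega, ?_, ?_⟩
    · rintro ⟨u, v⟩ hb ⟨h1, h2, h3⟩
      simp only at h1 h2 h3
      have := (hf (u - x).toNat (by omega)).2
      apply this
      convert hb using 2 <;> omega
    · by_contra hc
      push Not at hc
      apply hn
      refine ⟨by simp only [inGrid]; omega, fun hb => hc.2 _ hb rfl (by simp only; ring)⟩
  · right; right; right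
    simp only [inGrid, Prod.smul_mk, Prod.mk_add_mk, smul_eq_mul, mul_one, mul_zero, mul_neg,
      add_zero] at hp hq hf hn ⊢
    refine ⟨trivial, by omega, ?_, ?_⟩
    · rintro ⟨u, v⟩ hb ⟨h1, h2, h3⟩
      simp only at h1 h2 h3
      have := (hf (x - u).toNat (by omega)).2
      apply this
      convert hb using 2 <;> omega
    · by_contra hc
      push Not at hc
      apply hn
      refine ⟨by simp only [inGrid]; omega, fun hb => hc.2 _ hb rfl (by simp only; ring)⟩
  · left
    simp only [inGrid, Prod.smul_mk, Prod.mk_add_mk, smul_eq_mul, mul_one, mul_zero,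
      add_zero] at hp hq hf hn ⊢
    refine ⟨trivial, by omega, ?_, ?_⟩
    · rintro ⟨u, v⟩ hb ⟨h1, h2, h3⟩
      simp only at h1 h2 h3
      have := (hf (v - y).toNat (by omega)).2
      apply this
      convert hb using 2 <;> omega
    · by_contra hc
      push Not at hc
      apply hn
      refine ⟨by simp only [inGrid]; omega, fun hb => hc.2 _ hb rfl (by simp only; ring)⟩
  · right; left
    simp only [inGrid, Prod.smul_mk, Prod.mk_add_mk, smul_eq_mul, mul_one, mul_zero, mul_neg,
      add_zero] at hp hq hf hn ⊢
    refine ⟨trivial, by omega, ?_, ?_⟩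
    · rintro ⟨u, v⟩ hb ⟨h1, h2, h3⟩
      simp only at h1 h2 h3
      have := (hf (y - v).toNat (by omega)).2
      apply this
      convert hb using 2 <;> omega
    · by_contra hc
      push Not at hc
      apply hn
      refine ⟨by simp only [inGrid]; omega, fun hb => hc.2 _ hb rfl (by simp only; ring)⟩

/-- A passed square shares its row or column with a stopping square. -/
lemma passes_line {n m : ℕ} {B : Finset Sq} {s₀ s : Sq} (h : Passes n m B s₀ s) :
    ∃ p, Reaches n m B s₀ p ∧ (p.1 = s.1 ∨ p.2 = s.2) := by
  obtain ⟨p, hp, d, hd, k, t, -, -, rfl⟩ := h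
  refine ⟨p, hp, ?_⟩
  simp only [dirs4, Set.mem_insert_iff, Set.mem_singleton_iff] at hd
  rcases hd with rfl | rfl | rfl | rfl <;> simp

lemma row_dom {n m : ℕ} {B : Finset Sq} {p : Sq} (h : Reaches n m B (1, 1) p) :
    p.1 = 1 ∨ p.1 = n ∨ ∃ b ∈ B, b.1 = p.1 + 1 ∨ b.1 = p.1 - 1 := by
  refine reach_inv (fun p => p.1 = 1 ∨ p.1 = n ∨ ∃ b ∈ B, b.1 = p.1 + 1 ∨ b.1 = p.1 - 1)
    (Or.inl rfl) ?_ h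
  intro p q hm hI
  obtain ⟨-, -, h | h | h | h⟩ := move_cases hm
  · simpa only [h.1] using hI
  · simpa only [h.1] using hI
  · rcases h.2.2.2 with h | ⟨b, hb, h⟩
    · exact Or.inr (Or.inl h)
    · exact Or.inr (Or.inr ⟨b, hb, Or.inl h.2⟩)
  · rcases h.2.2.2 with h | ⟨b, hb, h⟩
    · exact Or.inl h
    · exact Or.inr (Or.inr ⟨b, hb, Or.inr h.2⟩)

lemma col_dom {n m : ℕ} {B : Finset Sq} {p : Sq} (h : Reaches n m B (1, 1) p) :
    p.2 = 1 ∨ p.2 = m ∨ ∃ b ∈ B, b.2 = p.2 + 1 ∨ b.2 = p.2 - 1 := by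
  refine reach_inv (fun p => p.2 = 1 ∨ p.2 = m ∨ ∃ b ∈ B, b.2 = p.2 + 1 ∨ b.2 = p.2 - 1)
    (Or.inl rfl) ?_ h
  intro p q hm hI
  obtain ⟨-, -, h | h | h | h⟩ := move_cases hm
  · rcases h.2.2.2 with h | ⟨b, hb, h⟩
    · exact Or.inr (Or.inl h)
    · exact Or.inr (Or.inr ⟨b, hb, Or.inl h.2⟩)
  · rcases h.2.2.2 with h | ⟨b, hb, h⟩
    · exact Or.inl h
    · exact Or.inr (Or.inr ⟨b, hb, Or.inr h.2⟩)
  · simpa only [h.1] using hI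
  · simpa only [h.1] using hI

/-- Row `i` is interior and no block lies in a neighbouring row. -/
def URow (n : ℕ) (B : Finset Sq) (i : ℤ) : Prop :=
  2 ≤ i ∧ i + 1 ≤ n ∧ ∀ b ∈ B, b.1 ≠ i + 1 ∧ b.1 ≠ i - 1

/-- Column `j` is interior and no block lies in a neighbouring column. -/
def UCol (m : ℕ) (B : Finset Sq) (j : ℤ) : Prop :=
  2 ≤ j ∧ j + 1 ≤ m ∧ ∀ b ∈ B, b.2 ≠ j + 1 ∧ b.2 ≠ j - 1

lemma enter_col {n m : ℕ} {B : Finset Sq} (hB : SolvesPass n m B) {i j : ℤ}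
    (hi : URow n B i) (hj1 : 1 ≤ j) (hj2 : j ≤ m) (hf : (i, j) ∉ B) :
    ∃ p, Reaches n m B (1, 1) p ∧ p.2 = j := by
  obtain ⟨h1, h2, h3⟩ := hi
  obtain ⟨p, hp, h | h⟩ := passes_line (hB.2 (i, j) ⟨by simp only; omega, by simp only; omega, hj1, hj2⟩ hf)
  · exfalso
    simp only at h
    rcases row_dom hp with h' | h' | ⟨b, hb, h'⟩
    · omega
    · omega
    · have := h3 b hb
      omega
  · exact ⟨p, hp, h⟩

lemma undom_mem {n m : ℕ} {B : Finset Sq} (hB : SolvesPass n m B) {i j : ℤ}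
    (hi : URow n B i) (hj : UCol m B j) : (i, j) ∈ B := by
  by_contra hf
  obtain ⟨h1, h2, h3⟩ := hj
  obtain ⟨p, hp, h⟩ := enter_col hB hi (by omega) (by omega) hf
  rcases col_dom hp with h' | h' | ⟨b, hb, h'⟩
  · omega
  · omega
  · have := h3 b hb
    omega

/-- Some block lies on the boundary. -/
lemma exists_boundary {n : ℕ} (hn : 10 ≤ n) {B : Finset Sq} (hB : SolvesPass n 10 B)
    (hc : B.card ≤ 4) : ∃ b ∈ B, b.1 = 1 ∨ b.1 = n ∨ b.2 = 1 ∨ b.2 = 10 := by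
  by_contra hno
  push Not at hno
  have hcor : ∀ p, Reaches n 10 B (1, 1) p → (p.1 = 1 ∨ p.1 = n) ∧ (p.2 = 1 ∨ p.2 = 10) := by
    intro p hp
    refine reach_inv (fun p => (p.1 = 1 ∨ p.1 = n) ∧ (p.2 = 1 ∨ p.2 = 10))
      ⟨Or.inl rfl, Or.inl rfl⟩ ?_ hp
    intro p q hm hI
    obtain ⟨-, -, h | h | h | h⟩ := move_cases hm <;>
    · obtain ⟨h1, h2, h3, h4 | ⟨b, hb, h4⟩⟩ := h
      · push_cast at h4; omega
      · have := hno b hb; omega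
  have hin : ∀ j : ℤ, 2 ≤ j → j ≤ 9 → ((2 : ℤ), j) ∈ B := by
    intro j h1 h2
    by_contra hf
    obtain ⟨p, hp, h⟩ := passes_line (hB.2 (2, j)
      ⟨by simp, by simp only; omega, by simp only; omega, by push_cast; omega⟩ hf)
    have := hcor p hp
    simp only at h
    omega
  have hsub : ({(2, 2), (2, 3), (2, 4), (2, 5), (2, 6)} : Finset Sq) ⊆ B := by
    intro x hx
    simp only [Finset.mem_insert, Finset.mem_singleton] at hx
    rcases hx with rfl | rfl | rfl | rfl | rfl <;> exact hin _ (by norm_num) (by norm_num)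
  have := Finset.card_le_card hsub
  have h5 : ({(2, 2), (2, 3), (2, 4), (2, 5), (2, 6)} : Finset Sq).card = 5 := by decide
  omega

lemma pig (l : List ℤ) (h : ∀ i : ℤ, 2 ≤ i → i ≤ 9 → i ∈ l) : 8 ≤ l.length := by
  have h1 : Finset.Icc (2 : ℤ) 9 ⊆ l.toFinset := by
    intro i hi
    rw [Finset.mem_Icc] at hi
    exact List.mem_toFinset.2 (h i hi.1 hi.2)
  have h2 := Finset.card_le_card h1
  have h3 := l.toFinset_card_le
  have h4 : (Finset.Icc (2 : ℤ) 9).card = 8 := by decide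
  omega

/-- The configuration with columns `3,4,7,8` fails. -/
lemma cols3478 {n : ℕ} (hn : 10 ≤ n) (a b c d : ℤ)
    (hB : SolvesPass n 10 {(a, 3), (b, 4), (c, 7), (d, 8)}) : False := by
  have hgrid := hB.1
  obtain ⟨h11, hg⟩ := hgrid
  have hcard : ({(a, 3), (b, 4), (c, 7), (d, 8)} : Finset Sq).card ≤ 4 := Finset.card_le_four
  have hbd := exists_boundary hn hB hcard
  simp only [Finset.forall_mem_insert, Finset.mem_singleton, forall_eq, inGrid] at hg
  simp only [Finset.mem_insert, Finset.mem_singleton, exists_eq_or_imp, exists_eq_left] at hbd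
  have hU : ∃ i, URow n {(a, 3), (b, 4), (c, 7), (d, 8)} i := by
    by_contra hno
    push Not at hno
    simp only [URow, Finset.forall_mem_insert, Finset.mem_singleton, forall_eq] at hno
    have key : ∀ i : ℤ, 2 ≤ i → i ≤ 9 → a = i + 1 ∨ a = i - 1 ∨ b = i + 1 ∨ b = i - 1 ∨
        c = i + 1 ∨ c = i - 1 ∨ d = i + 1 ∨ d = i - 1 := by
      intro i h1 h2
      have := hno i
      omega
    have h7 : ∀ e, (∀ i : ℤ, 2 ≤ i → i ≤ 9 → e = i + 1 ∨ e = i - 1 →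
        i = (if e = 1 then 2 else e - 1)) → (e = a ∨ e = b ∨ e = c ∨ e = d) → False := by
      intro e he hh
      rcases hh with rfl | rfl | rfl | rfl
      · have := pig [(if e = 1 then 2 else e - 1), b - 1, b + 1, c - 1, c + 1, d - 1, d + 1] (by
          intro i h1 h2
          have := he i h1 h2
          have := key i h1 h2
          simp only [List.mem_cons, List.not_mem_nil, or_false]
          omega)
        simp at this
      · have := pig [(if e = 1 then 2 else e - 1), a - 1, a + 1, c - 1, c + 1, d - 1, d + 1] (by
          intro i h1 h2
          have := he i h1 h2
          have := key i h1 h2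
          simp only [List.mem_cons, List.not_mem_nil, or_false]
          omega)
        simp at this
      · have := pig [(if e = 1 then 2 else e - 1), b - 1, b + 1, a - 1, a + 1, d - 1, d + 1] (by
          intro i h1 h2
          have := he i h1 h2
          have := key i h1 h2
          simp only [List.mem_cons, List.not_mem_nil, or_false]
          omega)
        simp at this
      · have := pig [(if e = 1 then 2 else e - 1), b - 1, b + 1, c - 1, c + 1, a - 1, a + 1] (by
          intro i h1 h2
          have := he i h1 h2
          have := key i h1 h2
          simp only [List.mem_cons, List.not_mem_nil, or_false]
          omega)
        simp at this
    have h8 : ∀ e : ℤ, (e = 1 ∨ e = n) → ∀ i : ℤ, 2 ≤ i → i ≤ 9 → e = i + 1 ∨ e = i - 1 →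
        i = (if e = 1 then 2 else e - 1) := by
      intro e he i h1 h2 h3
      split_ifs <;> omega
    have : (a = 1 ∨ a = n) ∨ (b = 1 ∨ b = n) ∨ (c = 1 ∨ c = n) ∨ (d = 1 ∨ d = n) := by omega
    rcases this with h | h | h | h
    · exact h7 a (h8 a h) (by simp)
    · exact h7 b (h8 b h) (by simp)
    · exact h7 c (h8 c h) (by simp)
    · exact h7 d (h8 d h) (by simp)
  obtain ⟨i, hi⟩ := hU
  have hi' := hi
  simp only [URow, Finset.forall_mem_insert, Finset.mem_singleton, forall_eq] at hi'
  have enter : ∀ j : ℤ, 1 ≤ j → j ≤ 10 → (j = 3 → i ≠ a) → (j = 4 → i ≠ b) → (j = 7 → i ≠ c) →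
      (j = 8 → i ≠ d) → ∃ p, Reaches n 10 {(a, 3), (b, 4), (c, 7), (d, 8)} (1, 1) p ∧ p.2 = j := by
    intro j h1 h2 h3 h4 h5 h6
    refine enter_col hB hi h1 (by exact_mod_cast h2) ?_
    simp only [Finset.mem_insert, Finset.mem_singleton, Prod.mk.injEq]
    omega
  have mc : ∀ p q, Move n 10 {(a, 3), (b, 4), (c, 7), (d, 8)} p q → _ := fun p q h => move_cases h
  simp only [forall_eq_or_imp, Finset.mem_singleton, forall_eq, Finset.mem_insert,
    exists_eq_or_imp, exists_eq_left, inGrid, Nat.cast_ofNat] at mc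
  have ha : a = 1 ∨ a = n := by
    by_contra hne
    obtain ⟨p, hp, h⟩ := enter 2 (by norm_num) (by norm_num) (by omega) (by omega) (by omega) (by omega)
    have := reach_inv (fun p => p.2 ≠ 2 ∧ (p.2 = 1 → p.1 ≠ a)) (by simp only; omega)
      (by intro p q hm hI; have := mc p q hm; omega) hp
    exact this.1 h
  have hd : d = 1 ∨ d = n := by
    by_contra hne
    obtain ⟨p, hp, h⟩ := enter 9 (by norm_num) (by norm_num) (by omega) (by omega) (by omega) (by omega)
    have := reach_inv (fun p => p.2 ≠ 9 ∧ (p.2 = 10 → p.1 ≠ d)) (by simp only; omega)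
      (by intro p q hm hI; have := mc p q hm; omega) hp
    exact this.1 h
  have hb : (b = 1 ∨ b = n) ∧ a ≠ b := by
    by_contra hne
    obtain ⟨p, hp, h⟩ := enter 3 (by norm_num) (by norm_num) (by omega) (by omega) (by omega) (by omega)
    by_cases hab : a = b
    · have := reach_inv (fun p => p.2 ≠ 3) (by simp only; omega)
        (by intro p q hm hI; have := mc p q hm; omega) hp
      exact this h
    · have := reach_inv (fun p => p.2 ≠ 3 ∧ (p.2 ≤ 2 → p.1 ≠ b)) (by simp only; omega)
        (by intro p q hm hI; have := mc p q hm; omega) hp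
      exact this.1 h
  have hc : (c = 1 ∨ c = n) ∧ c ≠ d := by
    by_contra hne
    obtain ⟨p, hp, h⟩ := enter 8 (by norm_num) (by norm_num) (by omega) (by omega) (by omega) (by omega)
    by_cases hab : c = d
    · have := reach_inv (fun p => p.2 ≠ 8) (by simp only; omega)
        (by intro p q hm hI; have := mc p q hm; omega) hp
      exact this h
    · have := reach_inv (fun p => p.2 ≠ 8 ∧ (9 ≤ p.2 → p.1 ≠ c)) (by simp only; omega)
        (by intro p q hm hI; have := mc p q hm; omega) hp
      exact this.1 h
  obtain ⟨p, hp, h⟩ := enter 5 (by norm_num) (by norm_num) (by omega) (by omega) (by omega) (by omega)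
  have := reach_inv (fun p => p.2 ≠ 5 ∧ p.2 ≠ 6 ∧ p.2 ≠ 7 ∧ p.2 ≠ 4) (by simp only; omega)
    (by intro p q hm hI; have := mc p q hm; omega) hp
  exact this.1 h

/-! ### Transposition -/

lemma mem_swap_image {B : Finset Sq} {p : Sq} : p.swap ∈ B.image Prod.swap ↔ p ∈ B := by
  constructor
  · intro h
    obtain ⟨q, hq, h⟩ := Finset.mem_image.1 h
    rwa [← Prod.swap_injective h]
  · exact fun h => Finset.mem_image_of_mem _ h

lemma free_swap {n m : ℕ} {B : Finset Sq} {p : Sq} :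
    Free m n (B.image Prod.swap) p.swap ↔ Free n m B p := by
  unfold Free
  rw [mem_swap_image]
  simp only [inGrid, Prod.fst_swap, Prod.snd_swap]
  tauto

lemma swap_smul_add (p d : Sq) (t : ℤ) : (p + t • d).swap = p.swap + t • d.swap := rfl

lemma dirs4_swap {d : Sq} (h : d ∈ dirs4) : d.swap ∈ dirs4 := by
  simp only [dirs4, Set.mem_insert_iff, Set.mem_singleton_iff] at h ⊢
  rcases h with rfl | rfl | rfl | rfl <;> simp

lemma slide_swap {n m : ℕ} {B : Finset Sq} {p d : Sq} {k : ℕ} (h : IsSlide n m B p d k) :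
    IsSlide m n (B.image Prod.swap) p.swap d.swap k := by
  refine ⟨fun t ht => ?_, fun hf => h.2 ?_⟩
  · rw [← swap_smul_add]; exact free_swap.2 (h.1 t ht)
  · rw [← swap_smul_add] at hf; exact free_swap.1 hf

lemma reaches_swap {n m : ℕ} {B : Finset Sq} {p q : Sq} (h : Reaches n m B p q) :
    Reaches m n (B.image Prod.swap) p.swap q.swap := by
  refine Relation.ReflTransGen.lift Prod.swap ?_ _ _ h
  rintro a b ⟨d, hd, k, hs, rfl⟩
  exact ⟨d.swap, dirs4_swap hd, k, slide_swap hs, rfl⟩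

lemma solves_swap {n m : ℕ} {B : Finset Sq} (h : SolvesPass n m B) :
    SolvesPass m n (B.image Prod.swap) := by
  refine ⟨⟨fun h1 => h.1.1 (mem_swap_image.1 h1), ?_⟩, ?_⟩
  · intro p hp
    obtain ⟨q, hq, rfl⟩ := Finset.mem_image.1 hp
    have := h.1.2 q hq
    simp only [inGrid, Prod.fst_swap, Prod.snd_swap] at this ⊢
    tauto
  · intro s hs hsB
    obtain ⟨p, hp, d, hd, k, t, h1, h2, h3⟩ := h.2 s.swap
      (by simp only [inGrid, Prod.fst_swap, Prod.snd_swap] at hs ⊢; tauto)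
      (fun hh => hsB (by rw [← mem_swap_image, Prod.swap_swap] at hh; exact hh))
    refine ⟨p.swap, reaches_swap hp, d.swap, dirs4_swap hd, k, t, slide_swap h1, h2, ?_⟩
    rw [← swap_smul_add, ← h3, Prod.swap_swap]

/-! ### Counting undominated rows and columns -/

lemma prod_bound (B : Finset Sq) (hc : B.card ≤ 4) (U V : Finset ℤ)
    (hUV : ∀ i ∈ U, ∀ j ∈ V, (i, j) ∈ B)
    (hR : 8 ≤ U.card + 2 * (B.image Prod.fst).card)
    (hC : 8 ≤ V.card + 2 * (B.image Prod.snd).card) (hV : V.Nonempty) : U.card ≤ 1 := by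
  by_contra hU
  obtain ⟨i, hi, i', hi', hne⟩ := Finset.one_lt_card.1 (not_le.1 hU)
  obtain ⟨j, hj⟩ := hV
  have h1 : B.image Prod.snd ⊆ (B.erase (i', j)).image Prod.snd := by
    intro y hy
    obtain ⟨q, hq, rfl⟩ := Finset.mem_image.1 hy
    by_cases h : q = (i', j)
    · subst h
      exact Finset.mem_image.2 ⟨(i, j), Finset.mem_erase.2 ⟨by simp [hne], hUV i hi j hj⟩, rfl⟩
    · exact Finset.mem_image.2 ⟨q, Finset.mem_erase.2 ⟨h, hq⟩, rfl⟩
  have h2 := Finset.card_le_card h1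
  have h3 : ((B.erase (i', j)).image Prod.snd).card ≤ (B.erase (i', j)).card :=
    Finset.card_image_le
  rw [Finset.card_erase_of_mem (hUV i' hi' j hj)] at h3
  have hV2 : 2 ≤ V.card := by omega
  have hsub : U ×ˢ V ⊆ B := by
    rintro ⟨x, y⟩ hxy
    rw [Finset.mem_product] at hxy
    exact hUV x hxy.1 y hxy.2
  have h4 := Finset.card_le_card hsub
  rw [Finset.card_product] at h4
  have hU2 : U.card = 2 := by nlinarith
  have hBe : U ×ˢ V = B := Finset.eq_of_subset_of_card_le hsub (by
    rw [Finset.card_product]; nlinarith)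
  have h5 : B.image Prod.fst ⊆ U := by
    intro x hx
    obtain ⟨q, hq, rfl⟩ := Finset.mem_image.1 hx
    rw [← hBe, Finset.mem_product] at hq
    exact hq.1
  have h6 := Finset.card_le_card h5
  omega

/-- Undominated interior coordinates. -/
noncomputable def undom (n : ℕ) (R : Finset ℤ) : Finset ℤ :=
  (Finset.Icc 2 ((n : ℤ) - 1)).filter fun i => i + 1 ∉ R ∧ i - 1 ∉ R

lemma undom_card (n : ℕ) (R : Finset ℤ) : n ≤ (undom n R).card + 2 * R.card + 2 := by
  have h1 : Finset.Icc 2 ((n : ℤ) - 1) ⊆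
      undom n R ∪ (R.image (fun x => x - 1) ∪ R.image (fun x => x + 1)) := by
    intro i hi
    by_cases h : i + 1 ∈ R
    · refine Finset.mem_union_right _ (Finset.mem_union_left _ (Finset.mem_image.2 ⟨_, h, by ring⟩))
    by_cases h' : i - 1 ∈ R
    · refine Finset.mem_union_right _ (Finset.mem_union_right _ (Finset.mem_image.2 ⟨_, h', by ring⟩))
    exact Finset.mem_union_left _ (Finset.mem_filter.2 ⟨hi, h, h'⟩)
  have h2 := Finset.card_le_card h1
  have h3 := Finset.card_union_le (undom n R) (R.image (fun x => x - 1) ∪ R.image (fun x => x + 1))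
  have h4 := Finset.card_union_le (R.image (fun x => x - 1)) (R.image (fun x => x + 1))
  have h5 : (R.image (fun x => x - 1)).card ≤ R.card := Finset.card_image_le
  have h6 : (R.image (fun x => x + 1)).card ≤ R.card := Finset.card_image_le
  rw [Int.card_Icc] at h2
  omega

lemma undom_row {n : ℕ} {B : Finset Sq} {i : ℤ} (h : i ∈ undom n (B.image Prod.fst)) :
    URow n B i := by
  obtain ⟨h1, h2, h3⟩ := Finset.mem_filter.1 h
  rw [Finset.mem_Icc] at h1
  refine ⟨h1.1, by omega, fun b hb => ⟨fun e => h2 ?_, fun e => h3 ?_⟩⟩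
  · exact e ▸ Finset.mem_image_of_mem _ hb
  · exact e ▸ Finset.mem_image_of_mem _ hb

lemma undom_col {n : ℕ} {B : Finset Sq} {i : ℤ} (h : i ∈ undom n (B.image Prod.snd)) :
    UCol n B i := by
  obtain ⟨h1, h2, h3⟩ := Finset.mem_filter.1 h
  rw [Finset.mem_Icc] at h1
  refine ⟨h1.1, by omega, fun b hb => ⟨fun e => h2 ?_, fun e => h3 ?_⟩⟩
  · exact e ▸ Finset.mem_image_of_mem _ hb
  · exact e ▸ Finset.mem_image_of_mem _ hb

/-- List a small nonempty set with repetitions, sorted by column. -/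
lemma exists_sorted (k : ℕ) : ∀ B : Finset Sq, B.Nonempty → B.card ≤ k + 1 →
    ∃ l : List Sq, l.length = k + 1 ∧ l.Pairwise (fun p q => p.2 ≤ q.2) ∧ l.toFinset = B := by
  induction k with
  | zero =>
    intro B hB hc
    obtain ⟨b, hb⟩ := hB
    refine ⟨[b], rfl, List.pairwise_singleton _ _, ?_⟩
    rw [Finset.card_le_one.1 hc |> fun h => (Finset.eq_singleton_iff_unique_mem.2
      ⟨hb, fun x hx => h x hx b hb⟩ : B = {b})]
    simp
  | succ k ih =>
    intro B hB hc
    obtain ⟨b, hb, hmin⟩ := Finset.exists_min_image B Prod.snd hB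
    by_cases he : (B.erase b).Nonempty
    · obtain ⟨l, h1, h2, h3⟩ := ih (B.erase b) he (by
        rw [Finset.card_erase_of_mem hb]; omega)
      refine ⟨b :: l, by simp [h1], List.pairwise_cons.2 ⟨fun q hq => hmin q ?_, h2⟩, ?_⟩
      · exact Finset.mem_of_mem_erase (h3 ▸ List.mem_toFinset.2 hq)
      · rw [List.toFinset_cons, h3, Finset.insert_erase hb]
    · rw [Finset.not_nonempty_iff_eq_empty] at he
      have hBb : B = {b} := by
        rw [← Finset.insert_erase hb, he]; rfl
      refine ⟨List.replicate (k + 2) b, by simp, ?_, ?_⟩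
      · rw [List.pairwise_replicate]; right; exact le_rfl
      · rw [hBb, List.toFinset_replicate_of_ne_zero (by omega)]

/-! ### The total domination number of the path -/

lemma gamma_path : gammaT (SimpleGraph.pathGraph 8) = 4 := by
  have h1 : IsTotalDomSet (SimpleGraph.pathGraph 8) ({1, 2, 5, 6} : Finset (Fin 8)) := by
    unfold IsTotalDomSet
    simp only [SimpleGraph.pathGraph_adj]
    decide
  have h2 : ∀ D : Finset (Fin 8), IsTotalDomSet (SimpleGraph.pathGraph 8) D → 4 ≤ D.card := by
    unfold IsTotalDomSet
    simp only [SimpleGraph.pathGraph_adj]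
    decide +kernel
  apply le_antisymm
  · exact Nat.sInf_le ⟨_, h1, by decide⟩
  · refine le_csInf ⟨_, _, h1, rfl⟩ ?_
    rintro k ⟨D, hD, rfl⟩
    exact h2 D hD

/-! ### The solution with five blocks -/

lemma five_solves {n : ℕ} (hn : 10 ≤ n) :
    SolvesPass n 10 {(2, 2), ((n : ℤ), 3), (1, 6), ((n : ℤ), 7), (1, 10)} := by
  set B : Finset Sq := {(2, 2), ((n : ℤ), 3), (1, 6), ((n : ℤ), 7), (1, 10)} with hBdef
  have fr : ∀ x y : ℤ, Free n 10 B (x, y) ↔ (1 ≤ x ∧ x ≤ n ∧ 1 ≤ y ∧ y ≤ 10) ∧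
      ¬ (x = 2 ∧ y = 2) ∧ ¬ (x = n ∧ y = 3) ∧ ¬ (x = 1 ∧ y = 6) ∧ ¬ (x = n ∧ y = 7) ∧
      ¬ (x = 1 ∧ y = 10) := by
    intro x y
    simp only [Free, inGrid, hBdef, Finset.mem_insert, Finset.mem_singleton, Prod.mk.injEq,
      Nat.cast_ofNat, not_or]
  -- slides in the four directions, described by their end points
  have sR : ∀ x y y' : ℤ, y ≤ y' → (∀ t, y ≤ t → t ≤ y' → Free n 10 B (x, t)) →
      ¬ Free n 10 B (x, y' + 1) → IsSlide n 10 B (x, y) (0, 1) (y' - y).toNat := by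
    intro x y y' h h1 h2
    refine ⟨fun t ht => ?_, ?_⟩
    · convert h1 (y + t) (by omega) (by omega) using 1; simp
    · convert h2 using 2; simp; omega
  have sL : ∀ x y y' : ℤ, y' ≤ y → (∀ t, y' ≤ t → t ≤ y → Free n 10 B (x, t)) →
      ¬ Free n 10 B (x, y' - 1) → IsSlide n 10 B (x, y) (0, -1) (y - y').toNat := by
    intro x y y' h h1 h2
    refine ⟨fun t ht => ?_, ?_⟩
    · convert h1 (y - t) (by omega) (by omega) using 1; simp; ring
    · convert h2 using 2; simp; omega
  have sD : ∀ y x x' : ℤ, x ≤ x' → (∀ t, x ≤ t → t ≤ x' → Free n 10 B (t, y)) →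
      ¬ Free n 10 B (x' + 1, y) → IsSlide n 10 B (x, y) (1, 0) (x' - x).toNat := by
    intro x y y' h h1 h2
    refine ⟨fun t ht => ?_, ?_⟩
    · convert h1 (y + t) (by omega) (by omega) using 1; simp
    · convert h2 using 2; simp; omega
  have sU : ∀ y x x' : ℤ, x' ≤ x → (∀ t, x' ≤ t → t ≤ x → Free n 10 B (t, y)) →
      ¬ Free n 10 B (x' - 1, y) → IsSlide n 10 B (x, y) (-1, 0) (x - x').toNat := by
    intro x y y' h h1 h2
    refine ⟨fun t ht => ?_, ?_⟩
    · convert h1 (y - t) (by omega) (by omega) using 1; simp; ring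
    · convert h2 using 2; simp; omega
  simp only [fr] at sR sL sD sU
  have mR : ∀ x y y' : ℤ, Reaches n 10 B (1, 1) (x, y) →
      IsSlide n 10 B (x, y) (0, 1) (y' - y).toNat → y ≤ y' → Reaches n 10 B (1, 1) (x, y') := by
    intro x y y' h1 h2 h3
    exact h1.tail ⟨_, by simp [dirs4], _, h2, by simp [h3]⟩
  have mL : ∀ x y y' : ℤ, Reaches n 10 B (1, 1) (x, y) →
      IsSlide n 10 B (x, y) (0, -1) (y - y').toNat → y' ≤ y → Reaches n 10 B (1, 1) (x, y') := by
    intro x y y' h1 h2 h3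
    exact h1.tail ⟨_, by simp [dirs4], _, h2, by simp [h3]⟩
  have mD : ∀ y x x' : ℤ, Reaches n 10 B (1, 1) (x, y) →
      IsSlide n 10 B (x, y) (1, 0) (x' - x).toNat → x ≤ x' → Reaches n 10 B (1, 1) (x', y) := by
    intro x y y' h1 h2 h3
    exact h1.tail ⟨_, by simp [dirs4], _, h2, by simp [h3]⟩
  have mU : ∀ y x x' : ℤ, Reaches n 10 B (1, 1) (x, y) →
      IsSlide n 10 B (x, y) (-1, 0) (x - x').toNat → x' ≤ x → Reaches n 10 B (1, 1) (x', y) := by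
    intro x y y' h1 h2 h3
    exact h1.tail ⟨_, by simp [dirs4], _, h2, by simp [h3]⟩
  have pR : ∀ x y y' : ℤ, Reaches n 10 B (1, 1) (x, y) →
      IsSlide n 10 B (x, y) (0, 1) (y' - y).toNat → ∀ t, y ≤ t → t ≤ y' →
      Passes n 10 B (1, 1) (x, t) := by
    intro x y y' h1 h2 t h3 h4
    exact ⟨_, h1, _, by simp [dirs4], _, (t - y).toNat, h2, by omega, by simp; omega⟩
  have pD : ∀ y x x' : ℤ, Reaches n 10 B (1, 1) (x, y) →
      IsSlide n 10 B (x, y) (1, 0) (x' - x).toNat → ∀ t, x ≤ t → t ≤ x' →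
      Passes n 10 B (1, 1) (t, y) := by
    intro x y y' h1 h2 t h3 h4
    exact ⟨_, h1, _, by simp [dirs4], _, (t - y).toNat, h2, by omega, by simp; omega⟩
  have pU : ∀ y x x' : ℤ, Reaches n 10 B (1, 1) (x, y) →
      IsSlide n 10 B (x, y) (-1, 0) (x - x').toNat → ∀ t, x' ≤ t → t ≤ x →
      Passes n 10 B (1, 1) (t, y) := by
    intro x y y' h1 h2 t h3 h4
    exact ⟨_, h1, _, by simp [dirs4], _, (y - t).toNat, h2, by omega, by simp; omega⟩
  -- the tour
  have r0 : Reaches n 10 B (1, 1) (1, 1) := Relation.ReflTransGen.refl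
  have s1 := sR 1 1 5 (by omega) (by omega) (by omega)
  have r1 := mR _ _ _ r0 s1 (by omega)
  have s2 := sD 5 1 n (by omega) (by omega) (by omega)
  have r2 := mD _ _ _ r1 s2 (by omega)
  have s3 := sL n 5 4 (by omega) (by omega) (by omega)
  have r3 := mL _ _ _ r2 s3 (by omega)
  have s4 := sU 4 n 1 (by omega) (by omega) (by omega)
  have s5 := sR n 5 6 (by omega) (by omega) (by omega)
  have r5 := mR _ _ _ r2 s5 (by omega)
  have s6 := sU 6 n 2 (by omega) (by omega) (by omega)
  have r6 := mU _ _ _ r5 s6 (by omega)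
  have s7 := sD 1 1 n (by omega) (by omega) (by omega)
  have r7 := mD _ _ _ r0 s7 (by omega)
  have s8 := sR n 1 2 (by omega) (by omega) (by omega)
  have r8 := mR _ _ _ r7 s8 (by omega)
  have s9 := sU 2 n 3 (by omega) (by omega) (by omega)
  have s10 := sL 2 6 3 (by omega) (by omega) (by omega)
  have r10 := mL _ _ _ r6 s10 (by omega)
  have s11 := sD 3 2 (n - 1) (by omega) (by omega) (by omega)
  have s13 := sR 2 6 10 (by omega) (by omega) (by omega)
  have r13 := mR _ _ _ r6 s13 (by omega)
  have s14 := sD 10 2 n (by omega) (by omega) (by omega)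
  have r14 := mD _ _ _ r13 s14 (by omega)
  have s15 := sL n 10 8 (by omega) (by omega) (by omega)
  have r15 := mL _ _ _ r14 s15 (by omega)
  have s16 := sU 8 n 1 (by omega) (by omega) (by omega)
  have r16 := mU _ _ _ r15 s16 (by omega)
  have s17 := sR 1 8 9 (by omega) (by omega) (by omega)
  have r17 := mR _ _ _ r16 s17 (by omega)
  have s18 := sD 9 1 n (by omega) (by omega) (by omega)
  have s19 := sL 1 8 7 (by omega) (by omega) (by omega)
  have r19 := mL _ _ _ r16 s19 (by omega)
  have s20 := sD 7 1 (n - 1) (by omega) (by omega) (by omega)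
  refine ⟨⟨?_, ?_⟩, ?_⟩
  · simp [hBdef]
  · simp [hBdef, inGrid]; omega
  · rintro ⟨x, y⟩ hg hf
    have hfree := (fr x y).1 ⟨hg, hf⟩
    obtain ⟨⟨hx1, hx2, hy1, hy2⟩, hb⟩ := hfree
    have hy : y = 1 ∨ y = 2 ∨ y = 3 ∨ y = 4 ∨ y = 5 ∨ y = 6 ∨ y = 7 ∨ y = 8 ∨ y = 9 ∨ y = 10 := by
      omega
    rcases hy with rfl | rfl | rfl | rfl | rfl | rfl | rfl | rfl | rfl | rfl
    · exact pD _ _ _ r0 s7 x hx1 hx2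
    · by_cases h : x = 1
      · subst h; exact pR _ _ _ r0 s1 2 (by omega) (by omega)
      · exact pU _ _ _ r8 s9 x (by omega) hx2
    · by_cases h : x = 1
      · subst h; exact pR _ _ _ r0 s1 3 (by omega) (by omega)
      · exact pD _ _ _ r10 s11 x (by omega) (by omega)
    · exact pU _ _ _ r3 s4 x hx1 hx2
    · exact pD _ _ _ r1 s2 x hx1 hx2
    · exact pU _ _ _ r5 s6 x (by omega) hx2
    · exact pD _ _ _ r19 s20 x (by omega) (by omega)
    · exact pU _ _ _ r15 s16 x hx1 hx2
    · exact pD _ _ _ r17 s18 x hx1 hx2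
    · exact pD _ _ _ r13 s14 x (by omega) hx2

/-! ### A verified search for the remaining `10 × 10` configurations

A square `(x, y)` with `0 ≤ x, y ≤ 11` is coded as `12 * x + y`; sets of squares are bit masks. -/

/-- Mask of the squares around the `10 × 10` grid. -/
def borderMask : ℕ :=
  (List.range 144).foldl
    (fun w c => if c / 12 = 0 ∨ c / 12 = 11 ∨ c % 12 = 0 ∨ c % 12 = 11 then w ||| 2 ^ c else w) 0

/-- Bit test, written for fast kernel evaluation. -/
def tb (w p : ℕ) : Bool := Nat.ble 1 (Nat.land 1 (Nat.shiftRight w p))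

lemma tb_eq (w p : ℕ) : tb w p = w.testBit p := by
  have h : tb w p = Nat.ble 1 (1 &&& (w >>> p)) := rfl
  rw [h, Nat.testBit, Bool.eq_iff_iff, Nat.ble_eq, Nat.one_le_iff_ne_zero]
  simp

/-- Force evaluation of the first argument. -/
def forceN {α : Type} (k : ℕ) (f : ℕ → α) : α :=
  Nat.rec (f 0) (fun k _ => f (Nat.succ k)) k

lemma forceN_eq {α : Type} (k : ℕ) (f : ℕ → α) : forceN k f = f k := by
  cases k <;> rfl

/-- The end of a slide; `d` codes the direction as an offset plus 12. -/
def slideN (w d k : ℕ) : ℕ → ℕ :=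
  Nat.rec (fun p => p)
    (fun _ ih p => forceN (Nat.sub (Nat.add p d) 12) fun q => cond (tb w q) p (ih q)) k

lemma slideN_zero (w d p : ℕ) : slideN w d 0 p = p := rfl

lemma slideN_succ (w d k p : ℕ) : slideN w d (k + 1) p =
    cond (w.testBit (p + d - 12)) p (slideN w d k (p + d - 12)) := by
  have h : slideN w d (k + 1) p = forceN (p + d - 12) fun q => cond (tb w q) p (slideN w d k q) :=
    rfl
  rw [h, forceN_eq, tb_eq]

/-- Depth-first search for the stopping squares. -/
def dfs (w k : ℕ) : ℕ → List ℕ → ℕ :=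
  Nat.rec (fun S _ => S) (fun _ ih S l => List.rec S (fun p st _ =>
    forceN p fun p => cond (tb S p) (ih S st)
      (forceN (Nat.lor S (Nat.pow 2 p)) fun S => ih S (slideN w 13 10 p :: slideN w 11 10 p ::
        slideN w 24 10 p :: slideN w 0 10 p :: st))) l) k

def closedN (w S : ℕ) : Bool :=
  (List.range 144).all fun p => cond (tb S p)
    (tb S (slideN w 13 10 p) && tb S (slideN w 11 10 p) &&
      tb S (slideN w 24 10 p) && tb S (slideN w 0 10 p)) true

/-- Some free square has no stopping square in its row or column. -/
def missN (w S : ℕ) : Bool :=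
  (List.range 12).any fun x =>
    ((List.range 12).all fun t => !tb S (12 * x + t)) &&
    (List.range 12).any fun y => !tb w (12 * x + y) &&
      (List.range 12).all fun t => !tb S (12 * t + y)

def checkS (w S : ℕ) : Bool := tb S 13 && closedN w S && missN w S

def checkW (w : ℕ) : Bool := forceN w fun w => forceN (dfs w 100 0 [13]) fun S => checkS w S

def wallN (a b c d : ℕ) : ℕ := borderMask ||| 2 ^ a ||| 2 ^ b ||| 2 ^ c ||| 2 ^ d

def colTab : List (ℕ × ℕ × ℕ × ℕ) :=
  [(3, 6, 7, 8), (3, 6, 7, 10), (4, 1, 7, 8), (7, 3, 4, 10), (8, 1, 4, 5), (8, 3, 4, 5)]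

def rowTab : List (ℕ × ℕ × ℕ × ℕ) :=
  colTab.flatMap fun t => [(t.1, t.2.1, t.2.2.1, t.2.2.2), (t.1, t.2.1, t.2.2.2, t.2.2.1),
    (t.1, t.2.2.1, t.2.1, t.2.2.2), (t.1, t.2.2.1, t.2.2.2, t.2.1),
    (t.1, t.2.2.2, t.2.1, t.2.2.1), (t.1, t.2.2.2, t.2.2.1, t.2.1)]

def quadOK (r c : ℕ × ℕ × ℕ × ℕ) : Bool :=
  (r.2.1 == 1 && c.2.1 == 1) || (r.2.2.1 == 1 && c.2.2.1 == 1) ||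
  (r.2.2.2 == 1 && c.2.2.2 == 1) ||
  checkW (wallN (12 * r.1 + c.1) (12 * r.2.1 + c.2.1) (12 * r.2.2.1 + c.2.2.1)
    (12 * r.2.2.2 + c.2.2.2))

set_option maxRecDepth 100000 in
lemma all_quads : (colTab.all fun c => rowTab.all fun r => quadOK r c) = true := by
  decide +kernel

/-- Code of a square. -/
def codeZ (p : Sq) : ℕ := (12 * p.1 + p.2).toNat

lemma border_spec : ∀ x < 12, ∀ y < 12, borderMask.testBit (12 * x + y) =
    decide (x = 0 ∨ x = 11 ∨ y = 0 ∨ y = 11) := by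
  decide +kernel

/-- `w` is the wall mask of the configuration `B`. -/
def WallOf (w : ℕ) (B : Finset Sq) : Prop :=
  ∀ p : Sq, 0 ≤ p.1 → p.1 ≤ 11 → 0 ≤ p.2 → p.2 ≤ 11 →
    (w.testBit (codeZ p) = true ↔ ¬ Free 10 10 B p)

lemma wallN_spec (a b c d a' b' c' d' : ℕ) (ha : a' ≤ 10) (hb : b' ≤ 10) (hc : c' ≤ 10)
    (hd : d' ≤ 10) : WallOf (wallN (12 * a + a') (12 * b + b') (12 * c + c') (12 * d + d'))
      {((a : ℤ), (a' : ℤ)), ((b : ℤ), (b' : ℤ)), ((c : ℤ), (c' : ℤ)), ((d : ℤ), (d' : ℤ))} := by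
  rintro ⟨x, y⟩ h1 h2 h3 h4
  simp only at h1 h2 h3 h4
  lift x to ℕ using h1
  lift y to ℕ using h3
  have hcode : codeZ ((x : ℤ), (y : ℤ)) = 12 * x + y := by
    simp only [codeZ]; omega
  rw [hcode, wallN]
  simp only [Nat.testBit_or, Nat.testBit_two_pow, Bool.or_eq_true, decide_eq_true_eq]
  rw [border_spec x (by omega) y (by omega)]
  simp only [Free, inGrid, Finset.mem_insert, Finset.mem_singleton, Prod.mk.injEq,
    decide_eq_true_eq, Nat.cast_ofNat]
  omega

lemma slideN_spec {w : ℕ} {B : Finset Sq} (hw : WallOf w B) {d : Sq} {e : ℕ}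
    (hde : (d = (0, 1) ∧ e = 13) ∨ (d = (0, -1) ∧ e = 11) ∨ (d = (1, 0) ∧ e = 24) ∨
      (d = (-1, 0) ∧ e = 0)) (k : ℕ) :
    ∀ f p, k ≤ f → IsSlide 10 10 B p d k → slideN w e f (codeZ p) = codeZ (p + (k : ℤ) • d) := by
  have hstep : ∀ p, Free 10 10 B p → codeZ p + e - 12 = codeZ (p + d) ∧
      (w.testBit (codeZ (p + d)) = true ↔ ¬ Free 10 10 B (p + d)) := by
    rintro ⟨x, y⟩ hp
    have hg := hp.1
    simp only [inGrid, Nat.cast_ofNat] at hg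
    constructor
    · rcases hde with ⟨rfl, rfl⟩ | ⟨rfl, rfl⟩ | ⟨rfl, rfl⟩ | ⟨rfl, rfl⟩ <;>
        simp only [codeZ, Prod.mk_add_mk] <;> omega
    · apply hw <;> rcases hde with ⟨rfl, rfl⟩ | ⟨rfl, rfl⟩ | ⟨rfl, rfl⟩ | ⟨rfl, rfl⟩ <;>
        simp only [Prod.mk_add_mk] <;> omega
  induction k with
  | zero =>
    intro f p _ hs
    have hp : Free 10 10 B p := by simpa using hs.1 0 le_rfl
    have hn : ¬ Free 10 10 B (p + d) := by simpa using hs.2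
    obtain ⟨h1, h2⟩ := hstep p hp
    have h3 := h2.2 hn
    cases f with
    | zero => simp [slideN_zero]
    | succ f => rw [slideN_succ, h1, h3]; simp
  | succ k ih =>
    intro f p hf hs
    have hp : Free 10 10 B p := by simpa using hs.1 0 (Nat.zero_le _)
    have hn : Free 10 10 B (p + d) := by simpa using hs.1 1 (by omega)
    obtain ⟨h1, h2⟩ := hstep p hp
    have h3 : w.testBit (codeZ (p + d)) = false := by
      rw [Bool.eq_false_iff]; exact fun h => h2.1 h hn
    obtain ⟨f, rfl⟩ : ∃ g, f = g + 1 := ⟨f - 1, by omega⟩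
    have hshift : ∀ t : ℤ, p + (t + 1) • d = p + d + t • d := by
      intro t; rw [add_smul, one_smul]; abel
    rw [slideN_succ, h1, h3, cond_false, ih f (p + d) (by omega)]
    · rw [← hshift]; push_cast; rfl
    · refine ⟨fun t ht => ?_, ?_⟩
      · have := hs.1 (t + 1) (by omega)
        push_cast at this
        rwa [hshift] at this
      · have := hs.2
        push_cast at this
        rwa [hshift] at this

lemma checkW_sound {w : ℕ} {B : Finset Sq} (hw : WallOf w B) (h : checkW w = true) :
    ¬ SolvesPass 10 10 B := by
  intro hB
  rw [checkW, forceN_eq, forceN_eq] at h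
  generalize dfs w 100 0 [13] = S at h
  simp only [checkS, closedN, missN, tb_eq, Bool.and_eq_true, List.all_eq_true, List.any_eq_true,
    List.mem_range, Bool.not_eq_true'] at h
  obtain ⟨⟨h0, hcl⟩, x, hx, hxr, y, hy, hwxy, hyc⟩ := h
  have hinv : ∀ p, Reaches 10 10 B (1, 1) p → inGrid 10 10 p ∧ S.testBit (codeZ p) = true := by
    intro p hp
    refine reach_inv (fun p => inGrid 10 10 p ∧ S.testBit (codeZ p) = true)
      ⟨by simp [inGrid], by simpa [codeZ] using h0⟩ ?_ hp
    rintro p q hm ⟨hp, hI⟩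
    have hq := (move_cases hm).2.1
    refine ⟨hq, ?_⟩
    obtain ⟨d, hd, k, hs, rfl⟩ := hm
    have hc := hcl (codeZ p) (by
      simp only [inGrid, Nat.cast_ofNat] at hp
      simp only [codeZ]; omega)
    rw [hI, cond_true] at hc
    simp only [Bool.and_eq_true] at hc
    simp only [dirs4, Set.mem_insert_iff, Set.mem_singleton_iff] at hd
    have hk : k ≤ 10 := by
      obtain ⟨u, v⟩ := p
      rcases hd with rfl | rfl | rfl | rfl <;>
      · simp only [inGrid, Nat.cast_ofNat, Prod.smul_mk, Prod.mk_add_mk, smul_eq_mul] at hp hq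
        omega
    rcases hd with rfl | rfl | rfl | rfl
    · rw [← slideN_spec hw (e := 24) (by simp) k 10 p hk hs]; exact hc.1.2
    · rw [← slideN_spec hw (e := 0) (by simp) k 10 p hk hs]; exact hc.2
    · rw [← slideN_spec hw (e := 13) (by simp) k 10 p hk hs]; exact hc.1.1.1
    · rw [← slideN_spec hw (e := 11) (by simp) k 10 p hk hs]; exact hc.1.1.2
  have hfree : Free 10 10 B ((x : ℤ), (y : ℤ)) := by
    by_contra hn
    have := (hw ((x : ℤ), (y : ℤ)) (by simp) (by simp only; omega) (by simp)
      (by simp only; omega)).2 hn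
    have hcode : codeZ ((x : ℤ), (y : ℤ)) = 12 * x + y := by
      simp only [codeZ]; omega
    rw [hcode, hwxy] at this
    simp at this
  obtain ⟨⟨u, v⟩, hp, h⟩ := passes_line (hB.2 _ hfree.1 hfree.2)
  obtain ⟨hg, hS⟩ := hinv _ hp
  simp only [inGrid, Nat.cast_ofNat] at hg h
  rcases h with rfl | rfl
  · have := hxr v.toNat (by omega)
    have hcode : codeZ ((x : ℤ), v) = 12 * x + v.toNat := by
      simp only [codeZ]; omega
    rw [hcode, this] at hS
    simp at hS
  · have := hyc u.toNat (by omega)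
    have hcode : codeZ (u, (y : ℤ)) = 12 * u.toNat + y := by
      simp only [codeZ]; omega
    rw [hcode, this] at hS
    simp at hS

/-! ### Tables of coordinate patterns -/

/-- Coordinate `j` has a neighbour among the four values. -/
def nb (a b c d j : ℕ) : Bool :=
  Nat.beq a (j + 1) || Nat.beq (a + 1) j || Nat.beq b (j + 1) || Nat.beq (b + 1) j ||
  Nat.beq c (j + 1) || Nat.beq (c + 1) j || Nat.beq d (j + 1) || Nat.beq (d + 1) j

lemma nb_iff (a b c d j : ℕ) : nb a b c d j = true ↔ (a = j + 1 ∨ a + 1 = j ∨ b = j + 1 ∨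
    b + 1 = j ∨ c = j + 1 ∨ c + 1 = j ∨ d = j + 1 ∨ d + 1 = j) := by
  simp only [nb, Bool.or_eq_true, Nat.beq_eq]
  tauto

lemma dom_table : ((List.range 11).all fun a => (List.range 11).all fun b =>
    !Nat.ble a b || (List.range 11).all fun c =>
    !Nat.ble b c || (List.range 11).all fun d => !Nat.ble c d ||
      !((List.range 10).all fun j => Nat.ble j 1 || nb a b c d j) ||
      (Nat.beq a 3 && Nat.beq b 4 && Nat.beq c 7 && Nat.beq d 8)) = true := by
  decide +kernel

/-- In the pattern `a, b ≤ c ≤ d` on `1, …, n`, all of `2, …, n - 1` other than `a` are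
dominated and `a` is not; then the pattern is in the table `T`. -/
def pattTab (n : ℕ) (T : List (ℕ × ℕ × ℕ × ℕ)) : Bool :=
  (List.range n).all fun a => Nat.ble a 1 ||
    (List.range (n + 1)).all fun b => Nat.beq b (a + 1) || Nat.beq (b + 1) a ||
    (List.range (n + 1)).all fun c => Nat.beq c (a + 1) || Nat.beq (c + 1) a || !Nat.ble b c ||
    (List.range (n + 1)).all fun d => Nat.beq d (a + 1) || Nat.beq (d + 1) a || !Nat.ble c d ||
      !((List.range n).all fun j => Nat.ble j 1 || Nat.beq j a || nb a b c d j) ||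
      T.contains (a, b, c, d)

lemma pattTab_10 : pattTab 10 colTab = true := by decide +kernel

lemma pattTab_11 : pattTab 11 [] = true := by decide +kernel

lemma patt_sorted {n : ℕ} {T : List (ℕ × ℕ × ℕ × ℕ)} (hT : pattTab n T = true) {a b c d : ℕ}
    (ha : 2 ≤ a) (ha' : a < n) (hd : d ≤ n) (hbc : b ≤ c) (hcd : c ≤ d)
    (hna : nb a b c d a = false)
    (h : ∀ j, 2 ≤ j → j < n → j ≠ a → nb a b c d j = true) : (a, b, c, d) ∈ T := by
  simp only [pattTab, List.all_eq_true, List.mem_range, Bool.or_eq_true, Nat.ble_eq, Nat.beq_eq,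
    Bool.not_eq_true', List.contains_iff_mem] at hT
  have hn : ¬ nb a b c d a = true := by simp [hna]
  rw [nb_iff] at hn
  have h1 := (hT a ha').resolve_left (by omega)
  have h2 := (h1 b (by omega)).resolve_left (by omega)
  have h3 := h2 c (by omega)
  have e1 : Nat.ble b c = true := Nat.ble_eq.mpr hbc
  have e2 : Nat.ble c d = true := Nat.ble_eq.mpr hcd
  have h4 := (h3.resolve_left (by rw [e1]; simp; omega)) d (by omega)
  rcases h4 with (h4 | h4) | h4
  · rw [e2] at h4; simp at h4; omega
  · exfalso
    rw [← Bool.not_eq_true, List.all_eq_true] at h4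
    apply h4
    intro j hj
    rw [List.mem_range] at hj
    simp only [Bool.or_eq_true, Nat.ble_eq, Nat.beq_eq]
    by_cases h5 : j ≤ 1
    · exact Or.inl (Or.inl h5)
    by_cases h6 : j = a
    · exact Or.inl (Or.inr h6)
    · exact Or.inr (h j (by omega) hj h6)
  · exact h4

/-- Unsorted version of `patt_sorted`. -/
lemma patt_any {n : ℕ} {T : List (ℕ × ℕ × ℕ × ℕ)} (hT : pattTab n T = true) {a b c d : ℕ}
    (ha : 2 ≤ a) (ha' : a < n) (hb : b ≤ n) (hc : c ≤ n) (hd : d ≤ n)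
    (hna : nb a b c d a = false)
    (h : ∀ j, 2 ≤ j → j < n → j ≠ a → nb a b c d j = true) :
    (a, b, c, d) ∈ T ∨ (a, b, d, c) ∈ T ∨ (a, c, b, d) ∈ T ∨ (a, c, d, b) ∈ T ∨
      (a, d, b, c) ∈ T ∨ (a, d, c, b) ∈ T := by
  have key : ∀ b' c' d', d' ≤ n → b' ≤ c' → c' ≤ d' →
      (∀ j, nb a b' c' d' j = nb a b c d j) → (a, b', c', d') ∈ T := by
    intro b' c' d' h1 h2 h3 h4
    refine patt_sorted hT ha ha' h1 h2 h3 (by rw [h4]; exact hna) ?_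
    intro j h5 h6 h7
    rw [h4]; exact h j h5 h6 h7
  have hs : ∀ b' c' d', (∀ j, nb a b' c' d' j = true ↔ nb a b c d j = true) →
      ∀ j, nb a b' c' d' j = nb a b c d j := fun _ _ _ h j => Bool.eq_iff_iff.2 (h j)
  rcases le_total b c with h1 | h1 <;> rcases le_total c d with h2 | h2 <;>
    rcases le_total b d with h3 | h3
  · exact Or.inl (key b c d hd h1 h2 (hs _ _ _ (by intro j; exact Iff.rfl)))
  · exact Or.inl (key b c d hd h1 h2 (hs _ _ _ (by intro j; exact Iff.rfl)))
  · exact Or.inr (Or.inl (key b d c hc h3 h2 (hs _ _ _ (by intro j; rw [nb_iff, nb_iff]; omega))))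
  · exact Or.inr (Or.inr (Or.inr (Or.inr (Or.inl
      (key d b c hc h3 h1 (hs _ _ _ (by intro j; rw [nb_iff, nb_iff]; omega)))))))
  · exact Or.inr (Or.inr (Or.inl
      (key c b d hd h1 h3 (hs _ _ _ (by intro j; rw [nb_iff, nb_iff]; omega)))))
  · exact Or.inr (Or.inr (Or.inr (Or.inl
      (key c d b hb h2 h3 (hs _ _ _ (by intro j; rw [nb_iff, nb_iff]; omega))))))
  · exact Or.inr (Or.inr (Or.inr (Or.inr (Or.inr
      (key d c b hb h2 h1 (hs _ _ _ (by intro j; rw [nb_iff, nb_iff]; omega)))))))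
  · exact Or.inr (Or.inr (Or.inr (Or.inr (Or.inr
      (key d c b hb h2 h1 (hs _ _ _ (by intro j; rw [nb_iff, nb_iff]; omega)))))))

lemma rowTab_mem {a b c d : ℕ} (h : (a, b, c, d) ∈ colTab ∨ (a, b, d, c) ∈ colTab ∨
    (a, c, b, d) ∈ colTab ∨ (a, c, d, b) ∈ colTab ∨ (a, d, b, c) ∈ colTab ∨
    (a, d, c, b) ∈ colTab) : (a, b, c, d) ∈ rowTab := by
  rw [rowTab, List.mem_flatMap]
  rcases h with h | h | h | h | h | h <;> exact ⟨_, h, by simp⟩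

/-! ### The lower bound -/

lemma sorted_cols {a b c d : ℕ} (hd : d ≤ 10) (hab : a ≤ b) (hbc : b ≤ c) (hcd : c ≤ d)
    (h : ∀ j, 2 ≤ j → j < 10 → nb a b c d j = true) : a = 3 ∧ b = 4 ∧ c = 7 ∧ d = 8 := by
  have hT := dom_table
  simp only [List.all_eq_true, List.mem_range, Bool.or_eq_true, Bool.and_eq_true, Nat.beq_eq] at hT
  have e1 : Nat.ble a b = true := Nat.ble_eq.mpr hab
  have e2 : Nat.ble b c = true := Nat.ble_eq.mpr hbc
  have e3 : Nat.ble c d = true := Nat.ble_eq.mpr hcd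
  have h1 := (hT a (by omega) b (by omega)).resolve_left (by simp [e1])
  have h2 := (h1 c (by omega)).resolve_left (by simp [e2])
  rcases h2 d (by omega) with (h3 | h3) | h3
  · simp [e3] at h3
  · exfalso
    rw [Bool.not_eq_true', ← Bool.not_eq_true, List.all_eq_true] at h3
    apply h3
    intro j hj
    rw [List.mem_range] at hj
    simp only [Bool.or_eq_true, Nat.ble_eq]
    by_cases h5 : j ≤ 1
    · exact Or.inl h5
    · exact Or.inr (h j (by omega) hj)
  · omega

/-- Every column is dominated: impossible. -/
lemma all_cols_dom {n : ℕ} (hn : 10 ≤ n) {B : Finset Sq} (hB : SolvesPass n 10 B)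
    (hc : B.card ≤ 4) (hU : undom 10 (B.image Prod.snd) = ∅) : False := by
  obtain ⟨b0, hb0, -⟩ := exists_boundary hn hB hc
  obtain ⟨l, hl, hs, rfl⟩ := exists_sorted 3 B ⟨b0, hb0⟩ hc
  match l, hl with
  | [(r1, c1), (r2, c2), (r3, c3), (r4, c4)], _ =>
    have hg := hB.1.2
    simp only [List.mem_toFinset, List.mem_cons, List.not_mem_nil, or_false, forall_eq_or_imp,
      forall_eq, inGrid, Nat.cast_ofNat] at hg
    simp only [List.pairwise_cons, List.mem_cons, List.not_mem_nil, or_false, forall_eq_or_imp,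
      forall_eq] at hs
    lift c1 to ℕ using (by omega)
    lift c2 to ℕ using (by omega)
    lift c3 to ℕ using (by omega)
    lift c4 to ℕ using (by omega)
    have := @sorted_cols c1 c2 c3 c4 (by omega) (by omega) (by omega) (by omega) (by
      intro j h1 h2
      rw [nb_iff]
      by_contra hno
      have hmem : (j : ℤ) ∈ undom 10 (([((r1 : ℤ), (c1 : ℤ)), (r2, (c2 : ℤ)), (r3, (c3 : ℤ)),
          (r4, (c4 : ℤ))] : List Sq).toFinset.image Prod.snd) := by
        rw [undom, Finset.mem_filter, Finset.mem_Icc]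
        simp only [List.toFinset_cons, List.toFinset_nil, Finset.image_insert,
          Finset.mem_insert, Finset.image_empty, Finset.notMem_empty, or_false]
        push_cast
        omega
      rw [hU] at hmem
      exact Finset.notMem_empty _ hmem)
    obtain ⟨rfl, rfl, rfl, rfl⟩ := this
    apply cols3478 hn r1 r2 r3 r4
    simpa using hB

lemma no_four {n : ℕ} (hn : 10 ≤ n) {B : Finset Sq} (hB : SolvesPass n 10 B)
    (hc : B.card ≤ 4) : False := by
  by_cases hV : undom 10 (B.image Prod.snd) = ∅
  · exact all_cols_dom hn hB hc hV
  have hr4 : (B.image Prod.fst).card ≤ 4 := Finset.card_image_le.trans hc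
  have hR := undom_card n (B.image Prod.fst)
  have hC := undom_card 10 (B.image Prod.snd)
  by_cases hU : undom n (B.image Prod.fst) = ∅
  · rw [hU, Finset.card_empty] at hR
    have hn10 : n = 10 := by omega
    subst hn10
    refine all_cols_dom le_rfl (solves_swap hB) (Finset.card_image_le.trans hc) ?_
    rw [Finset.image_image]
    exact hU
  have hUV : ∀ i ∈ undom n (B.image Prod.fst), ∀ j ∈ undom 10 (B.image Prod.snd), (i, j) ∈ B :=
    fun i hi j hj => undom_mem hB (undom_row hi) (undom_col hj)
  rw [← ne_eq, ← Finset.nonempty_iff_ne_empty] at hU hV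
  have hU1 := prod_bound B hc _ _ hUV (by omega) (by omega) hV
  have hV1 := prod_bound (B.image Prod.swap) (Finset.card_image_le.trans hc)
    (undom 10 (B.image Prod.snd)) (undom n (B.image Prod.fst))
    (fun i hi j hj => Finset.mem_image.2 ⟨(j, i), hUV j hj i hi, rfl⟩)
    (by rw [Finset.image_image]; change 8 ≤ _ + 2 * (B.image Prod.snd).card; omega)
    (by rw [Finset.image_image]; change 8 ≤ _ + 2 * (B.image Prod.fst).card; omega) hU
  obtain ⟨i, hi⟩ := hU
  obtain ⟨j, hj⟩ := hV
  have hij := hUV i hi j hj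
  have hiU := undom_row hi
  have hjU := undom_col hj
  have hi1 : ∀ i' ∈ undom n (B.image Prod.fst), i' = i :=
    fun i' hi' => Finset.card_le_one.1 hU1 i' hi' i hi
  have hj1 : ∀ j' ∈ undom 10 (B.image Prod.snd), j' = j :=
    fun j' hj' => Finset.card_le_one.1 hV1 j' hj' j hj
  have hn11 : n ≤ 11 := by omega
  -- the other three blocks
  have hne : (B.erase (i, j)).Nonempty := by
    obtain ⟨b, hb, h⟩ := exists_boundary hn hB hc
    refine ⟨b, Finset.mem_erase.2 ⟨?_, hb⟩⟩
    rintro rfl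
    obtain ⟨h1, h2, -⟩ := hiU
    obtain ⟨h3, h4, -⟩ := hjU
    push_cast at h4
    simp only at h
    omega
  obtain ⟨l, hl, hs, hlB⟩ := exists_sorted 2 (B.erase (i, j)) hne (by
    rw [Finset.card_erase_of_mem hij]; omega)
  match l, hl with
  | [(r2, c2), (r3, c3), (r4, c4)], _ =>
    have hBe : B = {(i, j), (r2, c2), (r3, c3), (r4, c4)} := by
      rw [← Finset.insert_erase hij, ← hlB]; simp
    clear hlB hij hUV hU1 hV1 hR hC hr4 hne hi hj
    subst hBe
    obtain ⟨h11, hg⟩ := hB.1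
    simp only [Finset.mem_insert, Finset.mem_singleton, forall_eq_or_imp,
      forall_eq, inGrid, Nat.cast_ofNat] at hg
    simp only [List.pairwise_cons, List.mem_cons, List.not_mem_nil, or_false, forall_eq_or_imp,
      forall_eq] at hs
    simp only [undom, Finset.mem_filter, Finset.mem_Icc, Finset.image_insert,
      Finset.image_singleton, Finset.mem_insert, Finset.mem_singleton, Nat.cast_ofNat] at hi1 hj1
    simp only [Finset.mem_insert, Finset.mem_singleton, Prod.mk.injEq] at h11
    lift i to ℕ using (by omega)
    lift j to ℕ using (by omega)
    lift r2 to ℕ using (by omega)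
    lift r3 to ℕ using (by omega)
    lift r4 to ℕ using (by omega)
    lift c2 to ℕ using (by omega)
    lift c3 to ℕ using (by omega)
    lift c4 to ℕ using (by omega)
    obtain ⟨hi2, hin, hiU⟩ := hiU
    obtain ⟨hj2, hjn, hjU⟩ := hjU
    simp only [Finset.mem_insert, Finset.mem_singleton, forall_eq_or_imp,
      forall_eq, Nat.cast_ofNat] at hiU hjU hjn
    have hrow0 : nb i r2 r3 r4 i = false := by
      clear hjU h11
      rw [Bool.eq_false_iff, ne_eq, nb_iff]; omega
    clear hiU
    have hrow : ∀ x, 2 ≤ x → x < n → x ≠ i → nb i r2 r3 r4 x = true := by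
      intro x h1 h2 h3
      rw [nb_iff]
      have := hi1 x
      omega
    have hcol0 : nb j c2 c3 c4 j = false := by
      clear h11
      rw [Bool.eq_false_iff, ne_eq, nb_iff]; omega
    clear hjU
    have hcol : ∀ x, 2 ≤ x → x < 10 → x ≠ j → nb j c2 c3 c4 x = true := by
      intro x h1 h2 h3
      rw [nb_iff]
      have := hj1 x
      omega
    have hcT : (j, c2, c3, c4) ∈ colTab :=
      patt_sorted pattTab_10 (by omega) (by omega) (by omega) (by omega) (by omega) hcol0 hcol
    obtain rfl | rfl : n = 10 ∨ n = 11 := by omega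
    · have hrT : (i, r2, r3, r4) ∈ rowTab := rowTab_mem
        (patt_any pattTab_10 (by omega) (by omega) (by omega) (by omega) (by omega) hrow0 hrow)
      have hq := all_quads
      rw [List.all_eq_true] at hq
      have hq := hq _ hcT
      rw [List.all_eq_true] at hq
      have hq := hq _ hrT
      simp only [quadOK, Bool.or_eq_true, Bool.and_eq_true, beq_iff_eq] at hq
      have hq := hq.resolve_left (by omega)
      exact checkW_sound (wallN_spec i r2 r3 r4 j c2 c3 c4 (by omega) (by omega) (by omega)
        (by omega)) hq hB
    · have := patt_any pattTab_11 (by omega) (by omega) (by omega) (by omega) (by omega) hrow0 hrow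
      simp at this

/-- For all `n ≥ 10`, the block-pass game on `G_{n,10}` needs exactly `5` blocks,
while the total domination number of `P_8` is `4`. -/
theorem stmt3 (n : ℕ) (hn : 10 ≤ n) :
    optPB n 10 = 5 ∧ gammaT (SimpleGraph.pathGraph 8) = 4 := by
  refine ⟨le_antisymm ?_ ?_, gamma_path⟩
  · exact le_trans (Nat.sInf_le (m := Finset.card _) ⟨_, five_solves hn, rfl⟩) Finset.card_le_five
  · refine le_csInf ⟨_, _, five_solves hn, rfl⟩ ?_
    rintro k ⟨B, hB, rfl⟩
    by_contra hlt
    exact no_four hn hB (by omega)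
end

section
/- For all n ≥ m ≥ 1, any block configuration B on the torus T_{n,m} that solves the block-pass sliding game (from some fixed block-free starting square) satisfies 2·|B| ≥ m − 1; that is, opt^P_B(T_{n,m}) ≥ (m−1)/2. -/
/-- Squares of the torus `T_{n,m}`: (row, column) pairs taken modulo `n` and `m`. -/
abbrev TSq (n m : ℕ) : Type := ZMod n × ZMod m

/-- The four axis directions on the torus. -/
def dirsT (n m : ℕ) : Set (TSq n m) := {(1, 0), (-1, 0), (0, 1), (0, -1)}

/-- Sliding from `p` in direction `d` travels exactly `k` steps: all squares along the
way are block-free and the robot stops on the square immediately before the first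
block of `B` encountered in direction `d`.  If the relevant row or column contains no
block, no such `k` exists and the move is impossible. -/
def IsSlideT {n m : ℕ} (B : Finset (TSq n m)) (p d : TSq n m) (k : ℕ) : Prop :=
  (∀ t : ℕ, t ≤ k → p + t • d ∉ B) ∧ p + (k + 1) • d ∈ B

/-- One move of the robot on the torus. -/
def MoveT {n m : ℕ} (B : Finset (TSq n m)) (p q : TSq n m) : Prop :=
  ∃ d ∈ dirsT n m, ∃ k : ℕ, IsSlideT B p d k ∧ q = p + k • d

/-- The robot, starting on `p`, can stop on `q` after a finite sequence of moves. -/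
def ReachesT {n m : ℕ} (B : Finset (TSq n m)) : TSq n m → TSq n m → Prop :=
  Relation.ReflTransGen (MoveT B)

/-- The robot, starting on `p₀`, passes over the square `s`: during some move of a
finite sequence of moves it occupies or slides through `s`. -/
def PassesT {n m : ℕ} (B : Finset (TSq n m)) (p₀ s : TSq n m) : Prop :=
  ∃ p, ReachesT B p₀ p ∧ ∃ d ∈ dirsT n m, ∃ k t : ℕ,
    IsSlideT B p d k ∧ t ≤ k ∧ s = p + t • d

/-- `B` solves the block-pass game on the torus from the block-free starting square
`p₀`: the robot can pass over every square not in `B`. -/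
def SolvesPassT {n m : ℕ} (B : Finset (TSq n m)) (p₀ : TSq n m) : Prop :=
  p₀ ∉ B ∧ ∀ s : TSq n m, s ∉ B → PassesT B p₀ s

/-- `opt^P_B(T_{n,m})`: the minimum number of blocks solving the block-pass game on
the torus (from some fixed block-free starting square). -/
noncomputable def optPBT (n m : ℕ) : ℕ :=
  sInf {k | ∃ B : Finset (TSq n m), ∃ p₀ : TSq n m, SolvesPassT B p₀ ∧ B.card = k}

/-- A square that is passed over shares its row or its column with a block. -/
theorem passes_line_s5 {n m : ℕ} {B : Finset (TSq n m)} {p₀ s : TSq n m}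
    (h : PassesT B p₀ s) : (∃ b ∈ B, b.1 = s.1) ∨ (∃ b ∈ B, b.2 = s.2) := by
  obtain ⟨p, -, d, hd, k, t, ⟨-, hb⟩, -, rfl⟩ := h
  simp only [dirsT, Set.mem_insert_iff, Set.mem_singleton_iff] at hd
  rcases hd with rfl | rfl | rfl | rfl
  · exact Or.inr ⟨_, hb, by simp⟩
  · exact Or.inr ⟨_, hb, by simp⟩
  · exact Or.inl ⟨_, hb, by simp⟩
  · exact Or.inl ⟨_, hb, by simp⟩

theorem card_ge {n m : ℕ} (hm : 1 ≤ m) (hmn : m ≤ n) (B : Finset (TSq n m))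
    (p₀ : TSq n m) (h : SolvesPassT B p₀) : m ≤ B.card := by
  haveI : NeZero m := ⟨by omega⟩
  haveI : NeZero n := ⟨by omega⟩
  by_cases hr : ∀ i : ZMod n, ∃ b ∈ B, b.1 = i
  · have h1 : B.image Prod.fst = Finset.univ := by
      ext i; simpa using hr i
    have h2 : (B.image Prod.fst).card ≤ B.card := Finset.card_image_le
    rw [h1, Finset.card_univ, ZMod.card] at h2
    omega
  · have hc : ∀ j : ZMod m, ∃ b ∈ B, b.2 = j := by
      intro j
      push Not at hr
      obtain ⟨i, hi⟩ := hr
      rcases passes_line_s5 (h.2 (i, j) (fun hb => hi _ hb rfl)) with ⟨b, hb, hbi⟩ | hj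
      · exact absurd hbi (hi b hb)
      · exact hj
    have h1 : B.image Prod.snd = Finset.univ := by
      ext j; simpa using hc j
    have h2 : (B.image Prod.snd).card ≤ B.card := Finset.card_image_le
    rwa [h1, Finset.card_univ, ZMod.card] at h2

/-- For `n ≥ 2`, filling everything except the starting square solves the game. -/
theorem exists_solution {n m : ℕ} (hm : 1 ≤ m) (hn : 2 ≤ n) :
    ∃ (B : Finset (TSq n m)) (p₀ : TSq n m), SolvesPassT B p₀ := by
  haveI : NeZero m := ⟨by omega⟩
  haveI : NeZero n := ⟨by omega⟩
  haveI : Fact (1 < n) := ⟨by omega⟩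
  refine ⟨Finset.univ.erase 0, 0, by simp, ?_⟩
  intro s hs
  have hs0 : s = 0 := by simpa using hs
  subst hs0
  refine ⟨0, Relation.ReflTransGen.refl, (1, 0), by simp [dirsT], 0, 0, ⟨?_, ?_⟩, le_rfl, by simp⟩
  · intro t ht
    obtain rfl : t = 0 := by omega
    simp
  · simp [Prod.ext_iff]

/-- For all `n ≥ m ≥ 1`, any block configuration solving the block-pass game on the
torus `T_{n,m}` (from some block-free starting square) has at least `(m-1)/2` blocks;
in particular `opt^P_B(T_{n,m}) ≥ (m-1)/2`. -/
theorem stmt5 (n m : ℕ) (hm : 1 ≤ m) (hmn : m ≤ n) :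
    (∀ (B : Finset (TSq n m)) (p₀ : TSq n m),
        SolvesPassT B p₀ → m - 1 ≤ 2 * B.card) ∧
    m - 1 ≤ 2 * optPBT n m := by
  refine ⟨fun B p₀ h => by have := card_ge hm hmn B p₀ h; omega, ?_⟩
  rcases Nat.lt_or_ge m 2 with h2 | h2
  · omega
  · obtain ⟨B, p₀, h⟩ := exists_solution (n := n) hm (by omega)
    have hne : {k | ∃ B : Finset (TSq n m), ∃ p₀ : TSq n m,
        SolvesPassT B p₀ ∧ B.card = k}.Nonempty := ⟨_, B, p₀, h, rfl⟩
    obtain ⟨B', p', h', hk⟩ := Nat.sInf_mem hne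
    have := card_ge hm hmn B' p' h'
    unfold optPBT
    omega
end

section
/- For all n ≥ m ≥ 3, the minimum number of blocks in a solution of the block-stop sliding game on the rectangular grid satisfies opt^S_B(G_{n,m}) ≥ γ(G_{n−2,m−2}), the domination number of the (n−2)×(m−2) grid graph. -/
/-- `B` solves the block-stop game on `G_{n,m}`: starting from `(1,1)`, the robot can
stop on every square not in `B` (the starting square itself counts as reachable). -/
def SolvesStop (n m : ℕ) (B : Finset Sq) : Prop :=
  BlocksOK n m B ∧ ∀ s : Sq, inGrid n m s → s ∉ B → Reaches n m B (1, 1) s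

/-- `opt^S_B(G_{n,m})`: the minimum number of blocks solving the block-stop game. -/
noncomputable def optSB (n m : ℕ) : ℕ :=
  sInf {k | ∃ B : Finset Sq, SolvesStop n m B ∧ B.card = k}

/-- The grid graph `G_{a,b}`: vertices are `{1,…,a} × {1,…,b}` (modelled as
`Fin a × Fin b`) and edges join squares at Manhattan distance `1`. -/
def gridGraph (a b : ℕ) : SimpleGraph (Fin a × Fin b) :=
  SimpleGraph.fromRel fun p q =>
    (p.1 = q.1 ∧ (p.2 : ℕ) + 1 = (q.2 : ℕ)) ∨ (p.2 = q.2 ∧ (p.1 : ℕ) + 1 = (q.1 : ℕ))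

/-- `D` is a dominating set of `G`: every vertex not in `D` has a neighbour in `D`. -/
def IsDomSet {V : Type*} (G : SimpleGraph V) (D : Finset V) : Prop :=
  ∀ v : V, v ∉ D → ∃ u ∈ D, G.Adj v u

/-- The domination number `γ(G)`. -/
noncomputable def gamma {V : Type*} (G : SimpleGraph V) : ℕ :=
  sInf {k | ∃ D : Finset V, IsDomSet G D ∧ D.card = k}

/-- Clamp a square of the grid to the interior, as a vertex of the smaller grid graph. -/
def clampSq (n m : ℕ) (hn : 3 ≤ n) (hm : 3 ≤ m) (p : Sq) : Fin (n - 2) × Fin (m - 2) :=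
  (⟨min (p.1 - 2).toNat (n - 3), by omega⟩, ⟨min (p.2 - 2).toNat (m - 3), by omega⟩)

theorem solvesStop_full (n m : ℕ) : ∃ B : Finset Sq, SolvesStop n m B := by
  refine ⟨(Finset.Icc (1 : ℤ) n ×ˢ Finset.Icc (1 : ℤ) m).erase (1, 1), ⟨by simp, ?_⟩, ?_⟩
  · rintro ⟨a, b⟩ hp
    simp only [Finset.mem_erase, Finset.mem_product, Finset.mem_Icc] at hp
    exact ⟨hp.2.1.1, hp.2.1.2, hp.2.2.1, hp.2.2.2⟩
  · rintro ⟨a, b⟩ ⟨h1, h2, h3, h4⟩ hs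
    have : ((a, b) : Sq) = (1, 1) := by
      by_contra hne
      apply hs
      simp only [Finset.mem_erase, Finset.mem_product, Finset.mem_Icc]
      exact ⟨hne, ⟨h1, h2⟩, h3, h4⟩
    rw [this]
    exact Relation.ReflTransGen.refl

theorem exists_block_next (n m : ℕ) (B : Finset Sq) (hB : SolvesStop n m B) (s : Sq)
    (h1 : 2 ≤ s.1) (h2 : s.1 + 1 ≤ n) (h3 : 2 ≤ s.2) (h4 : s.2 + 1 ≤ m) (hs : s ∉ B) :
    ∃ d ∈ dirs4, s + d ∈ B := by
  have hr := hB.2 s ⟨by omega, by omega, by omega, by omega⟩ hs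
  rcases Relation.ReflTransGen.cases_tail hr with h | ⟨p, -, d, hd, k, ⟨-, hk⟩, hq⟩
  · rw [h] at h1
    norm_num at h1
  · refine ⟨d, hd, ?_⟩
    have he : p + ((k : ℤ) + 1) • d = s + d := by
      rw [hq, add_smul, one_smul, add_assoc]
    rw [he] at hk
    by_contra hn
    apply hk
    refine ⟨?_, hn⟩
    simp only [dirs4, Set.mem_insert_iff, Set.mem_singleton_iff] at hd
    rcases hd with rfl | rfl | rfl | rfl <;>
      refine ⟨?_, ?_, ?_, ?_⟩ <;> simp only [Prod.fst_add, Prod.snd_add] <;> omega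

/-- For all `n ≥ m ≥ 3`, the block-stop game on `G_{n,m}` needs at least
`γ(G_{n-2,m-2})` blocks, the domination number of the `(n-2) × (m-2)` grid graph. -/
theorem stmt12 (n m : ℕ) (hm : 3 ≤ m) (hmn : m ≤ n) :
    gamma (gridGraph (n - 2) (m - 2)) ≤ optSB n m := by
  classical
  have hn : 3 ≤ n := hm.trans hmn
  obtain ⟨B₀, hB₀⟩ := solvesStop_full n m
  refine le_csInf ⟨_, B₀, hB₀, rfl⟩ ?_
  rintro _ ⟨B, hB, rfl⟩
  refine le_trans (Nat.sInf_le ⟨B.image (clampSq n m hn hm), ?_, rfl⟩) Finset.card_image_le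
  rintro ⟨⟨a, ha⟩, ⟨b, hb⟩⟩ hv
  have hs : (((a : ℤ) + 2, (b : ℤ) + 2) : Sq) ∉ B := by
    intro hs
    apply hv
    refine Finset.mem_image.2 ⟨_, hs, ?_⟩
    simp only [clampSq, Prod.mk.injEq, Fin.mk.injEq]
    omega
  obtain ⟨d, hd, hb'⟩ := exists_block_next n m B hB _ (by simp) (by simp only; omega)
    (by simp) (by simp only; omega) hs
  have hmem := Finset.mem_image_of_mem (clampSq n m hn hm) hb'
  refine ⟨_, hmem, ?_⟩
  simp only [dirs4, Set.mem_insert_iff, Set.mem_singleton_iff] at hd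
  rw [gridGraph, SimpleGraph.fromRel_adj]
  refine ⟨fun h => hv (by rw [h]; exact hmem), ?_⟩
  have hne' : ¬ ((⟨a, ha⟩, ⟨b, hb⟩) : Fin (n - 2) × Fin (m - 2)) =
      clampSq n m hn hm (((a : ℤ) + 2, (b : ℤ) + 2) + d) := 
    fun h => hv (by rw [h]; exact hmem)
  clear hmem hv hb'
  rcases hd with rfl | rfl | rfl | rfl <;>
    simp only [clampSq, Prod.mk_add_mk, Prod.mk.injEq, Fin.mk.injEq] at hne' ⊢ <;> omega
end

section
/- There exist constants C > 0 and N such that for all n ≥ m ≥ N, the minimum number of blocks in a solution of the block-stop sliding game on the rectangular grid satisfies |opt^S_B(G_{n,m}) − nm/5| ≤ C·(m+n); that is, opt^S_B(G_{n,m}) = nm/5 + O(m+n). -/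
namespace Stop14

/-- Free squares of the explicit construction. -/
def fr (n m i j : ℤ) : Prop :=
  1 ≤ i ∧ i ≤ n ∧ 1 ≤ j ∧ j ≤ m ∧ (i + 2 * j + 3) % 5 ≠ 0 ∧
    ¬ (j = 1 ∧ (i + 2 * j + 3) % 5 = 3) ∧ ¬ (j = m ∧ (i + 2 * j + 3) % 5 = 2) ∧
    ¬ (i = 1 ∧ (i + 2 * j + 3) % 5 = 4) ∧ ¬ (i = n ∧ (i + 2 * j + 3) % 5 = 1) ∧
    ¬ (i = n ∧ j = m ∧ (i + 2 * j + 3) % 5 = 3) ∧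
    ¬ (i = 1 ∧ j = m ∧ (i + 2 * j + 3) % 5 = 1) ∧
    ¬ (i = n ∧ j = 1 ∧ (i + 2 * j + 3) % 5 = 4)

open Classical in
/-- The blocks of the construction. -/
noncomputable def blk (n m : ℕ) : Finset Sq :=
  (Finset.Icc (1 : ℤ) n ×ˢ Finset.Icc (1 : ℤ) m).filter (fun p => ¬ fr n m p.1 p.2)

theorem free_iff (n m : ℕ) (p : Sq) : Free n m (blk n m) p ↔ fr n m p.1 p.2 := by
  unfold Free blk inGrid
  simp only [Finset.mem_filter, Finset.mem_product, Finset.mem_Icc]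
  constructor
  · rintro ⟨h, h'⟩
    by_contra hc
    exact h' ⟨⟨⟨h.1, h.2.1⟩, h.2.2⟩, hc⟩
  · intro h
    exact ⟨⟨h.1, h.2.1, h.2.2.1, h.2.2.2.1⟩, fun h' => h'.2 h⟩

theorem mv (n m : ℕ) (i j a b : ℤ) (hd : ((a, b) : Sq) ∈ dirs4) (k : ℕ)
    (h : ∀ t : ℤ, 0 ≤ t → t ≤ k → fr n m (i + t * a) (j + t * b))
    (h' : ¬ fr n m (i + (k + 1) * a) (j + (k + 1) * b)) (i' j' : ℤ)
    (hi : i' = i + k * a) (hj : j' = j + k * b)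
    (hr : Reaches n m (blk n m) (1, 1) (i, j)) : Reaches n m (blk n m) (1, 1) (i', j') := by
  refine Relation.ReflTransGen.tail hr ⟨(a, b), hd, k, ⟨?_, ?_⟩, ?_⟩
  · intro t ht
    rw [free_iff]
    simpa using h t (by positivity) (by exact_mod_cast ht)
  · rw [free_iff]
    simpa using h'
  · subst hi hj
    simp

theorem mvR {n m : ℕ} {i j : ℤ} (k : ℕ) {j' : ℤ} (hr : Reaches n m (blk n m) (1, 1) (i, j))
    (hj : j' = j + k) (h : ∀ t : ℤ, 0 ≤ t → t ≤ k → fr n m i (j + t))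
    (h' : ¬ fr n m i (j + k + 1)) : Reaches n m (blk n m) (1, 1) (i, j') := by
  refine mv n m i j 0 1 (by simp [dirs4]) k ?_ ?_ _ _ (by simp) (by simp [hj]) hr
  · simpa using h
  · simpa [add_assoc] using h'

theorem mvL {n m : ℕ} {i j : ℤ} (k : ℕ) {j' : ℤ} (hr : Reaches n m (blk n m) (1, 1) (i, j))
    (hj : j' = j - k) (h : ∀ t : ℤ, 0 ≤ t → t ≤ k → fr n m i (j - t))
    (h' : ¬ fr n m i (j - k - 1)) : Reaches n m (blk n m) (1, 1) (i, j') := by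
  refine mv n m i j 0 (-1) (by simp [dirs4]) k ?_ ?_ _ _ (by simp) (by rw [hj]; ring) hr
  · simpa [sub_eq_add_neg] using h
  · have e : j + ((k : ℤ) + 1) * (-1) = j - k - 1 := by ring
    rw [e]; simpa using h'

theorem mvD {n m : ℕ} {i j : ℤ} (k : ℕ) {i' : ℤ} (hr : Reaches n m (blk n m) (1, 1) (i, j))
    (hj : i' = i + k) (h : ∀ t : ℤ, 0 ≤ t → t ≤ k → fr n m (i + t) j)
    (h' : ¬ fr n m (i + k + 1) j) : Reaches n m (blk n m) (1, 1) (i', j) := by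
  refine mv n m i j 1 0 (by simp [dirs4]) k ?_ ?_ _ _ (by simp [hj]) (by simp) hr
  · simpa using h
  · simpa [add_assoc] using h'

theorem mvU {n m : ℕ} {i j : ℤ} (k : ℕ) {i' : ℤ} (hr : Reaches n m (blk n m) (1, 1) (i, j))
    (hj : i' = i - k) (h : ∀ t : ℤ, 0 ≤ t → t ≤ k → fr n m (i - t) j)
    (h' : ¬ fr n m (i - k - 1) j) : Reaches n m (blk n m) (1, 1) (i', j) := by
  refine mv n m i j (-1) 0 (by simp [dirs4]) k ?_ ?_ _ _ (by rw [hj]; ring) (by simp) hr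
  · simpa [sub_eq_add_neg] using h
  · have e : i + ((k : ℤ) + 1) * (-1) = i - k - 1 := by ring
    rw [e]; simpa using h'

theorem frI {n m i j : ℤ} (h1 : 1 ≤ i) (h2 : i ≤ n) (h3 : 1 ≤ j) (h4 : j ≤ m)
    (h5 : (i + 2 * j + 3) % 5 ≠ 0) (h6 : (i + 2 * j + 3) % 5 = 3 → 1 < j ∧ (i < n ∨ j < m))
    (h7 : (i + 2 * j + 3) % 5 = 2 → j < m) (h8 : (i + 2 * j + 3) % 5 = 4 → 1 < i ∧ (i < n ∨ 1 < j))
    (h9 : (i + 2 * j + 3) % 5 = 1 → i < n ∧ (1 < i ∨ j < m)) : fr n m i j := by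
  unfold fr
  refine ⟨h1, h2, h3, h4, h5, ?_, ?_, ?_, ?_, ?_, ?_, ?_⟩ <;> omega

theorem frE {n m i j : ℤ} (h : fr n m i j) : (1 ≤ i ∧ i ≤ n ∧ 1 ≤ j ∧ j ≤ m) ∧
    (i + 2 * j + 3) % 5 ≠ 0 ∧ ((i + 2 * j + 3) % 5 = 3 → 1 < j) := by
  unfold fr at h
  obtain ⟨h1, h2, h3, h4, h5, h6, -⟩ := h
  refine ⟨⟨h1, h2, h3, h4⟩, h5, ?_⟩
  omega

set_option maxHeartbeats 8000000 in
/-- All free squares of residue 2 are reachable. -/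
theorem reach2 {n m : ℕ} (hn : 5 ≤ n) (hm : 5 ≤ m) (N : ℕ) : ∀ i j : ℤ, i + j ≤ N → 1 ≤ i →
    i ≤ n → 1 ≤ j → j < m → (i + 2 * j + 3) % 5 = 2 →
    Reaches n m (blk n m) (1, 1) (i, j) := by
  induction N with
  | zero => intro i j; omega
  | succ N ih =>
    intro i j hN h1 h2 h3 h4 hr
    push_cast at hN
    by_cases hi : 3 ≤ i
    · by_cases hj : 3 ≤ j
      · have a0 := ih (i - 1) (j - 2) (by omega) (by omega) (by omega) (by omega) (by omega)
          (by omega)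
        have a1 := mvR (j' := j + 1) 3 a0 (by omega)
          (by intro t t0 t1; apply frI <;> omega) (by intro hf; have := frE hf; omega)
        have a2 := mvD (i' := i) 1 a1 (by omega)
          (by intro t t0 t1; apply frI <;> omega) (by intro hf; have := frE hf; omega)
        exact mvL 1 a2 (by omega)
          (by intro t t0 t1; apply frI <;> omega) (by intro hf; have := frE hf; omega)
      · have a0 := ih (i - 2) (j + 1) (by omega) (by omega) (by omega) (by omega) (by omega)
          (by omega)
        have a1 := mvD (i' := i) 2 a0 (by omega)
          (by intro t t0 t1; apply frI <;> omega) (by intro hf; have := frE hf; omega)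
        exact mvL 1 a1 (by omega)
          (by intro t t0 t1; apply frI <;> omega) (by intro hf; have := frE hf; omega)
    · by_cases hj : 4 ≤ j
      · by_cases hi1 : i = 1
        · subst hi1
          have a0 := ih 2 (j - 3) (by omega) (by omega) (by omega) (by omega) (by omega)
            (by omega)
          have a1 := mvR (j' := j) 3 a0 (by omega)
            (by intro t t0 t1; apply frI <;> omega) (by intro hf; have := frE hf; omega)
          exact mvU 1 a1 (by omega)
            (by intro t t0 t1; apply frI <;> omega) (by intro hf; have := frE hf; omega)
        · obtain rfl : i = 2 := by omega
          have a0 := ih 3 (j - 3) (by omega) (by omega) (by omega) (by omega) (by omega)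
            (by omega)
          have a1 := mvR (j' := j) 3 a0 (by omega)
            (by intro t t0 t1; apply frI <;> omega) (by intro hf; have := frE hf; omega)
          have a2 := mvU (i' := 1) 2 a1 (by omega)
            (by intro t t0 t1; apply frI <;> omega) (by intro hf; have := frE hf; omega)
          have a3 := mvR (j' := j + 1) 1 a2 (by omega)
            (by intro t t0 t1; apply frI <;> omega) (by intro hf; have := frE hf; omega)
          have a4 := mvD (i' := 2) 1 a3 (by omega)
            (by intro t t0 t1; apply frI <;> omega) (by intro hf; have := frE hf; omega)
          exact mvL 1 a4 (by omega)
            (by intro t t0 t1; apply frI <;> omega) (by intro hf; have := frE hf; omega)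
      · obtain rfl : i = 2 := by omega
        obtain rfl : j = 1 := by omega
        exact mvD (i := 1) 1 Relation.ReflTransGen.refl (by omega)
          (by intro t t0 t1; apply frI <;> omega) (by intro hf; have := frE hf; omega)

set_option maxHeartbeats 8000000 in
theorem reach {n m : ℕ} (hn : 5 ≤ n) (hm : 5 ≤ m) (i j : ℤ) (h : fr n m i j) :
    Reaches n m (blk n m) (1, 1) (i, j) := by
  have R2 : ∀ i j : ℤ, 1 ≤ i → i ≤ n → 1 ≤ j → j < m → (i + 2 * j + 3) % 5 = 2 →
      Reaches n m (blk n m) (1, 1) (i, j) := fun i j h1 h2 h3 h4 h5 =>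
    reach2 hn hm (i + j).toNat i j (by omega) h1 h2 h3 h4 h5
  unfold fr at h
  have hc : (i + 2 * j + 3) % 5 = 1 ∨ (i + 2 * j + 3) % 5 = 2 ∨ (i + 2 * j + 3) % 5 = 3 ∨
    (i + 2 * j + 3) % 5 = 4 := by omega
  rcases hc with hr | hr | hr | hr
  · by_cases hj : j < m
    · exact mvU 1 (R2 (i + 1) j (by omega) (by omega) (by omega) (by omega) (by omega))
        (by omega)
        (by intro t t0 t1; apply frI <;> omega) (by intro hf; have := frE hf; omega)
    · exact mvR 2 (R2 i (j - 2) (by omega) (by omega) (by omega) (by omega) (by omega))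
        (by omega)
        (by intro t t0 t1; apply frI <;> omega) (by intro hf; have := frE hf; omega)
  · exact R2 i j (by omega) (by omega) (by omega) (by omega) (by omega)
  · by_cases hi : i < n
    · have a0 := R2 (i + 1) (j - 1) (by omega) (by omega) (by omega) (by omega) (by omega)
      have a1 := mvU (i' := i) 1 a0 (by omega)
        (by intro t t0 t1; apply frI <;> omega) (by intro hf; have := frE hf; omega)
      exact mvR 1 a1 (by omega)
        (by intro t t0 t1; apply frI <;> omega) (by intro hf; have := frE hf; omega)
    · exact mvD 1 (R2 (i - 1) j (by omega) (by omega) (by omega) (by omega) (by omega))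
        (by omega)
        (by intro t t0 t1; apply frI <;> omega) (by intro hf; have := frE hf; omega)
  · by_cases hj : 2 ≤ j
    · have a0 := R2 i (j - 1) (by omega) (by omega) (by omega) (by omega) (by omega)
      have a1 := mvU (i' := i - 1) 1 a0 (by omega)
        (by intro t t0 t1; apply frI <;> omega) (by intro hf; have := frE hf; omega)
      have a2 := mvR (j' := j) 1 a1 (by omega)
        (by intro t t0 t1; apply frI <;> omega) (by intro hf; have := frE hf; omega)
      exact mvD 1 a2 (by omega)
        (by intro t t0 t1; apply frI <;> omega) (by intro hf; have := frE hf; omega)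
    · have a0 := R2 (i + 1) (j + 1) (by omega) (by omega) (by omega) (by omega) (by omega)
      have a1 := mvU (i' := i) 1 a0 (by omega)
        (by intro t t0 t1; apply frI <;> omega) (by intro hf; have := frE hf; omega)
      exact mvL 1 a1 (by omega)
        (by intro t t0 t1; apply frI <;> omega) (by intro hf; have := frE hf; omega)

theorem solves {n m : ℕ} (hn : 5 ≤ n) (hm : 5 ≤ m) : SolvesStop n m (blk n m) := by
  refine ⟨⟨?_, ?_⟩, ?_⟩
  · have : Free n m (blk n m) (1, 1) := by
      rw [free_iff]; unfold fr; simp only; omega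
    exact this.2
  · intro p hp
    simp only [blk, Finset.mem_filter, Finset.mem_product, Finset.mem_Icc] at hp
    exact ⟨hp.1.1.1, hp.1.1.2, hp.1.2.1, hp.1.2.2⟩
  · rintro ⟨i, j⟩ hg hb
    exact reach hn hm i j ((free_iff n m (i, j)).1 ⟨hg, hb⟩)

/-- The squares on the border of the grid. -/
noncomputable def bord (n m : ℕ) : Finset Sq :=
  (({1, (n : ℤ)} : Finset ℤ) ×ˢ Finset.Icc (1 : ℤ) m) ∪
    (Finset.Icc (1 : ℤ) n ×ˢ ({1, (m : ℤ)} : Finset ℤ))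

theorem bord_card (n m : ℕ) : (bord n m).card ≤ 2 * m + n * 2 := by
  refine (Finset.card_union_le _ _).trans ?_
  rw [Finset.card_product, Finset.card_product]
  simp only [Int.card_Icc]
  have h1 := Finset.card_le_two (a := (1 : ℤ)) (b := (n : ℤ))
  have h2 := Finset.card_le_two (a := (1 : ℤ)) (b := (m : ℤ))
  refine add_le_add (Nat.mul_le_mul h1 (by omega)) (Nat.mul_le_mul (by omega) h2)

theorem row_card (m : ℕ) (i : ℤ) :
    ((Finset.Icc (1 : ℤ) m).filter (fun j => (i + 2 * j + 3) % 5 = 0)).card ≤ m / 5 + 1 := by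
  have : ((Finset.Icc (1 : ℤ) m).filter (fun j => (i + 2 * j + 3) % 5 = 0)).card ≤
      (Finset.Icc (0 : ℤ) ((m / 5 : ℕ) : ℤ)).card := by
    refine Finset.card_le_card_of_injOn (fun j => j / 5) ?_ ?_
    · intro j hj
      simp only [Finset.coe_filter, Finset.mem_Icc, Set.mem_ofPred_eq] at hj
      simp only [Finset.coe_Icc, Set.mem_Icc]
      omega
    · intro j hj j' hj' h
      simp only [Finset.coe_filter, Finset.mem_Icc, Set.mem_ofPred_eq] at hj hj' h
      omega
  rw [Int.card_Icc] at this
  omega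

theorem blk_card (n m : ℕ) : (blk n m).card ≤ n * (m / 5 + 1) + (2 * m + n * 2) := by
  have hsub : blk n m ⊆
      ((Finset.Icc (1 : ℤ) n).biUnion fun i =>
        ((Finset.Icc (1 : ℤ) m).filter (fun j => (i + 2 * j + 3) % 5 = 0)).image
          (fun j => ((i, j) : Sq))) ∪ bord n m := by
    rintro ⟨i, j⟩ hp
    simp only [blk, Finset.mem_filter, Finset.mem_product, Finset.mem_Icc] at hp
    obtain ⟨⟨h1, h2⟩, h3⟩ := hp
    simp only [bord, Finset.mem_union, Finset.mem_biUnion, Finset.mem_image, Finset.mem_filter,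
      Finset.mem_product, Finset.mem_Icc, Finset.mem_insert, Finset.mem_singleton, Prod.mk.injEq]
    by_cases h0 : (i + 2 * j + 3) % 5 = 0
    · exact Or.inl ⟨i, h1, j, ⟨h2, h0⟩, rfl, rfl⟩
    · right
      unfold fr at h3
      omega
  refine (Finset.card_le_card hsub).trans ((Finset.card_union_le _ _).trans
    (add_le_add ?_ (bord_card n m)))
  refine (Finset.card_biUnion_le_card_mul _ _ (m / 5 + 1) ?_).trans ?_
  · intro i _
    exact Finset.card_image_le.trans (row_card m i)
  · simp

/-- A square on which the robot stops has a non-free neighbour. -/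
theorem stop_nbr {n m : ℕ} {B : Finset Sq} {p q : Sq} (h : Move n m B p q) :
    ∃ d ∈ dirs4, ¬ Free n m B (q + d) := by
  obtain ⟨d, hd, k, hs, rfl⟩ := h
  refine ⟨d, hd, ?_⟩
  have := hs.2
  rwa [add_smul, one_smul, ← add_assoc] at this

theorem lower {n m : ℕ} {B : Finset Sq} (h : SolvesStop n m B) :
    n * m ≤ 5 * B.card + (2 * m + n * 2 + 1) := by
  have hsub : Finset.Icc (1 : ℤ) n ×ˢ Finset.Icc (1 : ℤ) m ⊆
      (({(0, 0), (1, 0), (-1, 0), (0, 1), (0, -1)} : Finset Sq) ×ˢ B).image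
        (fun x => x.2 - x.1) ∪ (bord n m ∪ {((1, 1) : Sq)}) := by
    rintro ⟨i, j⟩ hp
    simp only [Finset.mem_product, Finset.mem_Icc] at hp
    have hg : inGrid n m (i, j) := ⟨hp.1.1, hp.1.2, hp.2.1, hp.2.2⟩
    by_cases hB : ((i, j) : Sq) ∈ B
    · refine Finset.mem_union_left _ (Finset.mem_image.2 ⟨((0, 0), (i, j)), ?_, by simp⟩)
      simp [hB]
    · rcases Relation.ReflTransGen.cases_tail (h.2 _ hg hB) with he | ⟨c, -, hc⟩
      · refine Finset.mem_union_right _ (Finset.mem_union_right _ ?_)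
        simp [he]
      · obtain ⟨d, hd, hf⟩ := stop_nbr hc
        by_cases hdB : ((i, j) : Sq) + d ∈ B
        · refine Finset.mem_union_left _ (Finset.mem_image.2 ⟨(d, (i, j) + d), ?_, by simp⟩)
          simp only [dirs4, Set.mem_insert_iff, Set.mem_singleton_iff] at hd
          simp only [Finset.mem_product, Finset.mem_insert, Finset.mem_singleton]
          exact ⟨Or.inr hd, hdB⟩
        · refine Finset.mem_union_right _ (Finset.mem_union_left _ ?_)
          have hng : ¬ inGrid n m ((i, j) + d) := fun hh => hf ⟨hh, hdB⟩
          simp only [dirs4, Set.mem_insert_iff, Set.mem_singleton_iff] at hd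
          simp only [bord, Finset.mem_union, Finset.mem_product, Finset.mem_Icc,
            Finset.mem_insert, Finset.mem_singleton]
          unfold inGrid at hng
          rcases hd with rfl | rfl | rfl | rfl <;> simp only [Prod.mk_add_mk] at hng <;> omega
  have h1 := Finset.card_le_card hsub
  rw [Finset.card_product] at h1
  simp only [Int.card_Icc, add_sub_cancel_right, Int.toNat_natCast] at h1
  refine h1.trans ((Finset.card_union_le _ _).trans (add_le_add ?_ ?_))
  · refine Finset.card_image_le.trans ?_
    rw [Finset.card_product]
    exact Nat.mul_le_mul_right _ Finset.card_le_five
  · refine (Finset.card_union_le _ _).trans (add_le_add (bord_card n m) (by simp))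

end Stop14

/-- Asymptotically, `opt^S_B(G_{n,m}) = nm/5 + O(m+n)`: there are constants `C > 0`
and `N` such that `|opt^S_B(G_{n,m}) - nm/5| ≤ C (m+n)` for all `n ≥ m ≥ N`. -/
theorem stmt14 :
    ∃ C : ℝ, 0 < C ∧ ∃ N : ℕ, ∀ n m : ℕ, N ≤ m → m ≤ n →
      |(optSB n m : ℝ) - (n : ℝ) * m / 5| ≤ C * ((m : ℝ) + n) := by
  refine ⟨3, by norm_num, 5, fun n m hm hmn => ?_⟩
  have hs := Stop14.solves (hm.trans hmn) hm
  have hup : optSB n m ≤ (Stop14.blk n m).card := Nat.sInf_le ⟨_, hs, rfl⟩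
  have hup2 := hup.trans (Stop14.blk_card n m)
  obtain ⟨B, hB, hcard⟩ : optSB n m ∈ {k | ∃ B : Finset Sq, SolvesStop n m B ∧ B.card = k} :=
    Nat.sInf_mem ⟨_, _, hs, rfl⟩
  have hlo := Stop14.lower hB
  rw [hcard] at hlo
  have hlo' : (n : ℝ) * m ≤ 5 * optSB n m + (2 * m + n * 2 + 1) := by exact_mod_cast hlo
  have hup' : (optSB n m : ℝ) ≤ n * ((m / 5 : ℕ) + 1) + (2 * m + n * 2) := by
    exact_mod_cast hup2
  have hdiv : ((m / 5 : ℕ) : ℝ) ≤ (m : ℝ) / 5 := by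
    simpa using (Nat.cast_div_le (α := ℝ) (m := m) (n := 5))
  have hn0 : (0 : ℝ) ≤ n := Nat.cast_nonneg n
  have hm5 : (5 : ℝ) ≤ m := by exact_mod_cast hm
  have hmul := mul_le_mul_of_nonneg_left hdiv hn0
  rw [abs_le]
  constructor
  · linarith
  · nlinarith
end

section
/- Let n ≥ m ≥ 3 and let W be a set of walls on the grid G_{n,m} such that for every column index j with 2 ≤ j ≤ m−1, W contains at least one vertical wall adjacent to column C_j (i.e., every such column is covered by W). Then |W| ≥ ρ(P_{m−2}) = ⌈(m−2)/2⌉, the edge covering number of the path on m−2 vertices. -/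
/-- A wall, recorded as the ordered pair of the two adjacent grid squares it
separates (right neighbour for a vertical wall, lower neighbour for a horizontal
wall).  A vertical wall `(p, p + (0,1))` separates two horizontally adjacent squares;
a horizontal wall `(p, p + (1,0))` separates two vertically adjacent squares. -/
def IsWall (n m : ℕ) (w : Sq × Sq) : Prop :=
  inGrid n m w.1 ∧ inGrid n m w.2 ∧
    (w.2 = w.1 + ((0 : ℤ), (1 : ℤ)) ∨ w.2 = w.1 + ((1 : ℤ), (0 : ℤ)))

/-- All members of `W` are genuine walls of the grid `G_{n,m}`. -/
def WallsOK (n m : ℕ) (W : Finset (Sq × Sq)) : Prop := ∀ w ∈ W, IsWall n m w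

/-- There is a wall of `W` on the common side of the squares `p` and `q`. -/
def WallBetween (W : Finset (Sq × Sq)) (p q : Sq) : Prop :=
  (p, q) ∈ W ∨ (q, p) ∈ W

/-- `S` is an edge cover of `G`: a set of edges of `G` such that every vertex is
incident to at least one edge of `S`. -/
def IsEdgeCover {V : Type*} (G : SimpleGraph V) (S : Finset (Sym2 V)) : Prop :=
  (∀ e ∈ S, e ∈ G.edgeSet) ∧ ∀ v : V, ∃ e ∈ S, v ∈ e

/-- The edge covering number `ρ(G)`. -/
noncomputable def edgeCoverNumber {V : Type*} (G : SimpleGraph V) : ℕ :=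
  sInf {k | ∃ S : Finset (Sym2 V), IsEdgeCover G S ∧ S.card = k}

theorem edgeCoverNumber_path_le (k : ℕ) :
    edgeCoverNumber (SimpleGraph.pathGraph k) ≤ (k + 1) / 2 := by
  classical
  by_cases hk : k < 2
  · unfold edgeCoverNumber
    by_cases hne : k = 0
    · subst hne
      refine Nat.sInf_le ⟨∅, ⟨by simp, fun v => v.elim0⟩, by simp⟩
    · have h1 : k = 1 := by omega
      subst h1
      have : {c | ∃ S : Finset (Sym2 (Fin 1)),
          IsEdgeCover (SimpleGraph.pathGraph 1) S ∧ S.card = c} = ∅ := by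
        ext c
        simp only [Set.mem_setOf_eq, Set.mem_empty_iff_false, iff_false]
        rintro ⟨S, ⟨h1, h2⟩, -⟩
        obtain ⟨e, he, -⟩ := h2 0
        have := h1 e he
        induction e using Sym2.ind with
        | _ x y =>
          rw [SimpleGraph.mem_edgeSet] at this
          exact this.ne (Subsingleton.elim _ _)
      rw [this]
      simp
  · obtain ⟨l, rfl⟩ : ∃ l, k = l + 2 := ⟨k - 2, by omega⟩
    let f : ℕ → Sym2 (Fin (l + 2)) := fun i =>
      s(⟨min (2 * i) l, by omega⟩, ⟨min (2 * i) l + 1, by omega⟩)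
    have hcard : ((Finset.range ((l + 2 + 1) / 2)).image f).card ≤ (l + 2 + 1) / 2 := by
      simpa using Finset.card_image_le (s := Finset.range ((l + 2 + 1) / 2)) (f := f)
    refine le_trans (Nat.sInf_le ⟨(Finset.range ((l + 2 + 1) / 2)).image f, ⟨?_, ?_⟩, rfl⟩) hcard
    · intro e he
      obtain ⟨i, -, rfl⟩ := Finset.mem_image.1 he
      simp only [f, SimpleGraph.mem_edgeSet, SimpleGraph.pathGraph_adj]
      simp
    · intro v
      have hv := v.2
      refine ⟨f (v.1 / 2), Finset.mem_image_of_mem _ (Finset.mem_range.2 (by omega)), ?_⟩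
      simp only [f, Sym2.mem_iff, Fin.ext_iff]
      omega

/-- If `n ≥ m ≥ 3` and `W` is a set of walls on `G_{n,m}` such that every column
`C_j` with `2 ≤ j ≤ m-1` is covered by `W` (i.e. some vertical wall of `W` is
adjacent to column `C_j`), then `|W| ≥ ρ(P_{m-2}) = ⌈(m-2)/2⌉`. -/
theorem stmt15 (n m : ℕ) (hm : 3 ≤ m) (hmn : m ≤ n) (W : Finset (Sq × Sq))
    (hW : WallsOK n m W)
    (hcov : ∀ j : ℤ, 2 ≤ j → j ≤ (m : ℤ) - 1 →
      ∃ w ∈ W, w.2 = w.1 + ((0 : ℤ), (1 : ℤ)) ∧ (w.1.2 = j ∨ w.2.2 = j)) :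
    edgeCoverNumber (SimpleGraph.pathGraph (m - 2)) ≤ W.card ∧
    (m - 2 + 1) / 2 ≤ W.card := by
  have key : (m - 2 + 1) / 2 ≤ W.card := by
    classical
    have hsub : Finset.Icc (2 : ℤ) ((m : ℤ) - 1) ⊆
        W.image (fun w => w.1.2) ∪ W.image (fun w => w.2.2) := by
      intro j hj
      rw [Finset.mem_Icc] at hj
      obtain ⟨w, hw, -, h | h⟩ := hcov j hj.1 hj.2
      · exact Finset.mem_union_left _ (Finset.mem_image.2 ⟨w, hw, h⟩)
      · exact Finset.mem_union_right _ (Finset.mem_image.2 ⟨w, hw, h⟩)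
    have h1 := Finset.card_le_card hsub
    have h2 := Finset.card_union_le (W.image (fun w => w.1.2)) (W.image (fun w => w.2.2))
    have h3 := Finset.card_image_le (s := W) (f := fun w => w.1.2)
    have h4 := Finset.card_image_le (s := W) (f := fun w => w.2.2)
    rw [Int.card_Icc] at h1
    omega
  exact ⟨(edgeCoverNumber_path_le (m - 2)).trans key, key⟩
end

section
/- For all n ≥ m: if m ≥ 4 then the minimum number of walls in a solution of the wall-pass sliding game on the rectangular grid is opt^P_W(G_{n,m}) = ρ(P_{m−2}) = ⌈(m−2)/2⌉; if m = 3 then opt^P_W(G_{n,3}) = 1; and if m ≤ 2 then opt^P_W(G_{n,m}) = 0. -/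
/-- Sliding from `p` in direction `d`, with walls `W`, travels exactly `k` steps:
all squares along the way are on the grid, no crossed side carries a wall, and the
next side is a wall of `W` or lies on the grid boundary. -/
def IsSlideW (n m : ℕ) (W : Finset (Sq × Sq)) (p d : Sq) (k : ℕ) : Prop :=
  (∀ t : ℕ, t ≤ k → inGrid n m (p + (t : ℤ) • d)) ∧
  (∀ t : ℕ, t < k → ¬ WallBetween W (p + (t : ℤ) • d) (p + ((t : ℤ) + 1) • d)) ∧
  (¬ inGrid n m (p + ((k : ℤ) + 1) • d) ∨
    WallBetween W (p + (k : ℤ) • d) (p + ((k : ℤ) + 1) • d))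

/-- One move of the robot: slide from `p` in some axis direction, stopping at `q`. -/
def MoveW (n m : ℕ) (W : Finset (Sq × Sq)) (p q : Sq) : Prop :=
  ∃ d ∈ dirs4, ∃ k : ℕ, IsSlideW n m W p d k ∧ q = p + (k : ℤ) • d

/-- The robot, starting on `p`, can stop on `q` after a finite sequence of moves. -/
def ReachesW (n m : ℕ) (W : Finset (Sq × Sq)) : Sq → Sq → Prop :=
  Relation.ReflTransGen (MoveW n m W)

/-- The robot, starting on `p₀`, passes over the square `s`: during some move of a
finite sequence of moves it occupies or slides through `s`. -/
def PassesW (n m : ℕ) (W : Finset (Sq × Sq)) (p₀ s : Sq) : Prop :=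
  ∃ p, ReachesW n m W p₀ p ∧ ∃ d ∈ dirs4, ∃ k t : ℕ,
    IsSlideW n m W p d k ∧ t ≤ k ∧ s = p + (t : ℤ) • d

/-- `W` solves the wall-pass game on `G_{n,m}`: starting from `(1,1)`, the robot can
pass over every square of the grid. -/
def SolvesPassW (n m : ℕ) (W : Finset (Sq × Sq)) : Prop :=
  WallsOK n m W ∧ ∀ s : Sq, inGrid n m s → PassesW n m W (1, 1) s

/-- `opt^P_W(G_{n,m})`: the minimum number of walls solving the wall-pass game. -/
noncomputable def optPW (n m : ℕ) : ℕ :=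
  sInf {k | ∃ W : Finset (Sq × Sq), SolvesPassW n m W ∧ W.card = k}

theorem aux_card_le_two {α : Type*} [DecidableEq α] (s : Finset (Sq × Sq)) (f : Sq × Sq → Finset α)
    (hf : ∀ w ∈ s, (f w).card ≤ 2) (t : Finset α) (ht : t ⊆ s.biUnion f) : t.card ≤ s.card * 2 :=
  (Finset.card_le_card ht).trans (Finset.card_biUnion_le_card_mul s f 2 hf)

theorem col_avoid (n m : ℕ) (W : Finset (Sq × Sq)) (j : ℤ) (h2 : 2 ≤ j) (hm : j + 1 ≤ m)
    (hj : ∀ i : ℤ, ¬ WallBetween W (i, j) (i, j + 1) ∧ ¬ WallBetween W (i, j) (i, j - 1))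
    (p : Sq) (hp : ReachesW n m W (1, 1) p) : p.2 ≠ j := by
  unfold ReachesW at hp
  induction hp with
  | refl => simp; omega
  | @tail b c _ hbc ih =>
    obtain ⟨d, hd, k, ⟨h1, h3, h4⟩, rfl⟩ := hbc
    obtain ⟨x, y⟩ := b
    have hg := h1 k le_rfl
    intro he
    simp only [dirs4, Set.mem_insert_iff, Set.mem_singleton_iff] at hd
    rcases hd with rfl | rfl | rfl | rfl
    · simp at he ih; omega
    · simp at he ih; omega
    · have e1 : ((x, y) : Sq) + (k : ℤ) • ((0 : ℤ), (1 : ℤ)) = (x, j) := by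
        ext <;> simp at he ⊢; omega
      have e2 : ((x, y) : Sq) + ((k : ℤ) + 1) • ((0 : ℤ), (1 : ℤ)) = (x, j + 1) := by
        ext <;> simp at he ⊢; omega
      rw [e1] at hg
      rw [e1, e2] at h4
      rcases h4 with h4 | h4
      · apply h4; simp only [inGrid] at hg ⊢; omega
      · exact (hj x).1 h4
    · have e1 : ((x, y) : Sq) + (k : ℤ) • ((0 : ℤ), (-1 : ℤ)) = (x, j) := by
        ext <;> simp at he ⊢; omega
      have e2 : ((x, y) : Sq) + ((k : ℤ) + 1) • ((0 : ℤ), (-1 : ℤ)) = (x, j - 1) := by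
        ext <;> simp at he ⊢; omega
      rw [e1] at hg
      rw [e1, e2] at h4
      rcases h4 with h4 | h4
      · apply h4; simp only [inGrid] at hg ⊢; omega
      · exact (hj x).2 h4

theorem row_avoid (n m : ℕ) (W : Finset (Sq × Sq)) (i : ℤ) (h2 : 2 ≤ i) (hn : i + 1 ≤ n)
    (hi : ∀ j : ℤ, ¬ WallBetween W (i, j) (i + 1, j) ∧ ¬ WallBetween W (i, j) (i - 1, j))
    (p : Sq) (hp : ReachesW n m W (1, 1) p) : p.1 ≠ i := by
  unfold ReachesW at hp
  induction hp with
  | refl => simp; omega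
  | @tail b c _ hbc ih =>
    obtain ⟨d, hd, k, ⟨h1, h3, h4⟩, rfl⟩ := hbc
    obtain ⟨x, y⟩ := b
    have hg := h1 k le_rfl
    intro he
    simp only [dirs4, Set.mem_insert_iff, Set.mem_singleton_iff] at hd
    rcases hd with rfl | rfl | rfl | rfl
    · have e1 : ((x, y) : Sq) + (k : ℤ) • ((1 : ℤ), (0 : ℤ)) = (i, y) := by
        ext <;> simp at he ⊢; omega
      have e2 : ((x, y) : Sq) + ((k : ℤ) + 1) • ((1 : ℤ), (0 : ℤ)) = (i + 1, y) := by
        ext <;> simp at he ⊢; omega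
      rw [e1] at hg
      rw [e1, e2] at h4
      rcases h4 with h4 | h4
      · apply h4; simp only [inGrid] at hg ⊢; omega
      · exact (hi y).1 h4
    · have e1 : ((x, y) : Sq) + (k : ℤ) • ((-1 : ℤ), (0 : ℤ)) = (i, y) := by
        ext <;> simp at he ⊢; omega
      have e2 : ((x, y) : Sq) + ((k : ℤ) + 1) • ((-1 : ℤ), (0 : ℤ)) = (i - 1, y) := by
        ext <;> simp at he ⊢; omega
      rw [e1] at hg
      rw [e1, e2] at h4
      rcases h4 with h4 | h4
      · apply h4; simp only [inGrid] at hg ⊢; omega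
      · exact (hi y).2 h4
    · simp at he ih; omega
    · simp at he ih; omega

theorem lower_bound (n m : ℕ) (hmn : m ≤ n) (W : Finset (Sq × Sq)) (h : SolvesPassW n m W) :
    (m - 2 + 1) / 2 ≤ W.card := by
  have key : (∀ j : ℤ, 2 ≤ j → j + 1 ≤ m → ∃ i : ℤ,
        WallBetween W (i, j) (i, j + 1) ∨ WallBetween W (i, j) (i, j - 1)) ∨
      (∀ i : ℤ, 2 ≤ i → i + 1 ≤ n → ∃ j : ℤ,
        WallBetween W (i, j) (i + 1, j) ∨ WallBetween W (i, j) (i - 1, j)) := by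
    by_contra hc
    push Not at hc
    obtain ⟨⟨j, hj2, hjm, hj⟩, ⟨i, hi2, hin, hi⟩⟩ := hc
    obtain ⟨p, hp, d, hd, k, t, hs, ht, he⟩ := h.2 (i, j) (by simp only [inGrid]; omega)
    have hp1 := col_avoid n m W j hj2 hjm hj p hp
    have hp2 := row_avoid n m W i hi2 hin hi p hp
    have he1 := congrArg Prod.fst he
    have he2 := congrArg Prod.snd he
    simp only [dirs4, Set.mem_insert_iff, Set.mem_singleton_iff] at hd
    rcases hd with rfl | rfl | rfl | rfl <;> simp at he1 he2 <;> omega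
  rcases key with key | key
  · have := aux_card_le_two W (fun w => {w.1.2, w.2.2}) (fun w _ => Finset.card_le_two)
      (Finset.Icc (2 : ℤ) (m - 1)) (by
        intro j hj
        rw [Finset.mem_Icc] at hj
        obtain ⟨i, h1⟩ := key j (by omega) (by omega)
        simp only [Finset.mem_biUnion]
        rcases h1 with (h1 | h1) | (h1 | h1)
        all_goals exact ⟨_, h1, by simp⟩)
    rw [Int.card_Icc] at this
    omega
  · have := aux_card_le_two W (fun w => {w.1.1, w.2.1}) (fun w _ => Finset.card_le_two)
      (Finset.Icc (2 : ℤ) (n - 1)) (by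
        intro j hj
        rw [Finset.mem_Icc] at hj
        obtain ⟨i, h1⟩ := key j (by omega) (by omega)
        simp only [Finset.mem_biUnion]
        rcases h1 with (h1 | h1) | (h1 | h1)
        all_goals exact ⟨_, h1, by simp⟩)
    rw [Int.card_Icc] at this
    omega

/-- Row of the `k`-th wall. -/
def wrow (n : ℕ) (k : ℕ) : ℤ := if k % 2 = 1 then 1 else (n : ℤ)

/-- The optimal configuration. -/
def optW (n m : ℕ) : Finset (Sq × Sq) :=
  (Finset.Icc 1 ((m - 1) / 2)).image
    (fun k => (((wrow n k, 2 * (k : ℤ)), (wrow n k, 2 * (k : ℤ) + 1)) : Sq × Sq))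

theorem mem_optW (n m : ℕ) (a b c d : ℤ) : (((a, b), (c, d)) : Sq × Sq) ∈ optW n m ↔
    ∃ k : ℕ, 1 ≤ k ∧ k ≤ (m - 1) / 2 ∧ a = wrow n k ∧ b = 2 * k ∧ c = a ∧ d = b + 1 := by
  simp only [optW, Finset.mem_image, Finset.mem_Icc, Prod.mk.injEq]
  constructor
  · rintro ⟨k, h, ⟨h1, h2⟩, h3, h4⟩
    exact ⟨k, h.1, h.2, h1.symm, h2.symm, by omega, by omega⟩
  · rintro ⟨k, h, h', h1, h2, h3, h4⟩
    exact ⟨k, ⟨h, h'⟩, ⟨h1.symm, h2.symm⟩, by omega, by omega⟩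

theorem optW_card (n m : ℕ) : (optW n m).card = (m - 1) / 2 := by
  rw [optW, Finset.card_image_of_injective]
  · simp
  · intro a b h
    simp only [Prod.mk.injEq] at h
    omega

theorem slide_vert (n m : ℕ) (j : ℤ) (h1 : 1 ≤ j) (h2 : j ≤ m) (hn : 1 ≤ n) :
    IsSlideW n m (optW n m) (1, j) (1, 0) (n - 1) := by
  refine ⟨?_, ?_, Or.inl ?_⟩
  · intro t ht
    simp [inGrid]; omega
  · intro t ht
    simp only [WallBetween, Prod.smul_mk, Prod.mk_add_mk, mem_optW, smul_eq_mul]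
    rintro (⟨k, h⟩ | ⟨k, h⟩) <;> omega
  · simp [inGrid]; omega

theorem slide_vert' (n m : ℕ) (j : ℤ) (h1 : 1 ≤ j) (h2 : j ≤ m) (hn : 1 ≤ n) :
    IsSlideW n m (optW n m) (n, j) (-1, 0) (n - 1) := by
  refine ⟨?_, ?_, Or.inl ?_⟩
  · intro t ht
    simp [inGrid]; omega
  · intro t ht
    simp only [WallBetween, Prod.smul_mk, Prod.mk_add_mk, mem_optW, smul_eq_mul]
    rintro (⟨k, h⟩ | ⟨k, h⟩) <;> omega
  · simp [inGrid]; omega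

theorem wall_h (n m : ℕ) (i c : ℤ) : WallBetween (optW n m) (i, c) (i, c + 1) ↔
    ∃ k : ℕ, 1 ≤ k ∧ k ≤ (m - 1) / 2 ∧ i = wrow n k ∧ c = 2 * k := by
  simp only [WallBetween, mem_optW]
  constructor
  · rintro (⟨k, h⟩ | ⟨k, h⟩)
    · exact ⟨k, by tauto⟩
    · omega
  · rintro ⟨k, h⟩
    exact Or.inl ⟨k, by tauto⟩

theorem wall_symm (W : Finset (Sq × Sq)) (p q : Sq) : WallBetween W p q ↔ WallBetween W q p :=
  Or.comm

theorem move_right (n m : ℕ) (i a b : ℤ) (hi : 1 ≤ i) (hi' : i ≤ n) (ha : 1 ≤ a) (hab : a ≤ b)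
    (hb : b ≤ m) (hno : ∀ c, a ≤ c → c < b → ¬ WallBetween (optW n m) (i, c) (i, c + 1))
    (hend : b = m ∨ WallBetween (optW n m) (i, b) (i, b + 1)) :
    MoveW n m (optW n m) (i, a) (i, b) := by
  refine ⟨(0, 1), by simp [dirs4], (b - a).toNat, ⟨?_, ?_, ?_⟩, ?_⟩
  · intro t ht
    simp [inGrid]; omega
  · intro t ht
    have := hno (a + t) (by omega) (by omega)
    simpa [add_assoc] using this
  · rcases hend with h | h
    · left; simp [inGrid]; omega
    · right
      have e : ((b - a).toNat : ℤ) = b - a := by omega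
      rw [e]
      convert h using 2 <;> simp; ring
  · ext <;> simp; omega

theorem move_left (n m : ℕ) (i a b : ℤ) (hi : 1 ≤ i) (hi' : i ≤ n) (ha : 1 ≤ a) (hab : a ≤ b)
    (hb : b ≤ m) (hno : ∀ c, a ≤ c → c < b → ¬ WallBetween (optW n m) (i, c) (i, c + 1))
    (hend : a = 1 ∨ WallBetween (optW n m) (i, a - 1) (i, a - 1 + 1)) :
    MoveW n m (optW n m) (i, b) (i, a) := by
  refine ⟨(0, -1), by simp [dirs4], (b - a).toNat, ⟨?_, ?_, ?_⟩, ?_⟩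
  · intro t ht
    simp [inGrid]; omega
  · intro t ht
    have := hno (b - t - 1) (by omega) (by omega)
    rw [wall_symm] at this
    have e1 : ((i, b) : Sq) + (t : ℤ) • ((0 : ℤ), (-1 : ℤ)) = (i, b - t - 1 + 1) := by
      ext <;> simp; ring
    have e2 : ((i, b) : Sq) + ((t : ℤ) + 1) • ((0 : ℤ), (-1 : ℤ)) = (i, b - t - 1) := by
      ext <;> simp; ring
    rwa [e1, e2]
  · rcases hend with h | h
    · left; simp [inGrid]; omega
    · right
      have e : ((b - a).toNat : ℤ) = b - a := by omega
      rw [e]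
      rw [wall_symm] at h
      have e1 : ((i, b) : Sq) + (b - a) • ((0 : ℤ), (-1 : ℤ)) = (i, a - 1 + 1) := by
        ext <;> simp
      have e2 : ((i, b) : Sq) + (b - a + 1) • ((0 : ℤ), (-1 : ℤ)) = (i, a - 1) := by
        ext <;> simp; ring
      rwa [e1, e2]
  · ext <;> simp; omega

/-- Column `j` is reachable, at both ends. -/
def RC (n m : ℕ) (j : ℤ) : Prop :=
  ReachesW n m (optW n m) (1, 1) (1, j) ∧ ReachesW n m (optW n m) (1, 1) (n, j)

theorem RC_of (n m : ℕ) (hn : 1 ≤ n) (k : ℕ) (j : ℤ) (h1 : 1 ≤ j) (h2 : j ≤ m)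
    (h : ReachesW n m (optW n m) (1, 1) (wrow n k, j)) : RC n m j := by
  unfold wrow at h
  split_ifs at h
  · refine ⟨h, h.tail ⟨(1, 0), by simp [dirs4], n - 1, slide_vert n m j h1 h2 hn, ?_⟩⟩
    ext <;> simp; omega
  · refine ⟨h.tail ⟨(-1, 0), by simp [dirs4], n - 1, slide_vert' n m j h1 h2 hn, ?_⟩, h⟩
    ext <;> simp; omega

theorem RC_to {n m : ℕ} {j : ℤ} (h : RC n m j) (k : ℕ) :
    ReachesW n m (optW n m) (1, 1) (wrow n k, j) := by
  unfold wrow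
  split_ifs
  exacts [h.1, h.2]

theorem wrow_bd (n k : ℕ) (hn : 1 ≤ n) : 1 ≤ wrow n k ∧ wrow n k ≤ n := by
  unfold wrow; split_ifs <;> omega

theorem wrow_ne (n k : ℕ) (hn : 2 ≤ n) : wrow n (k + 1) ≠ wrow n k := by
  unfold wrow; split_ifs <;> omega

theorem RC_one (n m : ℕ) (hm : 1 ≤ m) (hmn : m ≤ n) : RC n m 1 :=
  RC_of n m (by omega) 1 1 le_rfl (by omega) Relation.ReflTransGen.refl

theorem RC_even (n m : ℕ) (hm : 1 ≤ m) (hmn : m ≤ n) (k : ℕ) (hk : k + 1 ≤ (m - 1) / 2) :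
    RC n m (2 * (k + 1 : ℕ)) := by
  have main : ∀ a : ℤ, RC n m a → 1 ≤ a → 2 * k ≤ a → a ≤ 2 * k + 2 → RC n m (2 * (k + 1 : ℕ)) := by
    intro a ha h1 h2 h3
    have hb := wrow_bd n (k + 1) (by omega)
    refine RC_of n m (by omega) (k + 1) _ (by omega) (by omega)
      ((RC_to ha (k + 1)).tail
        (move_right n m _ a _ hb.1 hb.2 h1 (by omega) (by omega) ?_ (Or.inr ?_)))
    · intro c hc hc'
      rw [wall_h]
      rintro ⟨l, hl1, hl2, hl3, hl4⟩
      obtain rfl : l = k := by omega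
      exact wrow_ne n l (by omega) hl3
    · rw [wall_h]
      exact ⟨k + 1, by omega, hk, rfl, rfl⟩
  induction k with
  | zero => exact main 1 (RC_one n m hm hmn) (by omega) (by simp) (by simp)
  | succ k ih =>
    refine main _ (ih (by omega) ?_) (by omega) (by omega) (by omega)
    intro a ha h1 h2 h3
    have hb := wrow_bd n (k + 1) (by omega)
    refine RC_of n m (by omega) (k + 1) _ (by omega) (by omega)
      ((RC_to ha (k + 1)).tail
        (move_right n m _ a _ hb.1 hb.2 h1 (by omega) (by omega) ?_ (Or.inr ?_)))
    · intro c hc hc'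
      rw [wall_h]
      rintro ⟨l, hl1, hl2, hl3, hl4⟩
      obtain rfl : l = k := by omega
      exact wrow_ne n l (by omega) hl3
    · rw [wall_h]
      exact ⟨k + 1, by omega, by omega, rfl, rfl⟩

theorem RC_last (n m : ℕ) (hm : 1 ≤ m) (hmn : m ≤ n) : RC n m m := by
  have main : ∀ a : ℤ, RC n m a → 1 ≤ a → a ≤ m → 2 * ((m - 1) / 2 : ℕ) ≤ a → RC n m m := by
    intro a ha h1 h2 h3
    have hb := wrow_bd n ((m - 1) / 2 + 1) (by omega)
    refine RC_of n m (by omega) ((m - 1) / 2 + 1) _ (by omega) (by omega)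
      ((RC_to ha ((m - 1) / 2 + 1)).tail
        (move_right n m _ a _ hb.1 hb.2 h1 h2 le_rfl ?_ (Or.inl rfl)))
    intro c hc hc'
    rw [wall_h]
    rintro ⟨l, hl1, hl2, hl3, hl4⟩
    obtain rfl : l = (m - 1) / 2 := by omega
    exact wrow_ne n _ (by omega) hl3
  rcases Nat.eq_zero_or_pos ((m - 1) / 2) with h | h
  · exact main 1 (RC_one n m hm hmn) le_rfl (by omega) (by omega)
  · have := RC_even n m hm hmn ((m - 1) / 2 - 1) (by omega)
    exact main _ this (by omega) (by omega) (by omega)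

theorem RC_odd (n m : ℕ) (hm : 1 ≤ m) (hmn : m ≤ n) (e k : ℕ) (hk : k + e = (m - 1) / 2)
    (hk1 : 1 ≤ k) : RC n m (2 * k + 1) := by
  have main : ∀ a : ℤ, RC n m a → a ≤ m → 2 * k + 1 ≤ a → a ≤ 2 * k + 3 →
      RC n m (2 * k + 1) := by
    intro a ha h1 h2 h3
    have hb := wrow_bd n k (by omega)
    refine RC_of n m (by omega) k _ (by omega) (by omega)
      ((RC_to ha k).tail
        (move_left n m _ _ a hb.1 hb.2 (by omega) (by omega) (by omega) ?_ (Or.inr ?_)))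
    · intro c hc hc'
      rw [wall_h]
      rintro ⟨l, hl1, hl2, hl3, hl4⟩
      obtain rfl : l = k + 1 := by omega
      exact wrow_ne n k (by omega) hl3.symm
    · rw [wall_h]
      exact ⟨k, by omega, by omega, rfl, by omega⟩
  induction e generalizing k with
  | zero => exact main m (RC_last n m hm hmn) (by omega) (by omega) (by omega)
  | succ e ih =>
    refine main _ (ih (k + 1) (by omega) (by omega) ?_) (by omega) (by omega) (by omega)
    intro a ha h1 h2 h3
    have hb := wrow_bd n (k + 1) (by omega)
    refine RC_of n m (by omega) (k + 1) _ (by omega) (by omega)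
      ((RC_to ha (k + 1)).tail
        (move_left n m _ _ a hb.1 hb.2 (by omega) (by omega) (by omega) ?_ (Or.inr ?_)))
    · intro c hc hc'
      rw [wall_h]
      rintro ⟨l, hl1, hl2, hl3, hl4⟩
      obtain rfl : l = k + 1 + 1 := by omega
      exact wrow_ne n (k + 1) (by omega) hl3.symm
    · rw [wall_h]
      exact ⟨k + 1, by omega, by omega, rfl, by omega⟩

theorem RC_all (n m : ℕ) (hmn : m ≤ n) (j : ℤ) (h1 : 1 ≤ j) (h2 : j ≤ m) : RC n m j := by
  by_cases hj : j = m
  · subst hj; exact RC_last n m (by omega) hmn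
  by_cases hj1 : j = 1
  · subst hj1; exact RC_one n m (by omega) hmn
  obtain ⟨a, rfl | rfl⟩ : ∃ a : ℕ, j = 2 * ((a + 1 : ℕ) : ℤ) ∨ j = 2 * ((a + 1 : ℕ) : ℤ) + 1 :=
    ⟨(j / 2).toNat - 1, by omega⟩
  · exact RC_even n m (by omega) hmn a (by omega)
  · exact RC_odd n m (by omega) hmn ((m - 1) / 2 - (a + 1)) (a + 1) (by omega) (by omega)

theorem optW_solves (n m : ℕ) (hmn : m ≤ n) : SolvesPassW n m (optW n m) := by
  constructor
  · rintro ⟨⟨a, b⟩, ⟨c, d⟩⟩ hw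
    rw [mem_optW] at hw
    obtain ⟨k, h1, h2, h3, h4, rfl, rfl⟩ := hw
    have := wrow_bd n k (by omega)
    refine ⟨?_, ?_, Or.inl ?_⟩
    · simp only [inGrid]; omega
    · simp only [inGrid]; omega
    · simp
  · rintro ⟨i, j⟩ ⟨h1, h2, h3, h4⟩
    simp only at h1 h2 h3 h4
    refine ⟨(1, j), (RC_all n m hmn j h3 h4).1, (1, 0), by simp [dirs4], n - 1, (i - 1).toNat,
      slide_vert n m j h3 h4 (by omega), by omega, ?_⟩
    ext <;> simp; omega

theorem optPW_eq (n m : ℕ) (hmn : m ≤ n) : optPW n m = (m - 2 + 1) / 2 := by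
  apply le_antisymm
  · have : optPW n m ≤ (m - 1) / 2 := Nat.sInf_le ⟨optW n m, optW_solves n m hmn, optW_card n m⟩
    omega
  · refine le_csInf ⟨_, optW n m, optW_solves n m hmn, rfl⟩ ?_
    rintro k ⟨W, hW, rfl⟩
    exact lower_bound n m hmn W hW

theorem edgeCover_path (k : ℕ) (hk : 2 ≤ k) :
    edgeCoverNumber (SimpleGraph.pathGraph k) = (k + 1) / 2 := by
  classical
  have hcov : ∃ S : Finset (Sym2 (Fin k)), IsEdgeCover (SimpleGraph.pathGraph k) S ∧
      S.card ≤ (k + 1) / 2 := by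
    refine ⟨(Finset.range ((k + 1) / 2)).image (fun i =>
      s((⟨min (2 * i) (k - 2), by omega⟩ : Fin k), ⟨min (2 * i) (k - 2) + 1, by omega⟩)),
      ⟨?_, ?_⟩, ?_⟩
    · intro e he
      rw [Finset.mem_image] at he
      obtain ⟨i, _, rfl⟩ := he
      rw [SimpleGraph.mem_edgeSet, SimpleGraph.pathGraph_adj]
      left; rfl
    · rintro ⟨v, hv⟩
      refine ⟨_, Finset.mem_image_of_mem _ (Finset.mem_range.2 (show v / 2 < _ by omega)), ?_⟩
      simp only [Sym2.mem_iff, Fin.mk.injEq]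
      omega
    · exact Finset.card_image_le.trans (by simp)
  obtain ⟨S, hS, hc⟩ := hcov
  apply le_antisymm
  · have : edgeCoverNumber (SimpleGraph.pathGraph k) ≤ S.card := Nat.sInf_le ⟨S, hS, rfl⟩
    exact this.trans hc
  · refine le_csInf ⟨_, S, hS, rfl⟩ ?_
    rintro l ⟨T, hT, rfl⟩
    have h1 : (Finset.univ : Finset (Fin k)) ⊆ T.biUnion (fun e => e.toFinset) := by
      intro v _
      obtain ⟨e, he, hv⟩ := hT.2 v
      exact Finset.mem_biUnion.2 ⟨e, he, by simpa using hv⟩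
    have h2 := (Finset.card_le_card h1).trans (Finset.card_biUnion_le_card_mul T _ 2 (by
      intro e _
      rw [Sym2.card_toFinset]; split_ifs <;> omega))
    rw [Finset.card_univ, Fintype.card_fin] at h2
    omega

/-- For all `n ≥ m`: if `m ≥ 4` the wall-pass game on `G_{n,m}` needs exactly
`ρ(P_{m-2}) = ⌈(m-2)/2⌉` walls; if `m = 3` it needs exactly one wall; and if
`m ≤ 2` it needs no wall. -/
theorem stmt16 (n m : ℕ) (hmn : m ≤ n) :
    (4 ≤ m → optPW n m = edgeCoverNumber (SimpleGraph.pathGraph (m - 2)) ∧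
      edgeCoverNumber (SimpleGraph.pathGraph (m - 2)) = (m - 2 + 1) / 2) ∧
    (m = 3 → optPW n 3 = 1) ∧
    (m ≤ 2 → optPW n m = 0) := by
  refine ⟨fun h => ⟨?_, edgeCover_path _ (by omega)⟩, ?_, ?_⟩
  · rw [edgeCover_path _ (by omega), optPW_eq n m hmn]
  · rintro rfl
    rw [optPW_eq n 3 hmn]
  · intro h
    rw [optPW_eq n m hmn]
    omega
end

section
/- For all n ≥ m ≥ 3, the minimum number of walls in a solution of the wall-stop sliding game on the rectangular grid satisfies ρ(G_{n−2,m−2}) ≤ opt^S_W(G_{n,m}) ≤ ρ(G_{n−2,m−2}) + (3/4)(m+n) + 3, where ρ(G_{n−2,m−2}) is the edge covering number of the (n−2)×(m−2) grid graph. -/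
/-- `W` solves the wall-stop game on `G_{n,m}`: starting from `(1,1)`, the robot can
stop on every square of the grid (the starting square counts as reachable). -/
def SolvesStopW (n m : ℕ) (W : Finset (Sq × Sq)) : Prop :=
  WallsOK n m W ∧ ∀ s : Sq, inGrid n m s → ReachesW n m W (1, 1) s

/-- `opt^S_W(G_{n,m})`: the minimum number of walls solving the wall-stop game. -/
noncomputable def optSW (n m : ℕ) : ℕ :=
  sInf {k | ∃ W : Finset (Sq × Sq), SolvesStopW n m W ∧ W.card = k}

namespace Herring

/-- Vertical wall to the right of `(i,j)`. -/
def Vp (n m i j : ℤ) : Prop :=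
  1 ≤ j ∧ j < m ∧ ((i = 1 ∧ (i + j) % 4 = 3) ∨
    (i = n ∧ ((m = 4 ∧ n % 4 = 0 ∧ (i + j) % 4 = 2) ∨
      (¬ (m = 4 ∧ n % 4 = 0) ∧ (i + j) % 4 = 1))) ∨
    (1 < i ∧ i < n ∧ (i + j) % 4 = 2))

/-- Horizontal wall below `(i,j)`. -/
def Hp (n m i j : ℤ) : Prop :=
  1 ≤ i ∧ i < n ∧ ((j = 1 ∧ (i + j) % 4 = 1) ∨ (j = m ∧ (i + j) % 4 = 3) ∨
    (1 < j ∧ j < m ∧ (i + j) % 4 = 0))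

def sV1 (m : ℕ) : Finset ℕ := (Finset.range (m - 1)).filter fun j => (2 + j) % 4 = 3
def sVn (n m : ℕ) : Finset ℕ := (Finset.range (m - 1)).filter fun j =>
  (n + 1 + j) % 4 = if m = 4 ∧ n % 4 = 0 then 2 else 1
def sVi (n m : ℕ) : Finset (ℕ × ℕ) :=
  (Finset.range (n - 2) ×ˢ Finset.range (m - 1)).filter fun p => (3 + p.1 + p.2) % 4 = 2
def sH1 (n : ℕ) : Finset ℕ := (Finset.range (n - 1)).filter fun i => (2 + i) % 4 = 1
def sHm (n m : ℕ) : Finset ℕ := (Finset.range (n - 1)).filter fun i => (m + 1 + i) % 4 = 3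
def sHi (n m : ℕ) : Finset (ℕ × ℕ) :=
  (Finset.range (n - 1) ×ˢ Finset.range (m - 2)).filter fun p => (3 + p.1 + p.2) % 4 = 0

def vw (i j : ℤ) : Sq × Sq := ((i, j), (i, j + 1))
def hw (i j : ℤ) : Sq × Sq := ((i, j), (i + 1, j))

def W (n m : ℕ) : Finset (Sq × Sq) :=
  (sV1 m).image (fun (j : ℕ) => vw 1 ((j : ℤ) + 1)) ∪
  ((sVn n m).image (fun (j : ℕ) => vw n ((j : ℤ) + 1)) ∪
  ((sVi n m).image (fun p => vw ((p.1 : ℤ) + 2) ((p.2 : ℤ) + 1)) ∪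
  ((sH1 n).image (fun (i : ℕ) => hw ((i : ℤ) + 1) 1) ∪
  ((sHm n m).image (fun (i : ℕ) => hw ((i : ℤ) + 1) m) ∪
  (sHi n m).image (fun p => hw ((p.1 : ℤ) + 1) ((p.2 : ℤ) + 2))))))

theorem card_W (n m : ℕ) : (W n m).card ≤ (sV1 m).card + ((sVn n m).card + ((sVi n m).card +
    ((sH1 n).card + ((sHm n m).card + (sHi n m).card)))) := by
  unfold W
  refine (Finset.card_union_le _ _).trans (Nat.add_le_add Finset.card_image_le ?_)
  refine (Finset.card_union_le _ _).trans (Nat.add_le_add Finset.card_image_le ?_)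
  refine (Finset.card_union_le _ _).trans (Nat.add_le_add Finset.card_image_le ?_)
  refine (Finset.card_union_le _ _).trans (Nat.add_le_add Finset.card_image_le ?_)
  exact (Finset.card_union_le _ _).trans (Nat.add_le_add Finset.card_image_le Finset.card_image_le)

/-- number of `j < b` with `j ≡ e`, as a function of `e`. -/
def g (b x : ℕ) : ℕ := (b + 3 - x % 4) / 4

theorem cnt0 (b e : ℕ) (he : e < 4) :
    ((Finset.range b).filter fun j => j % 4 = e).card = (b + 3 - e) / 4 := by
  induction b with
  | zero => simp; omega
  | succ b ih =>
    rw [Finset.range_add_one, Finset.filter_insert]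
    split_ifs with h
    · rw [Finset.card_insert_of_notMem (by simp), ih]; omega
    · rw [ih]; omega

theorem cnt1 (b s r : ℕ) (hr : r < 4) :
    ((Finset.range b).filter fun j => (s + j) % 4 = r).card = g b (r + 3 * s) := by
  unfold g
  rw [← cnt0 b _ (Nat.mod_lt _ (by norm_num))]
  congr 1
  apply Finset.filter_congr
  intro j _
  omega

theorem cnt1_le (b s r : ℕ) (hr : r < 4) :
    4 * ((Finset.range b).filter fun j => (s + j) % 4 = r).card ≤ b + 3 := by
  rw [cnt1 b s r hr]; unfold g; omega

theorem cnt2_sum (a b s r : ℕ) (hr : r < 4) :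
    ((Finset.range a ×ˢ Finset.range b).filter fun p => (s + p.1 + p.2) % 4 = r).card
      = ∑ i ∈ Finset.range a, g b (r + 3 * s + 3 * i) := by
  rw [Finset.card_filter, Finset.sum_product]
  refine Finset.sum_congr rfl fun i _ => ?_
  rw [← Finset.card_filter]
  dsimp only
  rw [cnt1 _ _ _ hr]
  congr 1; ring

theorem g_four (b x : ℕ) : g b x + g b (x + 3) + g b (x + 6) + g b (x + 9) = b ∧
    4 * g b x ≤ b + 4 ∧ 4 * (g b x + g b (x + 3)) ≤ 2 * b + 4 ∧
    4 * (g b x + g b (x + 3) + g b (x + 6)) ≤ 3 * b + 4 := by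
  unfold g
  rcases (by omega : x % 4 = 0 ∨ x % 4 = 1 ∨ x % 4 = 2 ∨ x % 4 = 3) with h | h | h | h
  · rw [h, show (x + 3) % 4 = 3 by omega, show (x + 6) % 4 = 2 by omega,
      show (x + 9) % 4 = 1 by omega]; omega
  · rw [h, show (x + 3) % 4 = 0 by omega, show (x + 6) % 4 = 3 by omega,
      show (x + 9) % 4 = 2 by omega]; omega
  · rw [h, show (x + 3) % 4 = 1 by omega, show (x + 6) % 4 = 0 by omega,
      show (x + 9) % 4 = 3 by omega]; omega
  · rw [h, show (x + 3) % 4 = 2 by omega, show (x + 6) % 4 = 1 by omega,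
      show (x + 9) % 4 = 0 by omega]; omega

theorem g_sum (b x : ℕ) : ∀ a : ℕ, 4 * ∑ i ∈ Finset.range a, g b (x + 3 * i) ≤ a * b + 4
  | 0 => by simp
  | 1 => by
    have := g_four b x
    simp only [Finset.sum_range_succ, Finset.sum_range_zero]; simp; omega
  | 2 => by
    have := g_four b x
    simp only [Finset.sum_range_succ, Finset.sum_range_zero]; simp; omega
  | 3 => by
    have := g_four b x
    simp only [Finset.sum_range_succ, Finset.sum_range_zero]; simp; omega
  | a + 4 => by
    have ih := g_sum b x a
    have := (g_four b (x + 3 * a)).1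
    simp only [Finset.sum_range_succ]
    have e : (a + 4) * b = a * b + 4 * b := by ring
    rw [show x + 3 * (a + 1) = x + 3 * a + 3 by ring, show x + 3 * (a + 2) = x + 3 * a + 6 by ring,
      show x + 3 * (a + 3) = x + 3 * a + 9 by ring, e]
    omega

theorem cnt2_le (b s r : ℕ) (hr : r < 4) (a : ℕ) :
    4 * ((Finset.range a ×ˢ Finset.range b).filter fun p => (s + p.1 + p.2) % 4 = r).card
      ≤ a * b + 4 := by
  rw [cnt2_sum _ _ _ _ hr]; exact g_sum _ _ _

theorem card_W_le (n m : ℕ) (hm : 3 ≤ m) (hn : 3 ≤ n) :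
    4 * (W n m).card + n + m ≤ 2 * (n * m) + 20 := by
  have h0 := card_W n m
  have h1 : 4 * (sV1 m).card ≤ (m - 1) + 3 := cnt1_le _ _ _ (by norm_num)
  have h2 : 4 * (sVn n m).card ≤ (m - 1) + 3 := cnt1_le _ _ _ (by split_ifs <;> norm_num)
  have h3 : 4 * (sVi n m).card ≤ (n - 2) * (m - 1) + 4 := cnt2_le _ _ _ (by norm_num) _
  have h4 : 4 * (sH1 n).card ≤ (n - 1) + 3 := cnt1_le _ _ _ (by norm_num)
  have h5 : 4 * (sHm n m).card ≤ (n - 1) + 3 := cnt1_le _ _ _ (by norm_num)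
  have h6 : 4 * (sHi n m).card ≤ (n - 1) * (m - 2) + 4 := cnt2_le _ _ _ (by norm_num) _
  obtain ⟨a, rfl⟩ := Nat.exists_eq_add_of_le hn
  obtain ⟨b, rfl⟩ := Nat.exists_eq_add_of_le hm
  have e1 : 3 + a - 2 = a + 1 := by omega
  have e2 : 3 + a - 1 = a + 2 := by omega
  have e3 : 3 + b - 2 = b + 1 := by omega
  have e4 : 3 + b - 1 = b + 2 := by omega
  rw [e1, e4] at h3
  rw [e2, e3] at h6
  rw [e4] at h1 h2
  rw [e2] at h4 h5
  nlinarith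

theorem card_W33 : (W 3 3).card ≤ 7 := (card_W 3 3).trans (by decide)

theorem mem_W (n m : ℕ) (hm : 3 ≤ m) (hn : 3 ≤ n) (w : Sq × Sq) :
    w ∈ W n m ↔ (∃ i j : ℤ, Vp n m i j ∧ w = vw i j) ∨ (∃ i j : ℤ, Hp n m i j ∧ w = hw i j) := by
  unfold W
  simp only [Finset.mem_union, Finset.mem_image]
  constructor
  · rintro (⟨j, h, rfl⟩ | ⟨j, h, rfl⟩ | ⟨⟨i, j⟩, h, rfl⟩ | ⟨i, h, rfl⟩ | ⟨i, h, rfl⟩ | ⟨⟨i, j⟩, h, rfl⟩)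
    · left; refine ⟨_, _, ?_, rfl⟩
      simp only [sV1, Finset.mem_filter, Finset.mem_range] at h
      unfold Vp; omega
    · left; refine ⟨_, _, ?_, rfl⟩
      simp only [sVn, Finset.mem_filter, Finset.mem_range] at h
      unfold Vp; split_ifs at h <;> omega
    · left; refine ⟨_, _, ?_, rfl⟩
      simp only [sVi, Finset.mem_filter, Finset.mem_product, Finset.mem_range] at h
      unfold Vp; dsimp only; omega
    · right; refine ⟨_, _, ?_, rfl⟩
      simp only [sH1, Finset.mem_filter, Finset.mem_range] at h
      unfold Hp; omega
    · right; refine ⟨_, _, ?_, rfl⟩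
      simp only [sHm, Finset.mem_filter, Finset.mem_range] at h
      unfold Hp; omega
    · right; refine ⟨_, _, ?_, rfl⟩
      simp only [sHi, Finset.mem_filter, Finset.mem_product, Finset.mem_range] at h
      unfold Hp; dsimp only; omega
  · rintro (⟨i, j, ⟨h1, h2, h | h | h⟩, rfl⟩ | ⟨i, j, ⟨h1, h2, h | h | h⟩, rfl⟩)
    · left
      refine ⟨(j - 1).toNat, ?_, ?_⟩
      · simp only [sV1, Finset.mem_filter, Finset.mem_range]; omega
      · rw [h.1]; congr 1; omega
    · right; left
      refine ⟨(j - 1).toNat, ?_, ?_⟩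
      · simp only [sVn, Finset.mem_filter, Finset.mem_range]; split_ifs <;> omega
      · rw [h.1]; congr 1; omega
    · right; right; left
      refine ⟨((i - 2).toNat, (j - 1).toNat), ?_, ?_⟩
      · simp only [sVi, Finset.mem_filter, Finset.mem_product, Finset.mem_range]; omega
      · dsimp only; congr 1 <;> omega
    · right; right; right; left
      refine ⟨(i - 1).toNat, ?_, ?_⟩
      · simp only [sH1, Finset.mem_filter, Finset.mem_range]; omega
      · rw [h.1]; congr 1; omega
    · right; right; right; right; left
      refine ⟨(i - 1).toNat, ?_, ?_⟩
      · simp only [sHm, Finset.mem_filter, Finset.mem_range]; omega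
      · rw [h.1]; congr 1; omega
    · right; right; right; right; right
      refine ⟨((i - 1).toNat, (j - 2).toNat), ?_, ?_⟩
      · simp only [sHi, Finset.mem_filter, Finset.mem_product, Finset.mem_range]; omega
      · dsimp only; congr 1 <;> omega

theorem walls_ok (n m : ℕ) (hm : 3 ≤ m) (hn : 3 ≤ n) : WallsOK n m (W n m) := by
  intro w hw'
  rw [mem_W n m hm hn] at hw'
  rcases hw' with ⟨i, j, h, rfl⟩ | ⟨i, j, h, rfl⟩
  · unfold Vp at h
    refine ⟨?_, ?_, Or.inl ?_⟩
    · simp only [inGrid, vw]; omega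
    · simp only [inGrid, vw]; omega
    · simp [vw]
  · unfold Hp at h
    refine ⟨?_, ?_, Or.inr ?_⟩
    · simp only [inGrid, hw]; omega
    · simp only [inGrid, hw]; omega
    · simp [hw]

theorem wb_V (n m : ℕ) (hm : 3 ≤ m) (hn : 3 ≤ n) (i j j' : ℤ) (hj : j' = j + 1) :
    WallBetween (W n m) (i, j) (i, j') ↔ Vp n m i j := by
  subst hj
  unfold WallBetween
  rw [mem_W n m hm hn, mem_W n m hm hn]
  constructor
  · rintro ((⟨a, b, h, e⟩ | ⟨a, b, h, e⟩) | (⟨a, b, h, e⟩ | ⟨a, b, h, e⟩)) <;>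
      simp only [vw, hw, Prod.mk.injEq] at e
    · obtain ⟨⟨rfl, rfl⟩, _⟩ := e; exact h
    all_goals omega
  · intro h; exact Or.inl (Or.inl ⟨i, j, h, rfl⟩)

theorem wb_H (n m : ℕ) (hm : 3 ≤ m) (hn : 3 ≤ n) (i j i' : ℤ) (hi : i' = i + 1) :
    WallBetween (W n m) (i, j) (i', j) ↔ Hp n m i j := by
  subst hi
  unfold WallBetween
  rw [mem_W n m hm hn, mem_W n m hm hn]
  constructor
  · rintro ((⟨a, b, h, e⟩ | ⟨a, b, h, e⟩) | (⟨a, b, h, e⟩ | ⟨a, b, h, e⟩)) <;>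
      simp only [vw, hw, Prod.mk.injEq] at e
    · omega
    · obtain ⟨⟨rfl, rfl⟩, _⟩ := e; exact h
    all_goals omega
  · intro h; exact Or.inl (Or.inr ⟨i, j, h, rfl⟩)

theorem wb_comm (S : Finset (Sq × Sq)) (p q : Sq) : WallBetween S p q ↔ WallBetween S q p := by
  unfold WallBetween; exact or_comm

def Re (n m : ℕ) (i j : ℤ) : Prop := ReachesW n m (W n m) (1, 1) (i, j)

section moves
variable {n m : ℕ} {i j : ℤ}

theorem goR (k : ℕ) (h : Re n m i j) (h1 : 1 ≤ i ∧ i ≤ n ∧ 1 ≤ j ∧ j + k ≤ m)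
    (h2 : ∀ t : ℕ, t < k → ¬ Vp n m i (j + t)) (h3 : j + k = m ∨ Vp n m i (j + k))
    (hm : 3 ≤ m) (hn : 3 ≤ n) : Re n m i (j + k) := by
  refine Relation.ReflTransGen.tail h ⟨(0, 1), by simp [dirs4], k, ⟨?_, ?_, ?_⟩, ?_⟩
  · intro t ht; simp [inGrid]; omega
  · intro t ht
    have := h2 t ht
    rw [← wb_V n m hm hn i (j + t) (j + t + 1) rfl] at this
    simpa [add_assoc] using this
  · rcases h3 with h3 | h3
    · left; simp [inGrid]; omega
    · right
      rw [← wb_V n m hm hn i (j + k) (j + k + 1) rfl] at h3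
      simpa [add_assoc] using h3
  · simp

theorem goL (k : ℕ) (h : Re n m i j) (h1 : 1 ≤ i ∧ i ≤ n ∧ 1 ≤ j - k ∧ j ≤ m)
    (h2 : ∀ t : ℕ, t < k → ¬ Vp n m i (j - t - 1)) (h3 : j - k = 1 ∨ Vp n m i (j - k - 1))
    (hm : 3 ≤ m) (hn : 3 ≤ n) : Re n m i (j - k) := by
  refine Relation.ReflTransGen.tail h ⟨(0, -1), by simp [dirs4], k, ⟨?_, ?_, ?_⟩, ?_⟩
  · intro t ht; simp [inGrid]; omega
  · intro t ht
    have := h2 t ht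
    rw [← wb_V n m hm hn i (j - t - 1) (j - t) (by ring), wb_comm] at this
    convert this using 2 <;> simp <;> ring
  · rcases h3 with h3 | h3
    · left; simp [inGrid]; omega
    · right
      rw [← wb_V n m hm hn i (j - k - 1) (j - k) (by ring), wb_comm] at h3
      convert h3 using 1 <;> simp <;> ring
  · simp; ring

theorem goD (k : ℕ) (h : Re n m i j) (h1 : 1 ≤ j ∧ j ≤ m ∧ 1 ≤ i ∧ i + k ≤ n)
    (h2 : ∀ t : ℕ, t < k → ¬ Hp n m (i + t) j) (h3 : i + k = n ∨ Hp n m (i + k) j)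
    (hm : 3 ≤ m) (hn : 3 ≤ n) : Re n m (i + k) j := by
  refine Relation.ReflTransGen.tail h ⟨(1, 0), by simp [dirs4], k, ⟨?_, ?_, ?_⟩, ?_⟩
  · intro t ht; simp [inGrid]; omega
  · intro t ht
    have := h2 t ht
    rw [← wb_H n m hm hn (i + t) j (i + t + 1) rfl] at this
    simpa [add_assoc] using this
  · rcases h3 with h3 | h3
    · left; simp [inGrid]; omega
    · right
      rw [← wb_H n m hm hn (i + k) j (i + k + 1) rfl] at h3
      simpa [add_assoc] using h3
  · simp

theorem goU (k : ℕ) (h : Re n m i j) (h1 : 1 ≤ j ∧ j ≤ m ∧ 1 ≤ i - k ∧ i ≤ n)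
    (h2 : ∀ t : ℕ, t < k → ¬ Hp n m (i - t - 1) j) (h3 : i - k = 1 ∨ Hp n m (i - k - 1) j)
    (hm : 3 ≤ m) (hn : 3 ≤ n) : Re n m (i - k) j := by
  refine Relation.ReflTransGen.tail h ⟨(-1, 0), by simp [dirs4], k, ⟨?_, ?_, ?_⟩, ?_⟩
  · intro t ht; simp [inGrid]; omega
  · intro t ht
    have := h2 t ht
    rw [← wb_H n m hm hn (i - t - 1) j (i - t) (by ring), wb_comm] at this
    convert this using 2 <;> simp <;> ring
  · rcases h3 with h3 | h3
    · left; simp [inGrid]; omega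
    · right
      rw [← wb_H n m hm hn (i - k - 1) j (i - k) (by ring), wb_comm] at h3
      convert h3 using 1 <;> simp <;> ring
  · simp; ring

end moves

section steps
variable {n m : ℕ}

theorem R1 (hH : 3 ≤ m ∧ 3 ≤ n) {i j i' j' : ℤ} (h : Re n m i j)
    (e : i' = i ∧ j' = j + 1) (c : 1 ≤ i ∧ i ≤ n ∧ 1 ≤ j ∧ j + 1 ≤ m)
    (w : ¬ Vp n m i (j + 0)) (s : j + 1 = m ∨ Vp n m i (j + 1)) : Re n m i' j' := by
  obtain ⟨rfl, rfl⟩ := e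
  refine goR 1 h (by push_cast; exact c) ?_ (by push_cast; exact s) hH.1 hH.2
  intro t ht
  interval_cases t <;> push_cast <;> tauto

theorem R2 (hH : 3 ≤ m ∧ 3 ≤ n) {i j i' j' : ℤ} (h : Re n m i j)
    (e : i' = i ∧ j' = j + 2) (c : 1 ≤ i ∧ i ≤ n ∧ 1 ≤ j ∧ j + 2 ≤ m)
    (w : ¬ Vp n m i (j + 0) ∧ ¬ Vp n m i (j + 1)) (s : j + 2 = m ∨ Vp n m i (j + 2)) : Re n m i' j' := by
  obtain ⟨rfl, rfl⟩ := e
  refine goR 2 h (by push_cast; exact c) ?_ (by push_cast; exact s) hH.1 hH.2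
  intro t ht
  interval_cases t <;> push_cast <;> tauto

theorem R3 (hH : 3 ≤ m ∧ 3 ≤ n) {i j i' j' : ℤ} (h : Re n m i j)
    (e : i' = i ∧ j' = j + 3) (c : 1 ≤ i ∧ i ≤ n ∧ 1 ≤ j ∧ j + 3 ≤ m)
    (w : ¬ Vp n m i (j + 0) ∧ ¬ Vp n m i (j + 1) ∧ ¬ Vp n m i (j + 2)) (s : j + 3 = m ∨ Vp n m i (j + 3)) : Re n m i' j' := by
  obtain ⟨rfl, rfl⟩ := e
  refine goR 3 h (by push_cast; exact c) ?_ (by push_cast; exact s) hH.1 hH.2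
  intro t ht
  interval_cases t <;> push_cast <;> tauto

theorem D1 (hH : 3 ≤ m ∧ 3 ≤ n) {i j i' j' : ℤ} (h : Re n m i j)
    (e : i' = i + 1 ∧ j' = j) (c : 1 ≤ j ∧ j ≤ m ∧ 1 ≤ i ∧ i + 1 ≤ n)
    (w : ¬ Hp n m (i + 0) j) (s : i + 1 = n ∨ Hp n m (i + 1) j) : Re n m i' j' := by
  obtain ⟨rfl, rfl⟩ := e
  refine goD 1 h (by push_cast; exact c) ?_ (by push_cast; exact s) hH.1 hH.2
  intro t ht
  interval_cases t <;> push_cast <;> tauto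

theorem D2 (hH : 3 ≤ m ∧ 3 ≤ n) {i j i' j' : ℤ} (h : Re n m i j)
    (e : i' = i + 2 ∧ j' = j) (c : 1 ≤ j ∧ j ≤ m ∧ 1 ≤ i ∧ i + 2 ≤ n)
    (w : ¬ Hp n m (i + 0) j ∧ ¬ Hp n m (i + 1) j) (s : i + 2 = n ∨ Hp n m (i + 2) j) : Re n m i' j' := by
  obtain ⟨rfl, rfl⟩ := e
  refine goD 2 h (by push_cast; exact c) ?_ (by push_cast; exact s) hH.1 hH.2
  intro t ht
  interval_cases t <;> push_cast <;> tauto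

theorem D3 (hH : 3 ≤ m ∧ 3 ≤ n) {i j i' j' : ℤ} (h : Re n m i j)
    (e : i' = i + 3 ∧ j' = j) (c : 1 ≤ j ∧ j ≤ m ∧ 1 ≤ i ∧ i + 3 ≤ n)
    (w : ¬ Hp n m (i + 0) j ∧ ¬ Hp n m (i + 1) j ∧ ¬ Hp n m (i + 2) j) (s : i + 3 = n ∨ Hp n m (i + 3) j) : Re n m i' j' := by
  obtain ⟨rfl, rfl⟩ := e
  refine goD 3 h (by push_cast; exact c) ?_ (by push_cast; exact s) hH.1 hH.2
  intro t ht
  interval_cases t <;> push_cast <;> tauto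

theorem L1 (hH : 3 ≤ m ∧ 3 ≤ n) {i j i' j' : ℤ} (h : Re n m i j)
    (e : i' = i ∧ j' = j - 1) (c : 1 ≤ i ∧ i ≤ n ∧ 1 ≤ j - 1 ∧ j ≤ m)
    (w : ¬ Vp n m i (j - 0 - 1)) (s : j - 1 = 1 ∨ Vp n m i (j - 1 - 1)) : Re n m i' j' := by
  obtain ⟨rfl, rfl⟩ := e
  refine goL 1 h (by push_cast; exact c) ?_ (by push_cast; exact s) hH.1 hH.2
  intro t ht
  interval_cases t <;> push_cast <;> tauto

theorem L2 (hH : 3 ≤ m ∧ 3 ≤ n) {i j i' j' : ℤ} (h : Re n m i j)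
    (e : i' = i ∧ j' = j - 2) (c : 1 ≤ i ∧ i ≤ n ∧ 1 ≤ j - 2 ∧ j ≤ m)
    (w : ¬ Vp n m i (j - 0 - 1) ∧ ¬ Vp n m i (j - 1 - 1)) (s : j - 2 = 1 ∨ Vp n m i (j - 2 - 1)) : Re n m i' j' := by
  obtain ⟨rfl, rfl⟩ := e
  refine goL 2 h (by push_cast; exact c) ?_ (by push_cast; exact s) hH.1 hH.2
  intro t ht
  interval_cases t <;> push_cast <;> tauto

theorem U1 (hH : 3 ≤ m ∧ 3 ≤ n) {i j i' j' : ℤ} (h : Re n m i j)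
    (e : i' = i - 1 ∧ j' = j) (c : 1 ≤ j ∧ j ≤ m ∧ 1 ≤ i - 1 ∧ i ≤ n)
    (w : ¬ Hp n m (i - 0 - 1) j) (s : i - 1 = 1 ∨ Hp n m (i - 1 - 1) j) : Re n m i' j' := by
  obtain ⟨rfl, rfl⟩ := e
  refine goU 1 h (by push_cast; exact c) ?_ (by push_cast; exact s) hH.1 hH.2
  intro t ht
  interval_cases t <;> push_cast <;> tauto

theorem U2 (hH : 3 ≤ m ∧ 3 ≤ n) {i j i' j' : ℤ} (h : Re n m i j)
    (e : i' = i - 2 ∧ j' = j) (c : 1 ≤ j ∧ j ≤ m ∧ 1 ≤ i - 2 ∧ i ≤ n)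
    (w : ¬ Hp n m (i - 0 - 1) j ∧ ¬ Hp n m (i - 1 - 1) j) (s : i - 2 = 1 ∨ Hp n m (i - 2 - 1) j) : Re n m i' j' := by
  obtain ⟨rfl, rfl⟩ := e
  refine goU 2 h (by push_cast; exact c) ?_ (by push_cast; exact s) hH.1 hH.2
  intro t ht
  interval_cases t <;> push_cast <;> tauto

theorem step0 (hH : 3 ≤ m ∧ 3 ≤ n) (hmn : m ≤ n) (i j : ℤ) (hi : 1 ≤ i) (hi' : i ≤ n) (hj : 1 ≤ j)
    (hj' : j ≤ m) (h1 : ¬ (i = 1 ∧ j = 1)) (hs : (i + j) % 4 = 0)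
    (ih : ∀ a b : ℤ, 1 ≤ a → a ≤ n → 1 ≤ b → b ≤ m → a + b < i + j → Re n m a b) :
    Re n m i j := by
  by_cases c1 : j = m
  · by_cases c2 : i = 1
    · have p0 : Re n m (i + 1) (j - 2) := ih _ _ (by omega) (by omega) (by omega) (by omega) (by omega)
      have p1 : Re n m (i + 1) j := R2 hH p0 (by omega) (by omega) (by unfold Vp; omega) (by unfold Vp; omega)
      have p2 : Re n m i j := U1 hH p1 (by omega) (by omega) (by unfold Hp; omega) (by unfold Hp; omega)
      exact p2
    have p0 : Re n m i (j - 1) := ih _ _ (by omega) (by omega) (by omega) (by omega) (by omega)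
    have p1 : Re n m i j := R1 hH p0 (by omega) (by omega) (by unfold Vp; omega) (by unfold Vp; omega)
    exact p1
  by_cases c3 : i = 1
  · have p0 : Re n m (i + 1) (j - 2) := ih _ _ (by omega) (by omega) (by omega) (by omega) (by omega)
    have p1 : Re n m (i + 1) (j + 1) := R3 hH p0 (by omega) (by omega) (by unfold Vp; omega) (by unfold Vp; omega)
    have p2 : Re n m i (j + 1) := U1 hH p1 (by omega) (by omega) (by unfold Hp; omega) (by unfold Hp; omega)
    have p3 : Re n m i j := L1 hH p2 (by omega) (by omega) (by unfold Vp; omega) (by unfold Vp; omega)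
    exact p3
  by_cases c4 : j = 1
  · by_cases c5 : i = n
    · have p0 : Re n m (i - 1) j := ih _ _ (by omega) (by omega) (by omega) (by omega) (by omega)
      have p1 : Re n m i j := D1 hH p0 (by omega) (by omega) (by unfold Hp; omega) (by unfold Hp; omega)
      exact p1
    by_cases c6 : i = n - 1
    · by_cases c7 : m = 3
      · have p0 : Re n m (i - 1) j := ih _ _ (by omega) (by omega) (by omega) (by omega) (by omega)
        have p1 : Re n m (i - 1) (j + 2) := R2 hH p0 (by omega) (by omega) (by unfold Vp; omega) (by unfold Vp; omega)
        have p2 : Re n m (i + 1) (j + 2) := D2 hH p1 (by omega) (by omega) (by unfold Hp; omega) (by unfold Hp; omega)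
        have p3 : Re n m (i + 1) (j + 1) := L1 hH p2 (by omega) (by omega) (by unfold Vp; omega) (by unfold Vp; omega)
        have p4 : Re n m i (j + 1) := U1 hH p3 (by omega) (by omega) (by unfold Hp; omega) (by unfold Hp; omega)
        have p5 : Re n m i j := L1 hH p4 (by omega) (by omega) (by unfold Vp; omega) (by unfold Vp; omega)
        exact p5
      by_cases c8 : m = 4
      · have p0 : Re n m (i - 1) j := ih _ _ (by omega) (by omega) (by omega) (by omega) (by omega)
        have p1 : Re n m (i + 1) j := D2 hH p0 (by omega) (by omega) (by unfold Hp; omega) (by unfold Hp; omega)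
        have p2 : Re n m (i + 1) (j + 1) := R1 hH p1 (by omega) (by omega) (by unfold Vp; omega) (by unfold Vp; omega)
        have p3 : Re n m i (j + 1) := U1 hH p2 (by omega) (by omega) (by unfold Hp; omega) (by unfold Hp; omega)
        have p4 : Re n m i j := L1 hH p3 (by omega) (by omega) (by unfold Vp; omega) (by unfold Vp; omega)
        exact p4
      have p0 : Re n m (i - 1) j := ih _ _ (by omega) (by omega) (by omega) (by omega) (by omega)
      have p1 : Re n m (i - 1) (j + 3) := R3 hH p0 (by omega) (by omega) (by unfold Vp; omega) (by unfold Vp; omega)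
      have p2 : Re n m (i + 1) (j + 3) := D2 hH p1 (by omega) (by omega) (by unfold Hp; omega) (by unfold Hp; omega)
      have p3 : Re n m (i + 1) (j + 1) := L2 hH p2 (by omega) (by omega) (by unfold Vp; omega) (by unfold Vp; omega)
      have p4 : Re n m i (j + 1) := U1 hH p3 (by omega) (by omega) (by unfold Hp; omega) (by unfold Hp; omega)
      have p5 : Re n m i j := L1 hH p4 (by omega) (by omega) (by unfold Vp; omega) (by unfold Vp; omega)
      exact p5
    have p0 : Re n m (i - 1) j := ih _ _ (by omega) (by omega) (by omega) (by omega) (by omega)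
    have p1 : Re n m (i + 1) j := D2 hH p0 (by omega) (by omega) (by unfold Hp; omega) (by unfold Hp; omega)
    have p2 : Re n m (i + 1) (j + 1) := R1 hH p1 (by omega) (by omega) (by unfold Vp; omega) (by unfold Vp; omega)
    have p3 : Re n m i (j + 1) := U1 hH p2 (by omega) (by omega) (by unfold Hp; omega) (by unfold Hp; omega)
    have p4 : Re n m i j := L1 hH p3 (by omega) (by omega) (by unfold Vp; omega) (by unfold Vp; omega)
    exact p4
  have p0 : Re n m (i - 1) j := ih _ _ (by omega) (by omega) (by omega) (by omega) (by omega)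
  have p1 : Re n m i j := D1 hH p0 (by omega) (by omega) (by unfold Hp; omega) (by unfold Hp; omega)
  exact p1

theorem step1 (hH : 3 ≤ m ∧ 3 ≤ n) (hmn : m ≤ n) (i j : ℤ) (hi : 1 ≤ i) (hi' : i ≤ n) (hj : 1 ≤ j)
    (hj' : j ≤ m) (h1 : ¬ (i = 1 ∧ j = 1)) (hs : (i + j) % 4 = 1)
    (ih : ∀ a b : ℤ, 1 ≤ a → a ≤ n → 1 ≤ b → b ≤ m → a + b < i + j → Re n m a b) :
    Re n m i j := by
  by_cases c9 : j = 1
  · have p0 : Re n m (i - 1) j := ih _ _ (by omega) (by omega) (by omega) (by omega) (by omega)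
    have p1 : Re n m i j := D1 hH p0 (by omega) (by omega) (by unfold Hp; omega) (by unfold Hp; omega)
    exact p1
  by_cases c10 : j = m
  · have p0 : Re n m i (j - 1) := ih _ _ (by omega) (by omega) (by omega) (by omega) (by omega)
    have p1 : Re n m i j := R1 hH p0 (by omega) (by omega) (by unfold Vp; omega) (by unfold Vp; omega)
    exact p1
  by_cases c11 : i = n
  · have p0 : Re n m i (j - 1) := ih _ _ (by omega) (by omega) (by omega) (by omega) (by omega)
    have p1 : Re n m i j := R1 hH p0 (by omega) (by omega) (by unfold Vp; omega) (by unfold Vp; omega)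
    exact p1
  by_cases c12 : i = n - 1
  · by_cases c13 : m = 4 ∧ (n : ℤ) % 4 = 0
    · have p0 : Re n m (i - 1) (j - 1) := ih _ _ (by omega) (by omega) (by omega) (by omega) (by omega)
      have p1 : Re n m (i + 1) (j - 1) := D2 hH p0 (by omega) (by omega) (by unfold Hp; omega) (by unfold Hp; omega)
      have p2 : Re n m (i + 1) j := R1 hH p1 (by omega) (by omega) (by unfold Vp; omega) (by unfold Vp; omega)
      have p3 : Re n m i j := U1 hH p2 (by omega) (by omega) (by unfold Hp; omega) (by unfold Hp; omega)
      exact p3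
    have p0 : Re n m i (j - 1) := ih _ _ (by omega) (by omega) (by omega) (by omega) (by omega)
    have p1 : Re n m i (j + 1) := R2 hH p0 (by omega) (by omega) (by unfold Vp; omega) (by unfold Vp; omega)
    have p2 : Re n m (i + 1) (j + 1) := D1 hH p1 (by omega) (by omega) (by unfold Hp; omega) (by unfold Hp; omega)
    have p3 : Re n m (i + 1) j := L1 hH p2 (by omega) (by omega) (by unfold Vp; omega) (by unfold Vp; omega)
    have p4 : Re n m i j := U1 hH p3 (by omega) (by omega) (by unfold Hp; omega) (by unfold Hp; omega)
    exact p4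
  by_cases c14 : j = 2
  · have p0 : Re n m (i - 1) (j - 1) := ih _ _ (by omega) (by omega) (by omega) (by omega) (by omega)
    have p1 : Re n m (i + 1) (j - 1) := D2 hH p0 (by omega) (by omega) (by unfold Hp; omega) (by unfold Hp; omega)
    have p2 : Re n m (i + 1) j := R1 hH p1 (by omega) (by omega) (by unfold Vp; omega) (by unfold Vp; omega)
    have p3 : Re n m i j := U1 hH p2 (by omega) (by omega) (by unfold Hp; omega) (by unfold Hp; omega)
    exact p3
  have p0 : Re n m (i + 1) (j - 2) := ih _ _ (by omega) (by omega) (by omega) (by omega) (by omega)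
  have p1 : Re n m (i + 1) j := R2 hH p0 (by omega) (by omega) (by unfold Vp; omega) (by unfold Vp; omega)
  have p2 : Re n m i j := U1 hH p1 (by omega) (by omega) (by unfold Hp; omega) (by unfold Hp; omega)
  exact p2

theorem step2 (hH : 3 ≤ m ∧ 3 ≤ n) (hmn : m ≤ n) (i j : ℤ) (hi : 1 ≤ i) (hi' : i ≤ n) (hj : 1 ≤ j)
    (hj' : j ≤ m) (h1 : ¬ (i = 1 ∧ j = 1)) (hs : (i + j) % 4 = 2)
    (ih : ∀ a b : ℤ, 1 ≤ a → a ≤ n → 1 ≤ b → b ≤ m → a + b < i + j → Re n m a b) :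
    Re n m i j := by
  by_cases c15 : i = 1
  · by_cases c16 : j = m
    · have p0 : Re n m i (j - 1) := ih _ _ (by omega) (by omega) (by omega) (by omega) (by omega)
      have p1 : Re n m i j := R1 hH p0 (by omega) (by omega) (by unfold Vp; omega) (by unfold Vp; omega)
      exact p1
    by_cases c17 : j = m - 1
    · have p0 : Re n m i (j - 1) := ih _ _ (by omega) (by omega) (by omega) (by omega) (by omega)
      have p1 : Re n m (i + 3) (j - 1) := D3 hH p0 (by omega) (by omega) (by unfold Hp; omega) (by unfold Hp; omega)
      have p2 : Re n m (i + 3) (j + 1) := R2 hH p1 (by omega) (by omega) (by unfold Vp; omega) (by unfold Vp; omega)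
      have p3 : Re n m (i + 1) (j + 1) := U2 hH p2 (by omega) (by omega) (by unfold Hp; omega) (by unfold Hp; omega)
      have p4 : Re n m (i + 1) j := L1 hH p3 (by omega) (by omega) (by unfold Vp; omega) (by unfold Vp; omega)
      have p5 : Re n m i j := U1 hH p4 (by omega) (by omega) (by unfold Hp; omega) (by unfold Hp; omega)
      exact p5
    have p0 : Re n m i (j - 1) := ih _ _ (by omega) (by omega) (by omega) (by omega) (by omega)
    have p1 : Re n m i (j + 1) := R2 hH p0 (by omega) (by omega) (by unfold Vp; omega) (by unfold Vp; omega)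
    have p2 : Re n m (i + 1) (j + 1) := D1 hH p1 (by omega) (by omega) (by unfold Hp; omega) (by unfold Hp; omega)
    have p3 : Re n m (i + 1) j := L1 hH p2 (by omega) (by omega) (by unfold Vp; omega) (by unfold Vp; omega)
    have p4 : Re n m i j := U1 hH p3 (by omega) (by omega) (by unfold Hp; omega) (by unfold Hp; omega)
    exact p4
  by_cases c18 : i = n
  · by_cases c19 : j = 1
    · have p0 : Re n m (i - 2) (j + 1) := ih _ _ (by omega) (by omega) (by omega) (by omega) (by omega)
      have p1 : Re n m i (j + 1) := D2 hH p0 (by omega) (by omega) (by unfold Hp; omega) (by unfold Hp; omega)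
      have p2 : Re n m i j := L1 hH p1 (by omega) (by omega) (by unfold Vp; omega) (by unfold Vp; omega)
      exact p2
    have p0 : Re n m (i - 1) j := ih _ _ (by omega) (by omega) (by omega) (by omega) (by omega)
    have p1 : Re n m i j := D1 hH p0 (by omega) (by omega) (by unfold Hp; omega) (by unfold Hp; omega)
    exact p1
  by_cases c20 : j = 1
  · have p0 : Re n m (i - 2) (j + 1) := ih _ _ (by omega) (by omega) (by omega) (by omega) (by omega)
    have p1 : Re n m (i + 1) (j + 1) := D3 hH p0 (by omega) (by omega) (by unfold Hp; omega) (by unfold Hp; omega)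
    have p2 : Re n m (i + 1) j := L1 hH p1 (by omega) (by omega) (by unfold Vp; omega) (by unfold Vp; omega)
    have p3 : Re n m i j := U1 hH p2 (by omega) (by omega) (by unfold Hp; omega) (by unfold Hp; omega)
    exact p3
  have p0 : Re n m i (j - 1) := ih _ _ (by omega) (by omega) (by omega) (by omega) (by omega)
  have p1 : Re n m i j := R1 hH p0 (by omega) (by omega) (by unfold Vp; omega) (by unfold Vp; omega)
  exact p1

theorem step3 (hH : 3 ≤ m ∧ 3 ≤ n) (hmn : m ≤ n) (i j : ℤ) (hi : 1 ≤ i) (hi' : i ≤ n) (hj : 1 ≤ j)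
    (hj' : j ≤ m) (h1 : ¬ (i = 1 ∧ j = 1)) (hs : (i + j) % 4 = 3)
    (ih : ∀ a b : ℤ, 1 ≤ a → a ≤ n → 1 ≤ b → b ≤ m → a + b < i + j → Re n m a b) :
    Re n m i j := by
  by_cases c21 : i = 1
  · have p0 : Re n m i (j - 1) := ih _ _ (by omega) (by omega) (by omega) (by omega) (by omega)
    have p1 : Re n m i j := R1 hH p0 (by omega) (by omega) (by unfold Vp; omega) (by unfold Vp; omega)
    exact p1
  by_cases c22 : j = m
  · have p0 : Re n m (i - 1) j := ih _ _ (by omega) (by omega) (by omega) (by omega) (by omega)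
    have p1 : Re n m i j := D1 hH p0 (by omega) (by omega) (by unfold Hp; omega) (by unfold Hp; omega)
    exact p1
  by_cases c23 : i = n
  · have p0 : Re n m (i - 1) j := ih _ _ (by omega) (by omega) (by omega) (by omega) (by omega)
    have p1 : Re n m i j := D1 hH p0 (by omega) (by omega) (by unfold Hp; omega) (by unfold Hp; omega)
    exact p1
  by_cases c24 : j = m - 1
  · have p0 : Re n m (i - 1) j := ih _ _ (by omega) (by omega) (by omega) (by omega) (by omega)
    have p1 : Re n m (i + 1) j := D2 hH p0 (by omega) (by omega) (by unfold Hp; omega) (by unfold Hp; omega)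
    have p2 : Re n m (i + 1) (j + 1) := R1 hH p1 (by omega) (by omega) (by unfold Vp; omega) (by unfold Vp; omega)
    have p3 : Re n m i (j + 1) := U1 hH p2 (by omega) (by omega) (by unfold Hp; omega) (by unfold Hp; omega)
    have p4 : Re n m i j := L1 hH p3 (by omega) (by omega) (by unfold Vp; omega) (by unfold Vp; omega)
    exact p4
  by_cases c25 : i = 2
  · have p0 : Re n m (i - 1) j := ih _ _ (by omega) (by omega) (by omega) (by omega) (by omega)
    have p1 : Re n m (i - 1) (j + 1) := R1 hH p0 (by omega) (by omega) (by unfold Vp; omega) (by unfold Vp; omega)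
    have p2 : Re n m i (j + 1) := D1 hH p1 (by omega) (by omega) (by unfold Hp; omega) (by unfold Hp; omega)
    have p3 : Re n m i j := L1 hH p2 (by omega) (by omega) (by unfold Vp; omega) (by unfold Vp; omega)
    exact p3
  have p0 : Re n m (i - 2) (j + 1) := ih _ _ (by omega) (by omega) (by omega) (by omega) (by omega)
  have p1 : Re n m i (j + 1) := D2 hH p0 (by omega) (by omega) (by unfold Hp; omega) (by unfold Hp; omega)
  have p2 : Re n m i j := L1 hH p1 (by omega) (by omega) (by unfold Vp; omega) (by unfold Vp; omega)
  exact p2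

theorem all_reach (hH : 3 ≤ m ∧ 3 ≤ n) (hmn : m ≤ n) : ∀ (s : ℕ) (i j : ℤ), 1 ≤ i → i ≤ n → 1 ≤ j →
    j ≤ m → i + j < s → Re n m i j := by
  intro s
  induction s with
  | zero => intro i j _ _ _ _ _; omega
  | succ s ih =>
    intro i j hi hi' hj hj' hs
    by_cases h1 : i = 1 ∧ j = 1
    · rw [h1.1, h1.2]; exact Relation.ReflTransGen.refl
    have ih' : ∀ a b : ℤ, 1 ≤ a → a ≤ n → 1 ≤ b → b ≤ m → a + b < i + j → Re n m a b :=
      fun a b ha ha' hb hb' hab => ih a b ha ha' hb hb' (by push_cast at hs; omega)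
    rcases (by omega : (i + j) % 4 = 0 ∨ (i + j) % 4 = 1 ∨ (i + j) % 4 = 2 ∨ (i + j) % 4 = 3)
      with h | h | h | h
    · exact step0 hH hmn i j hi hi' hj hj' h1 h ih'
    · exact step1 hH hmn i j hi hi' hj hj' h1 h ih'
    · exact step2 hH hmn i j hi hi' hj hj' h1 h ih'
    · exact step3 hH hmn i j hi hi' hj hj' h1 h ih'

end steps

theorem solves (n m : ℕ) (hm : 3 ≤ m) (hmn : m ≤ n) : SolvesStopW n m (W n m) := by
  refine ⟨walls_ok n m hm (hm.trans hmn), ?_⟩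
  rintro ⟨i, j⟩ ⟨h1, h2, h3, h4⟩
  exact all_reach ⟨hm, hm.trans hmn⟩ hmn ((i + j).toNat + 1) i j h1 h2 h3 h4
    (by push_cast; omega)

/-- The inner square corresponding to a vertex of the inner grid graph. -/
def emb {a b : ℕ} (v : Fin a × Fin b) : Sq := ((v.1 : ℤ) + 2, (v.2 : ℤ) + 2)

theorem emb_inj {a b : ℕ} {v v' : Fin a × Fin b} (h : emb v = emb v') : v = v' := by
  simp only [emb, Prod.mk.injEq] at h
  ext <;> omega

theorem wall_at_square (n m : ℕ) (S : Finset (Sq × Sq)) (hS : SolvesStopW n m S)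
    (v : Fin (n - 2) × Fin (m - 2)) : ∃ w ∈ S, emb v = w.1 ∨ emb v = w.2 := by
  have h1 := v.1.2
  have h2 := v.2.2
  have hr := hS.2 (emb v) (by simp only [inGrid, emb]; omega)
  rcases Relation.ReflTransGen.cases_tail hr with h | ⟨p, _, d, hd, k, ⟨_, _, h⟩, e⟩
  · simp only [emb, Prod.mk.injEq] at h; omega
  · have e2 : p + ((k : ℤ) + 1) • d = emb v + d := by rw [e]; module
    rw [e2, ← e] at h
    rcases h with h | h | h
    · exfalso; apply h
      simp only [dirs4, Set.mem_insert_iff, Set.mem_singleton_iff] at hd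
      rcases hd with rfl | rfl | rfl | rfl <;> simp only [inGrid, emb, Prod.mk_add_mk] <;> omega
    · exact ⟨_, h, Or.inl rfl⟩
    · exact ⟨_, h, Or.inr rfl⟩

theorem adj_of_wall (n m : ℕ) (w : Sq × Sq) (hw : IsWall n m w)
    (v v' : Fin (n - 2) × Fin (m - 2)) (h : emb v = w.1) (h' : emb v' = w.2) :
    (gridGraph (n - 2) (m - 2)).Adj v v' := by
  have hd := hw.2.2
  rw [← h, ← h'] at hd
  obtain ⟨x, y⟩ := v
  obtain ⟨x', y'⟩ := v'
  simp only [emb, Prod.mk_add_mk, Prod.mk.injEq] at hd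
  simp only [gridGraph, SimpleGraph.fromRel_adj, ne_eq, Prod.mk.injEq, Fin.ext_iff]
  omega

theorem cover_of_solution (n m : ℕ) (S : Finset (Sq × Sq)) (hS : SolvesStopW n m S) :
    edgeCoverNumber (gridGraph (n - 2) (m - 2)) ≤ S.card := by
  classical
  unfold edgeCoverNumber
  rcases Set.eq_empty_or_nonempty {k | ∃ T : Finset (Sym2 (Fin (n - 2) × Fin (m - 2))),
    IsEdgeCover (gridGraph (n - 2) (m - 2)) T ∧ T.card = k} with h0 | ⟨_, T, hT, _⟩
  · rw [h0]; simp
  have key : ∀ w : Sq × Sq, ∃ g : Finset (Sym2 (Fin (n - 2) × Fin (m - 2))), w ∈ S →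
      g.card ≤ 1 ∧ (∀ e ∈ g, e ∈ (gridGraph (n - 2) (m - 2)).edgeSet) ∧
      ∀ v, (emb v = w.1 ∨ emb v = w.2) → ∃ e ∈ g, v ∈ e := by
    intro w
    by_cases hw : w ∈ S
    swap
    · exact ⟨∅, fun h => absurd h hw⟩
    by_cases a1 : ∃ v : Fin (n - 2) × Fin (m - 2), emb v = w.1
    · obtain ⟨v, hv⟩ := a1
      by_cases a2 : ∃ v : Fin (n - 2) × Fin (m - 2), emb v = w.2
      · obtain ⟨v', hv'⟩ := a2
        refine ⟨{s(v, v')}, fun _ => ⟨by simp, ?_, ?_⟩⟩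
        · intro e he
          rw [Finset.mem_singleton] at he
          rw [he, SimpleGraph.mem_edgeSet]
          exact adj_of_wall n m w (hS.1 w hw) v v' hv hv'
        · rintro u (hu | hu)
          · exact ⟨_, Finset.mem_singleton_self _, by rw [emb_inj (hu.trans hv.symm)]; simp⟩
          · exact ⟨_, Finset.mem_singleton_self _, by rw [emb_inj (hu.trans hv'.symm)]; simp⟩
      · obtain ⟨e, he, hve⟩ := hT.2 v
        refine ⟨{e}, fun _ => ⟨by simp, by simpa using hT.1 e he, ?_⟩⟩
        rintro u (hu | hu)
        · exact ⟨e, by simp, by rw [emb_inj (hu.trans hv.symm)]; exact hve⟩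
        · exact absurd ⟨u, hu⟩ a2
    · by_cases a2 : ∃ v : Fin (n - 2) × Fin (m - 2), emb v = w.2
      · obtain ⟨v, hv⟩ := a2
        obtain ⟨e, he, hve⟩ := hT.2 v
        refine ⟨{e}, fun _ => ⟨by simp, by simpa using hT.1 e he, ?_⟩⟩
        rintro u (hu | hu)
        · exact absurd ⟨u, hu⟩ a1
        · exact ⟨e, by simp, by rw [emb_inj (hu.trans hv.symm)]; exact hve⟩
      · refine ⟨∅, fun _ => ⟨by simp, by simp, ?_⟩⟩
        rintro u (hu | hu)
        · exact absurd ⟨u, hu⟩ a1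
        · exact absurd ⟨u, hu⟩ a2
  choose g hg using key
  have hc : IsEdgeCover (gridGraph (n - 2) (m - 2)) (S.biUnion g) := by
    refine ⟨?_, ?_⟩
    · intro e he
      obtain ⟨w, hw, he⟩ := Finset.mem_biUnion.1 he
      exact (hg w hw).2.1 e he
    · intro v
      obtain ⟨w, hw, hv⟩ := wall_at_square n m S hS v
      obtain ⟨e, he, hve⟩ := (hg w hw).2.2 v hv
      exact ⟨e, Finset.mem_biUnion.2 ⟨w, hw, he⟩, hve⟩
  have hle : sInf {k | ∃ T : Finset (Sym2 (Fin (n - 2) × Fin (m - 2))),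
      IsEdgeCover (gridGraph (n - 2) (m - 2)) T ∧ T.card = k} ≤ (S.biUnion g).card :=
    Nat.sInf_le ⟨S.biUnion g, hc, rfl⟩
  exact hle.trans
    (by simpa using Finset.card_biUnion_le_card_mul S g 1 (fun w hw => (hg w hw).1))

theorem cover_lower {a b : ℕ} (T : Finset (Sym2 (Fin a × Fin b)))
    (hT : IsEdgeCover (gridGraph a b) T) : a * b ≤ 2 * T.card := by
  classical
  have h : (Finset.univ : Finset (Fin a × Fin b)) ⊆ T.biUnion fun e => e.toFinset := by
    intro v _
    obtain ⟨e, he, hv⟩ := hT.2 v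
    exact Finset.mem_biUnion.2 ⟨e, he, by simpa using hv⟩
  have h2 := Finset.card_le_card h
  rw [Finset.card_univ, Fintype.card_prod, Fintype.card_fin, Fintype.card_fin] at h2
  refine h2.trans ((Finset.card_biUnion_le_card_mul T _ 2 ?_).trans (by rw [mul_comm]))
  intro e _
  rw [Sym2.card_toFinset]
  split_ifs <;> norm_num

theorem cover_exists {a b : ℕ} (ha : 2 ≤ a) :
    ∃ T : Finset (Sym2 (Fin a × Fin b)), IsEdgeCover (gridGraph a b) T := by
  classical
  have nb : ∀ v : Fin a × Fin b, ∃ u, (gridGraph a b).Adj v u := by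
    rintro ⟨x, y⟩
    have hx := x.2
    by_cases h : (x : ℕ) + 1 < a
    · refine ⟨(⟨(x : ℕ) + 1, h⟩, y), ?_⟩
      refine (SimpleGraph.fromRel_adj _ _ _).2 ⟨fun he => ?_, Or.inl (Or.inr ⟨rfl, rfl⟩)⟩
      have h2 : (x : ℕ) = (x : ℕ) + 1 := congrArg (fun p => (p.1 : ℕ)) he
      omega
    · refine ⟨(⟨(x : ℕ) - 1, by omega⟩, y), ?_⟩
      have h3 : (x : ℕ) - 1 + 1 = (x : ℕ) := by omega
      refine (SimpleGraph.fromRel_adj _ _ _).2 ⟨fun he => ?_, Or.inr (Or.inr ⟨rfl, h3⟩)⟩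
      have h2 : (x : ℕ) = (x : ℕ) - 1 := congrArg (fun p => (p.1 : ℕ)) he
      omega
  choose f hf using nb
  refine ⟨Finset.univ.image fun v => s(v, f v), ?_, ?_⟩
  · intro e he
    obtain ⟨v, _, rfl⟩ := Finset.mem_image.1 he
    exact hf v
  · intro v
    exact ⟨s(v, f v), Finset.mem_image.2 ⟨v, Finset.mem_univ _, rfl⟩, by simp⟩

end Herring

/-- For all `n ≥ m ≥ 3`, the wall-stop game on `G_{n,m}` needs at least
`ρ(G_{n-2,m-2})` walls and at most `ρ(G_{n-2,m-2}) + (3/4)(m+n) + 3` walls, where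
`ρ(G_{n-2,m-2})` is the edge covering number of the `(n-2) × (m-2)` grid graph. -/
theorem stmt17 (n m : ℕ) (hm : 3 ≤ m) (hmn : m ≤ n) :
    edgeCoverNumber (gridGraph (n - 2) (m - 2)) ≤ optSW n m ∧
    (optSW n m : ℚ) ≤
      (edgeCoverNumber (gridGraph (n - 2) (m - 2)) : ℚ) + (3 / 4) * ((m : ℚ) + n) + 3 := by
  have hopt : optSW n m ≤ (Herring.W n m).card :=
    Nat.sInf_le ⟨Herring.W n m, Herring.solves n m hm hmn, rfl⟩
  constructor
  · unfold optSW
    obtain ⟨S, hS, hc⟩ := Nat.sInf_mem (s := {k | ∃ W : Finset (Sq × Sq), SolvesStopW n m W ∧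
      W.card = k}) ⟨_, Herring.W n m, Herring.solves n m hm hmn, rfl⟩
    rw [← hc]
    exact Herring.cover_of_solution n m S hS
  · by_cases h3 : n = 3
    · have hm3 : m = 3 := by omega
      subst h3 hm3
      have h7 : (optSW 3 3 : ℚ) ≤ 7 := by exact_mod_cast hopt.trans Herring.card_W33
      have h0 : (0 : ℚ) ≤ (edgeCoverNumber (gridGraph (3 - 2) (3 - 2)) : ℚ) := Nat.cast_nonneg _
      push_cast
      linarith
    · obtain ⟨T0, hT0⟩ := Herring.cover_exists (a := n - 2) (b := m - 2) (by omega)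
      have hρ : (n - 2) * (m - 2) ≤ 2 * edgeCoverNumber (gridGraph (n - 2) (m - 2)) := by
        obtain ⟨T, hT, hc⟩ := Nat.sInf_mem (s := {k | ∃ S : Finset (Sym2 (Fin (n - 2) × Fin (m - 2))),
          IsEdgeCover (gridGraph (n - 2) (m - 2)) S ∧ S.card = k}) ⟨_, T0, hT0, rfl⟩
        unfold edgeCoverNumber
        rw [← hc]
        exact Herring.cover_lower T hT
      have hW := Herring.card_W_le n m hm (hm.trans hmn)
      generalize edgeCoverNumber (gridGraph (n - 2) (m - 2)) = r at hρ ⊢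
      have hρ' : ((n : ℚ) - 2) * ((m : ℚ) - 2) ≤ 2 * r := by
        have := (Nat.cast_le (α := ℚ)).2 hρ
        rw [Nat.cast_mul, Nat.cast_sub (by omega), Nat.cast_sub (by omega)] at this
        exact_mod_cast this
      have hW' : 4 * ((Herring.W n m).card : ℚ) + n + m ≤ 2 * (n * m) + 20 := by exact_mod_cast hW
      have ho : (optSW n m : ℚ) ≤ ((Herring.W n m).card : ℚ) := by exact_mod_cast hopt
      nlinarith
end
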